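/- There exist a real constant C > 0 and a positive integer t such that for every positive integer k of the form k = 2^t · k' with k' ∈ S_C, the integer 2^k is separable. -/

import Mathlib

/-!
The divisors of `2^k` are the powers of two, so it suffices to find `m` with exactly one divisor in each
dyadic interval `[2^i, 2^(i+1))`, `i < k`, and no further divisors, none of them a power of two except `1`
(`SepPow.Sep`, `Sep.interlocking`).  If `m` has this property for `K`, then `m p^(q-1)` has it for `K q`,
provided `p` is a prime so slightly above `2^K` that `(p / 2^K)^(q-1)` stays within the room which the
divisors of `m` leave below the right ends of their intervals (`Sep.extend`).  Starting from `k = 2^230`,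
where an explicit `m` built with Proth primes exists (`sep_base`), the prime factors `q` of `k'` are adjoined
in increasing order.  Membership `k' ∈ S_1` says that `q ≤ e^n`, where `n` is the part of `k'` already
treated (`cond_step`), so a prime `p` with `2^K < p ≤ 2^K (1 + 2^(-cK))`, for `K = 2^230 n` and a small
absolute constant `c`, is close enough (`sep_exists`).

The main work is the existence of this prime (`exists_prime_near`): a prime in an interval `(x, x + x^(1-c')]`.
It is obtained by an elementary argument in the style of Selberg, with `z = 2^(2^k)` and `x` of size between
`z^(2^200)` and `z^(2^201)`.

* The Brun–Hooley sieve gives the density of `z`-rough integers in arbitrary intervals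
  (`fundamental_lemma`).
* Let `Λ₂ = Λ log + Λ * Λ = μ * log²`.  Writing `Λ₂` on rough integers as a divisor sum with weights
  `μ(d) log²(Y/d)` and counting the cofactors by the sieve, its sum over `(Y, Y+H]` is proportional to `H` up to
  `O(H log z)`.  The classical formula (`selberg`) on `(Y, 2Y]` determines the factor, so that
  `∑ Λ₂ = 2 H log Y + O(H log z)` for all `Y/z² ≤ H ≤ Y` (`short_selberg`).
* Cut the half-line `(1, ∞)` into cells `(λ^i, λ^(i+1)]`, `λ = 1 + 1/z`.  Let `α i` be the normalised mass of `Λ(n)/n` over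
  rough `n` in cell `i`, `f j` its average over `2^32` consecutive cells, and `χ = 1 - f`.  The short formula
  yields `j χ j + ∑ α i χ (j - i) ≈ 0` and `|χ| ≤ 1 + ε`, while Mertens' estimate shows that `χ` has mean
  zero (`Grid.toConv`).
* If no prime lay in the window at `J`, then `χ J ≈ 1`.  The relation then forces equality almost everywhere
  in the triangle inequality: `χ (J - i) ≈ -1` on the primes, `≈ 1` on products of two primes, and, as primes
  and products of two primes together have positive density in each cell, `|χ| ≈ 1` and
  `χ (j - m) ≈ χ j χ (J - m)` on average (`Conv.E8`, `Conv.E7`).  Hence `χ (j - 2m) ≈ χ j χ (J - m)² ≈ χ j`,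
  which contradicts mean zero (`Conv.contradiction`).
-/

/-- `(m, n)` is an interlocking pair: both are positive, and between any two
consecutive divisors (the smaller one exceeding 1) of either number there is a
divisor of the other. -/
def Interlocking (m n : ℕ) : Prop :=
  0 < m ∧ 0 < n ∧
  (∀ d d' : ℕ, d ∣ n → d' ∣ n → 1 < d → d < d' →
    (∀ e : ℕ, e ∣ n → ¬(d < e ∧ e < d')) →
    ∃ e : ℕ, e ∣ m ∧ d < e ∧ e < d') ∧
  (∀ d d' : ℕ, d ∣ m → d' ∣ m → 1 < d → d < d' →
    (∀ e : ℕ, e ∣ m → ¬(d < e ∧ e < d')) →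
    ∃ e : ℕ, e ∣ n ∧ d < e ∧ e < d')

/-- A positive integer `n` is separable if some `m` interlocks with it. -/
def Separable (n : ℕ) : Prop := ∃ m : ℕ, Interlocking m n

/-- `SC C` is the set of positive integers `n` such that any two consecutive
divisors `d < d'` of `n` satisfy `d' ≤ exp (max C d)`. -/
def SC (C : ℝ) : Set ℕ :=
  {n : ℕ | 0 < n ∧ ∀ d d' : ℕ, d ∣ n → d' ∣ n → d < d' →
    (∀ e : ℕ, e ∣ n → ¬(d < e ∧ e < d')) →
    (d' : ℝ) ≤ Real.exp (max C (d : ℝ))}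

/-! ### Chebyshev and Mertens estimates -/

namespace SepPow
open Finset Real
open scoped ArithmeticFunction.vonMangoldt ArithmeticFunction.Moebius ArithmeticFunction.zeta

/-- Sums over the lattice points below the hyperbola `de = N`, grouped by the product. -/
lemma sum_hyp (g : ℕ → ℕ → ℝ) (N : ℕ) :
    ∑ d ∈ Ioc 0 N, ∑ e ∈ Ioc 0 (N / d), g d e
      = ∑ m ∈ Ioc 0 N, ∑ x ∈ m.divisorsAntidiagonal, g x.1 x.2 := by
  rw [Finset.sum_sigma', Finset.sum_sigma']
  refine Finset.sum_bij' (fun x _ => ⟨x.1 * x.2, (x.1, x.2)⟩) (fun y _ => ⟨y.2.1, y.2.2⟩)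
    ?_ ?_ ?_ ?_ ?_
  · rintro ⟨d, e⟩ h
    simp only [mem_sigma, mem_Ioc, Nat.mem_divisorsAntidiagonal] at h ⊢
    obtain ⟨⟨hd, hdN⟩, he, heN⟩ := h
    rw [Nat.le_div_iff_mul_le hd] at heN
    have : 0 < d * e := Nat.mul_pos hd he
    refine ⟨⟨this, by rwa [mul_comm]⟩, trivial, this.ne'⟩
  · rintro ⟨m, d, e⟩ h
    simp only [mem_sigma, mem_Ioc, Nat.mem_divisorsAntidiagonal] at h ⊢
    obtain ⟨⟨hm, hmN⟩, rfl, h0⟩ := h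
    have hd : 0 < d := Nat.pos_of_mul_pos_right hm
    have he : 0 < e := Nat.pos_of_mul_pos_left hm
    refine ⟨⟨hd, (Nat.le_mul_of_pos_right d he).trans hmN⟩, he, ?_⟩
    rw [Nat.le_div_iff_mul_le hd, mul_comm]
    exact hmN
  · rintro ⟨d, e⟩ h; rfl
  · rintro ⟨m, d, e⟩ h
    simp only [mem_sigma, mem_Ioc, Nat.mem_divisorsAntidiagonal] at h ⊢
    obtain ⟨⟨hm, hmN⟩, rfl, h0⟩ := h
    rfl
  · rintro ⟨d, e⟩ h; rfl

/-- The partial sum of the von Mangoldt function, at natural arguments. -/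
noncomputable def psi (N : ℕ) : ℝ := ∑ n ∈ Ioc 0 N, Λ n

lemma psi_eq (N : ℕ) : psi N = Chebyshev.psi N := by
  simp [psi, Chebyshev.psi]

lemma psi_nonneg (N : ℕ) : 0 ≤ psi N := sum_nonneg fun _ _ => ArithmeticFunction.vonMangoldt_nonneg

lemma psi_le (N : ℕ) : psi N ≤ 6 * N := by
  rw [psi_eq]
  refine (Chebyshev.psi_le_const_mul_self (Nat.cast_nonneg N)).trans ?_
  have : log 4 ≤ 2 := by
    rw [show (4:ℝ) = 2 ^ 2 by norm_num, log_pow]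
    have := Real.log_two_lt_d9
    push_cast; linarith
  have h0 : (0:ℝ) ≤ N := Nat.cast_nonneg N
  nlinarith

lemma log_factorial_eq (N : ℕ) : log (N.factorial) = ∑ n ∈ Ioc 0 N, log (n:ℝ) := by
  induction N with
  | zero => simp
  | succ n ih =>
    rw [Nat.factorial_succ, Nat.cast_mul, Real.log_mul (by positivity) (by positivity), ih,
      ← Finset.insert_Ioc_right_eq_Ioc_add_one (Nat.zero_le _), Finset.sum_insert (by simp)]

lemma log_factorial_psi (N : ℕ) :
    log (N.factorial) = ∑ d ∈ Ioc 0 N, psi (N / d) := by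
  rw [log_factorial_eq]
  simp only [psi]
  rw [sum_hyp (fun d e => Λ e)]
  refine sum_congr rfl fun m hm => ?_
  rw [← ArithmeticFunction.vonMangoldt_sum, Nat.sum_divisorsAntidiagonal' (fun d e => Λ e)]

lemma log_factorial_floor (N : ℕ) :
    log (N.factorial) = ∑ d ∈ Ioc 0 N, Λ d * ((N / d : ℕ) : ℝ) := by
  rw [log_factorial_eq]
  have : ∀ d, Λ d * ((N / d : ℕ) : ℝ) = ∑ e ∈ Ioc 0 (N/d), Λ d := by
    intro d; simp [mul_comm]
  simp only [this]
  rw [sum_hyp (fun d e => Λ d)]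
  refine sum_congr rfl fun m hm => ?_
  rw [← ArithmeticFunction.vonMangoldt_sum, Nat.sum_divisorsAntidiagonal (fun d e => Λ d)]

lemma log_factorial_lower (N : ℕ) (hN : 0 < N) : N * log N - N ≤ log (N.factorial) := by
  have h := Stirling.le_log_factorial_stirling hN.ne'
  have h1 : (1:ℝ) ≤ N := by exact_mod_cast hN
  have h2 : 0 ≤ log (N:ℝ) := log_nonneg h1
  have h3 : 0 ≤ log (2 * π) := log_nonneg (by nlinarith [Real.pi_gt_three])
  linarith

lemma log_factorial_upper (N : ℕ) (hN : 0 < N) :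
    log (N.factorial) ≤ N * log N - N + log N + 1 := by
  induction N, hN using Nat.le_induction with
  | base => simp
  | succ n hn ih =>
    rw [Nat.factorial_succ, Nat.cast_mul, Real.log_mul (by positivity) (by positivity)]
    have h1 : (1:ℝ) ≤ n := by exact_mod_cast hn
    have h2 : log ((n+1:ℕ):ℝ) - log n ≥ 1 / (n+1) := by
      have := Real.one_sub_inv_le_log_of_pos (x := ((n+1:ℕ):ℝ)/n) (by positivity)
      rw [log_div (by positivity) (by positivity)] at this
      refine le_trans (le_of_eq ?_) this
      push_cast; field_simp; ring
    have h3 : (n+1:ℝ) * (log ((n+1:ℕ):ℝ) - log n) ≥ 1 := by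
      have := mul_le_mul_of_nonneg_left h2 (by positivity : (0:ℝ) ≤ n+1)
      have e : (n+1:ℝ) * (1/(n+1)) = 1 := by field_simp
      linarith
    push_cast at *
    nlinarith

/-- Mertens' estimate for `∑ Λ(n)/n`. -/
lemma mertens (N : ℕ) (hN : 0 < N) : |∑ n ∈ Ioc 0 N, Λ n / n - log N| ≤ 6 := by
  have h1 := log_factorial_floor N
  have hN' : (0:ℝ) < N := by exact_mod_cast hN
  have hlo : ∑ d ∈ Ioc 0 N, Λ d * ((N / d : ℕ) : ℝ) ≤ N * ∑ n ∈ Ioc 0 N, Λ n / n := by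
    rw [mul_sum]
    refine sum_le_sum fun d hd => ?_
    have : ((N/d:ℕ):ℝ) ≤ N / d := Nat.cast_div_le
    calc _ ≤ Λ d * (N / d) := mul_le_mul_of_nonneg_left this ArithmeticFunction.vonMangoldt_nonneg
      _ = _ := by ring
  have hhi : N * ∑ n ∈ Ioc 0 N, Λ n / n ≤ ∑ d ∈ Ioc 0 N, Λ d * ((N / d : ℕ) : ℝ) + psi N := by
    rw [mul_sum, psi, ← sum_add_distrib]
    refine sum_le_sum fun d hd => ?_
    have : (N:ℝ) / d ≤ ((N/d:ℕ):ℝ) + 1 := by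
      have hd0 : (0:ℝ) < d := by exact_mod_cast (mem_Ioc.1 hd).1
      rw [div_le_iff₀ hd0]
      have := (Nat.lt_div_mul_add (a := N) (mem_Ioc.1 hd).1).le
      have h' : (N:ℝ) ≤ ((N/d:ℕ):ℝ) * d + d := by exact_mod_cast this
      linarith
    calc (N:ℝ) * (Λ d / d) = Λ d * (N / d) := by ring
      _ ≤ Λ d * (((N/d:ℕ):ℝ) + 1) := mul_le_mul_of_nonneg_left this ArithmeticFunction.vonMangoldt_nonneg
      _ = _ := by ring
  have h2 := log_factorial_lower N hN
  have h3 := log_factorial_upper N hN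
  have h4 := psi_le N
  have h5 : log (N:ℝ) ≤ N - 1 := Real.log_le_sub_one_of_pos hN'
  rw [abs_le]
  constructor <;> nlinarith

end SepPow

/-! ### Selberg's symmetry formula -/

namespace SepPow
open Finset Real
open scoped ArithmeticFunction.vonMangoldt ArithmeticFunction.Moebius ArithmeticFunction.zeta

/-- Selberg's function `Λ₂ = Λ·log + Λ*Λ`. -/
noncomputable def Lam2 (n : ℕ) : ℝ :=
  Λ n * log n + ∑ x ∈ n.divisorsAntidiagonal, Λ x.1 * Λ x.2

lemma vM_nonneg (n : ℕ) : 0 ≤ Λ n := ArithmeticFunction.vonMangoldt_nonneg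

lemma Lam2_nonneg (n : ℕ) : 0 ≤ Lam2 n := by
  unfold Lam2
  have : 0 ≤ log (n:ℝ) := log_natCast_nonneg n
  exact add_nonneg (mul_nonneg (vM_nonneg n) this)
    (sum_nonneg fun x _ => mul_nonneg (vM_nonneg _) (vM_nonneg _))

lemma harmonic_bounds (M : ℕ) (hM : 0 < M) :
    log M + eulerMascheroniConstant ≤ ∑ e ∈ Ioc 0 M, (1:ℝ) / e ∧
    ∑ e ∈ Ioc 0 M, (1:ℝ) / e ≤ log M + 1 / M + eulerMascheroniConstant := by
  have hH : ((harmonic M : ℚ) : ℝ) = ∑ e ∈ Ioc 0 M, (1:ℝ) / e := by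
    rw [harmonic_eq_sum_Icc]
    push_cast
    simp only [one_div]
    rfl
  have h1 := eulerMascheroniSeq_lt_eulerMascheroniConstant M
  have h2 := eulerMascheroniConstant_lt_eulerMascheroniSeq' M
  rw [eulerMascheroniSeq, hH] at h1
  rw [eulerMascheroniSeq', if_neg hM.ne', hH] at h2
  have hM' : (0:ℝ) < M := by exact_mod_cast hM
  have h3 : log ((M:ℝ)+1) ≤ log M + 1 / M := by
    have := Real.log_le_sub_one_of_pos (x := ((M:ℝ)+1)/M) (by positivity)
    rw [log_div (by positivity) (by positivity)] at this
    have e : ((M:ℝ)+1)/M - 1 = 1 / M := by field_simp; ring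
    linarith
  constructor <;> linarith

/-- With `F(t) = ψ(t) - t + γ + 1`, the sum `∑_{e ≤ N/d} F(N/(de))` is only logarithmically large: the
`ψ`-part is the logarithm of `⌊N/d⌋!`, and the constant `γ + 1` cancels the secondary terms of Stirling's
formula and of the harmonic sum. -/
lemma inner_bound (N d : ℕ) (hd : 0 < d) (hdN : d ≤ N) :
    |∑ e ∈ Ioc 0 (N / d), (psi (N / (d * e)) - (N:ℝ) / ((d * e : ℕ) : ℝ)
      + (1 + eulerMascheroniConstant))| ≤ log ((N:ℝ) / d) + 3 := by
  set γ := eulerMascheroniConstant with hγ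
  have hγ0 : 0 ≤ γ := by linarith [one_half_lt_eulerMascheroniConstant]
  have hγ1 : γ ≤ 1 := by linarith [eulerMascheroniConstant_lt_two_thirds]
  set M := N / d with hM
  have hM0 : 0 < M := Nat.div_pos hdN hd
  set x : ℝ := (N:ℝ) / d with hx
  have hd' : (0:ℝ) < d := by exact_mod_cast hd
  have hMx : (M:ℝ) ≤ x := Nat.cast_div_le
  have hM1 : (1:ℝ) ≤ M := by exact_mod_cast hM0
  have hxM : x ≤ M + 1 := by
    rw [hx, div_le_iff₀ hd']
    have := (Nat.lt_div_mul_add (a := N) hd).le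
    have h' : (N:ℝ) ≤ ((N/d:ℕ):ℝ) * d + d := by exact_mod_cast this
    rw [← hM] at h'
    linarith
  have hS : ∑ e ∈ Ioc 0 M, (psi (N / (d * e)) - (N:ℝ) / ((d * e : ℕ) : ℝ) + (1 + γ))
      = log (M.factorial) - x * ∑ e ∈ Ioc 0 M, (1:ℝ) / e + (1 + γ) * M := by
    rw [log_factorial_psi, sum_add_distrib, sum_sub_distrib, mul_sum]
    simp only [sum_const, Nat.card_Ioc, nsmul_eq_mul, Nat.sub_zero]
    rw [mul_comm (M:ℝ)]
    congr 2
    · refine sum_congr rfl fun e _ => ?_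
      rw [hM, Nat.div_div_eq_div_mul]
    · refine sum_congr rfl fun e _ => ?_
      rw [hx]; push_cast; rw [div_mul_div_comm, mul_one]
  rw [hS]
  obtain ⟨h1, h2⟩ := harmonic_bounds M hM0
  have h3 := log_factorial_lower M hM0
  have h4 := log_factorial_upper M hM0
  have hl : log (M:ℝ) ≤ log x := log_le_log (by linarith) hMx
  have hl0 : 0 ≤ log (M:ℝ) := log_nonneg hM1
  have hx0 : 0 ≤ x := by linarith
  have h5 := mul_le_mul_of_nonneg_left h1 hx0
  have h6 := mul_le_mul_of_nonneg_left h2 hx0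
  have h7 : x * (1 / M) ≤ 2 := by
    rw [mul_one_div, div_le_iff₀ (by linarith)]; linarith
  have h8 : (x - M) * log M ≤ log M := by nlinarith
  have h8' : 0 ≤ (x - M) * log M := mul_nonneg (by linarith) hl0
  have h9 : (x - M) * γ ≤ 1 := by nlinarith
  have h9' : 0 ≤ (x - M) * γ := mul_nonneg (by linarith) hγ0
  rw [abs_le]
  constructor <;> nlinarith

lemma sum_inv_sqrt (N : ℕ) : ∑ d ∈ Ioc 0 N, 1 / √(d:ℝ) ≤ 2 * √(N:ℝ) := by
  induction N with
  | zero => simp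
  | succ n ih =>
    rw [← Finset.insert_Ioc_right_eq_Ioc_add_one (Nat.zero_le _), Finset.sum_insert (by simp)]
    have h1 : 0 < √((n+1:ℕ):ℝ) := Real.sqrt_pos.2 (by positivity)
    have h2 : 0 ≤ √(n:ℝ) := Real.sqrt_nonneg _
    have h3 : √((n+1:ℕ):ℝ)^2 = n + 1 := by rw [Real.sq_sqrt (by positivity)]; push_cast; ring
    have h4 : √(n:ℝ)^2 = n := Real.sq_sqrt (by positivity)
    have : 1 / √((n+1:ℕ):ℝ) ≤ 2 * √((n+1:ℕ):ℝ) - 2 * √(n:ℝ) := by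
      rw [div_le_iff₀ h1]
      nlinarith [sq_nonneg (√((n+1:ℕ):ℝ) - √(n:ℝ))]
    linarith

lemma log_mul_le_sqrt (t : ℝ) (ht : 1 ≤ t) : log t * (log t + 3) ≤ 16 * √t := by
  have h1 : log t ≤ 4 * (√(√t) - 1) := by
    have h := Real.log_le_sub_one_of_pos (x := √(√t)) (by positivity)
    rw [Real.log_sqrt (by positivity), Real.log_sqrt (by positivity)] at h
    linarith
  have h2 : √(√t) ^ 2 = √t := Real.sq_sqrt (by positivity)
  have h3 : 0 ≤ log t := log_nonneg ht
  have h4 : 1 ≤ √(√t) := by simp [ht]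
  nlinarith

lemma sum_log_err (N : ℕ) :
    ∑ d ∈ Ioc 0 N, log ((N:ℝ)/d) * (log ((N:ℝ)/d) + 3) ≤ 32 * N := by
  calc _ ≤ ∑ d ∈ Ioc 0 N, 16 * √(N:ℝ) * (1 / √(d:ℝ)) := by
        refine sum_le_sum fun d hd => ?_
        rw [mem_Ioc] at hd
        have hd' : (0:ℝ) < d := by exact_mod_cast hd.1
        refine (log_mul_le_sqrt _ ?_).trans (le_of_eq ?_)
        · rw [le_div_iff₀ hd']; simpa using hd.2
        · rw [Real.sqrt_div (by positivity)]; ring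
    _ ≤ 16 * √(N:ℝ) * (2 * √(N:ℝ)) := by
        rw [← mul_sum]
        exact mul_le_mul_of_nonneg_left (sum_inv_sqrt N) (by positivity)
    _ = 32 * N := by
        have := Real.mul_self_sqrt (Nat.cast_nonneg (α := ℝ) N)
        linear_combination 32 * this

lemma sum_moebius_eq (m : ℕ) :
    ∑ d ∈ m.divisors, (μ d : ℝ) = if m = 1 then 1 else 0 := by
  have h := ArithmeticFunction.coe_zeta_mul_moebius
  have := congrArg (fun f : ArithmeticFunction ℤ => f m) h
  simp only [ArithmeticFunction.coe_zeta_mul_apply, ArithmeticFunction.one_apply] at this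
  exact_mod_cast this

lemma abs_moebius_le (d : ℕ) : |(μ d : ℝ)| ≤ 1 := by
  exact_mod_cast ArithmeticFunction.abs_moebius_le_one

/-- The Tatuzawa–Iseki identity. -/
lemma tatuzawa_iseki (N : ℕ) (hN : 0 < N) (F : ℕ → ℝ) :
    ∑ d ∈ Ioc 0 N, (μ d : ℝ) * log ((N:ℝ)/d) * ∑ e ∈ Ioc 0 (N / d), F (d * e)
      = F 1 * log N + ∑ m ∈ Ioc 0 N, Λ m * F m := by
  have h1 : ∀ d ∈ Ioc 0 N, (μ d : ℝ) * log ((N:ℝ)/d) * ∑ e ∈ Ioc 0 (N / d), F (d * e)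
      = ∑ e ∈ Ioc 0 (N / d), (μ d : ℝ) * (log N - log d) * F (d * e) := by
    intro d hd
    rw [mem_Ioc] at hd
    have hd' : (0:ℝ) < d := by exact_mod_cast hd.1
    have hN' : (0:ℝ) < N := by exact_mod_cast hN
    rw [mul_sum, log_div hN'.ne' hd'.ne']
  rw [sum_congr rfl h1, sum_hyp (fun d e => (μ d : ℝ) * (log N - log d) * F (d * e))]
  have h2 : ∀ m ∈ Ioc 0 N, ∑ x ∈ m.divisorsAntidiagonal, (μ x.1 : ℝ) * (log N - log x.1) * F (x.1 * x.2)
      = (if m = 1 then F 1 * log N else 0) + Λ m * F m := by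
    intro m hm
    rw [mem_Ioc] at hm
    have : ∀ x ∈ m.divisorsAntidiagonal, (μ x.1 : ℝ) * (log N - log x.1) * F (x.1 * x.2)
       = (μ x.1 : ℝ) * (log N - log x.1) * F m := by
      intro x hx
      rw [(Nat.mem_divisorsAntidiagonal.1 hx).1]
    rw [sum_congr rfl this, Nat.sum_divisorsAntidiagonal (fun d e => (μ d : ℝ) * (log N - log d) * F m),
      ← sum_mul]
    have h3 : ∑ d ∈ m.divisors, (μ d : ℝ) * (log N - log d) =
        (∑ d ∈ m.divisors, (μ d : ℝ)) * log N - ∑ d ∈ m.divisors, (μ d : ℝ) * log d := by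
      rw [sum_mul, ← sum_sub_distrib]
      exact sum_congr rfl fun _ _ => by ring
    have h4 : ∑ d ∈ m.divisors, (μ d : ℝ) * log d = - Λ m :=
      ArithmeticFunction.sum_moebius_mul_log_eq
    rw [h3, sum_moebius_eq m, h4]
    split_ifs with h
    · subst h; simp; ring
    · ring
  rw [sum_congr rfl h2, sum_add_distrib, sum_ite_eq']
  simp [hN, Nat.succ_le_iff]

lemma sum_vM_log_le (N : ℕ) (hN : 0 < N) :
    psi N * log N - ∑ n ∈ Ioc 0 N, Λ n * log n ≤ 6 * N := by
  induction N, hN using Nat.le_induction with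
  | base => simp [psi]
  | succ n hn ih =>
    unfold psi at *
    rw [← Finset.insert_Ioc_right_eq_Ioc_add_one (Nat.zero_le _), Finset.sum_insert (by simp),
      Finset.sum_insert (by simp)]
    have hp := psi_le n
    have hp0 := psi_nonneg n
    unfold psi at hp hp0
    have hn' : (0:ℝ) < n := by exact_mod_cast hn
    have h3 : log ((n+1:ℕ):ℝ) ≤ log n + 1 / n := by
      have := Real.log_le_sub_one_of_pos (x := ((n:ℝ)+1)/n) (by positivity)
      rw [log_div (by positivity) (by positivity)] at this
      have e : ((n:ℝ)+1)/n - 1 = 1 / n := by field_simp; ring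
      push_cast
      linarith
    have h4 : (∑ x ∈ Ioc 0 n, Λ x) * log ((n+1:ℕ):ℝ) ≤ (∑ x ∈ Ioc 0 n, Λ x) * log n + 6 := by
      calc _ ≤ (∑ x ∈ Ioc 0 n, Λ x) * (log n + 1 / n) := mul_le_mul_of_nonneg_left h3 hp0
        _ = (∑ x ∈ Ioc 0 n, Λ x) * log n + (∑ x ∈ Ioc 0 n, Λ x) / n := by ring
        _ ≤ _ := by
          have : (∑ x ∈ Ioc 0 n, Λ x) / n ≤ 6 := by rw [div_le_iff₀ hn']; exact hp
          linarith
    push_cast at *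
    nlinarith

lemma sum_vM_log_ge (N : ℕ) :
    0 ≤ psi N * log N - ∑ n ∈ Ioc 0 N, Λ n * log n := by
  unfold psi
  rw [sum_mul, ← sum_sub_distrib]
  refine sum_nonneg fun n hn => ?_
  rw [mem_Ioc] at hn
  have : log (n:ℝ) ≤ log N := log_le_log (by exact_mod_cast hn.1) (by exact_mod_cast hn.2)
  have := mul_le_mul_of_nonneg_left this (vM_nonneg n)
  linarith

lemma sum_moebius_log_sq (n : ℕ) (hn : 0 < n) :
    ∑ d ∈ n.divisors, (μ d : ℝ) * log d ^ 2 = Lam2 n - 2 * log n * Λ n := by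
  let f : ArithmeticFunction ℝ := ArithmeticFunction.pmul (μ : ArithmeticFunction ℝ) ArithmeticFunction.log
  have hf : ∀ d, f d = (μ d : ℝ) * log d := fun d => by
    simp [f, ArithmeticFunction.pmul_apply]
  have h1 : f * (ζ : ArithmeticFunction ℝ) = - Λ := by
    ext m
    rw [ArithmeticFunction.coe_mul_zeta_apply]
    simp only [hf]
    exact ArithmeticFunction.sum_moebius_mul_log_eq
  have h2 : f * ArithmeticFunction.log = - (Λ * Λ) := by
    rw [← ArithmeticFunction.zeta_mul_vonMangoldt, ← mul_assoc, h1]; exact neg_mul _ _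
  have h3 := congrArg (fun g : ArithmeticFunction ℝ => g n) h2
  simp only [ArithmeticFunction.mul_apply, ArithmeticFunction.neg_apply, hf,
    ArithmeticFunction.log_apply] at h3
  have h4 : ∑ d ∈ n.divisors, (μ d : ℝ) * log d = - Λ n :=
      ArithmeticFunction.sum_moebius_mul_log_eq
  have h5 : ∑ d ∈ n.divisors, (μ d : ℝ) * log d ^ 2 =
      ∑ x ∈ n.divisorsAntidiagonal, (μ x.1 : ℝ) * log x.1 ^ 2 := by
    rw [Nat.sum_divisorsAntidiagonal (fun d e => (μ d : ℝ) * log d ^ 2)]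
  have h6 : ∑ d ∈ n.divisors, (μ d : ℝ) * log d =
      ∑ x ∈ n.divisorsAntidiagonal, (μ x.1 : ℝ) * log x.1 := by
    rw [Nat.sum_divisorsAntidiagonal (fun d e => (μ d : ℝ) * log d)]
  have h7 : ∑ x ∈ n.divisorsAntidiagonal, (μ x.1 : ℝ) * log x.1 ^ 2 =
      log n * ∑ x ∈ n.divisorsAntidiagonal, (μ x.1 : ℝ) * log x.1 -
      ∑ x ∈ n.divisorsAntidiagonal, (μ x.1 : ℝ) * log x.1 * log x.2 := by
    rw [mul_sum, ← sum_sub_distrib]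
    refine sum_congr rfl fun x hx => ?_
    obtain ⟨hx1, hx2⟩ := Nat.mem_divisorsAntidiagonal.1 hx
    have ha : (x.1:ℝ) ≠ 0 := by
      have : x.1 ≠ 0 := by rintro h; rw [h] at hx1; omega
      exact_mod_cast this
    have hb : (x.2:ℝ) ≠ 0 := by
      have : x.2 ≠ 0 := by rintro h; rw [h] at hx1; omega
      exact_mod_cast this
    rw [← hx1, Nat.cast_mul, log_mul ha hb]
    ring
  rw [h5, h7, ← h6, h4, h3, Lam2]
  ring

/-- The approximation to `Λ₂` obtained from the weights `log²(Y/d)`. -/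
lemma sum_moebius_log_div_sq (n : ℕ) (hn : 1 < n) (L : ℝ) :
    ∑ d ∈ n.divisors, (μ d : ℝ) * (L - log d) ^ 2 = Lam2 n + 2 * (L - log n) * Λ n := by
  have h4 : ∑ d ∈ n.divisors, (μ d : ℝ) * log d = - Λ n :=
      ArithmeticFunction.sum_moebius_mul_log_eq
  have h1 := sum_moebius_log_sq n (by omega)
  have h2 := sum_moebius_eq n
  rw [if_neg (by omega)] at h2
  have : ∑ d ∈ n.divisors, (μ d : ℝ) * (L - log d) ^ 2 = L ^ 2 * ∑ d ∈ n.divisors, (μ d : ℝ)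
      - 2 * L * ∑ d ∈ n.divisors, (μ d : ℝ) * log d + ∑ d ∈ n.divisors, (μ d : ℝ) * log d ^ 2 := by
    rw [mul_sum, mul_sum, ← sum_sub_distrib, ← sum_add_distrib]
    exact sum_congr rfl fun _ _ => by ring
  rw [this, h1, h2, h4]
  ring

/-- Selberg's symmetry formula, from the Tatuzawa–Iseki identity applied to `ψ(t) - t + γ + 1`. -/
theorem selberg (N : ℕ) (hN : 0 < N) :
    |∑ n ∈ Ioc 0 N, Lam2 n - 2 * N * log N| ≤ 64 * N := by
  set γ := eulerMascheroniConstant with hγ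
  have hγ0 : 0 ≤ γ := by linarith [one_half_lt_eulerMascheroniConstant]
  have hγ1 : γ ≤ 1 := by linarith [eulerMascheroniConstant_lt_two_thirds]
  have hN' : (1:ℝ) ≤ N := by exact_mod_cast hN
  have hT := tatuzawa_iseki N hN (fun n => psi (N / n) - (N:ℝ) / n + (1 + γ))
  have hE : |∑ d ∈ Ioc 0 N, (μ d : ℝ) * log ((N:ℝ)/d) * ∑ e ∈ Ioc 0 (N / d),
      (psi (N / (d * e)) - (N:ℝ) / ((d * e : ℕ) : ℝ) + (1 + γ))| ≤ 32 * N := by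
    refine (abs_sum_le_sum_abs _ _).trans (le_trans (sum_le_sum fun d hd => ?_) (sum_log_err N))
    rw [mem_Ioc] at hd
    have hd' : (0:ℝ) < d := by exact_mod_cast hd.1
    have hl : 0 ≤ log ((N:ℝ)/d) := log_nonneg (by rw [le_div_iff₀ hd']; simpa using hd.2)
    rw [abs_mul, abs_mul, abs_of_nonneg hl]
    have h1 := inner_bound N d hd.1 hd.2
    have h2 := abs_moebius_le d
    calc _ ≤ 1 * log ((N:ℝ)/d) * (log ((N:ℝ)/d) + 3) := by gcongr
      _ = _ := by ring
  rw [hT] at hE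
  have hL : ∑ m ∈ Ioc 0 N, Λ m * (psi (N / m) - (N:ℝ) / m + (1 + γ)) =
      ∑ m ∈ Ioc 0 N, Λ m * psi (N / m) - N * ∑ m ∈ Ioc 0 N, Λ m / m + (1 + γ) * psi N := by
    rw [psi.eq_1 N, mul_sum, mul_sum, ← sum_sub_distrib, ← sum_add_distrib]
    exact sum_congr rfl fun _ _ => by ring
  rw [hL] at hE
  have hC : ∑ n ∈ Ioc 0 N, ∑ x ∈ n.divisorsAntidiagonal, Λ x.1 * Λ x.2
      = ∑ m ∈ Ioc 0 N, Λ m * psi (N / m) := by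
    rw [← sum_hyp (fun d e => Λ d * Λ e)]
    exact sum_congr rfl fun _ _ => by rw [psi, mul_sum]
  have hsum : ∑ n ∈ Ioc 0 N, Lam2 n = ∑ n ∈ Ioc 0 N, Λ n * log n + ∑ m ∈ Ioc 0 N, Λ m * psi (N / m) := by
    unfold Lam2
    rw [sum_add_distrib, hC]
  rw [hsum]
  have h1 := sum_vM_log_le N hN
  have h2 := sum_vM_log_ge N
  have h3 := mertens N hN
  have h4 := psi_le N
  have h5 := psi_nonneg N
  have h6 : log (N:ℝ) ≤ N - 1 := Real.log_le_sub_one_of_pos (by linarith)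
  have h7 : 0 ≤ log (N:ℝ) := log_nonneg hN'
  simp only [Nat.div_one, Nat.cast_one, div_one] at hE
  rw [abs_le] at h3 hE ⊢
  have h8 : N * (∑ n ∈ Ioc 0 N, Λ n / n - log N) ≤ N * 6 := mul_le_mul_of_nonneg_left h3.2 (by linarith)
  have h9 : N * (-6) ≤ N * (∑ n ∈ Ioc 0 N, Λ n / n - log N) := mul_le_mul_of_nonneg_left h3.1 (by linarith)
  have h10 : 0 ≤ (1 + γ) * log N := by positivity
  have h11 : (1 + γ) * log N ≤ 2 * N := by nlinarith
  have h12 : 0 ≤ (1 + γ) * psi N := by positivity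
  have h13 : (1 + γ) * psi N ≤ 12 * N := by nlinarith
  obtain ⟨hE1, hE2⟩ := hE
  constructor <;> nlinarith

end SepPow

/-! ### Reciprocal sums of primes and of rough integers -/

namespace SepPow
open Finset Real

/-- The primes in `(a, b]`. -/
def primesIn (a b : ℕ) : Finset ℕ := (Ioc a b).filter Nat.Prime

lemma mem_primesIn {a b p : ℕ} : p ∈ primesIn a b ↔ (a < p ∧ p ≤ b) ∧ p.Prime := by
  simp [primesIn]

lemma primesIn_union {a b c : ℕ} (hab : a ≤ b) (hbc : b ≤ c) :
    primesIn a c = primesIn a b ∪ primesIn b c := by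
  ext p; simp only [mem_union, mem_primesIn]; constructor
  · rintro ⟨⟨h1, h2⟩, h3⟩
    rcases le_or_gt p b with h | h
    · exact Or.inl ⟨⟨h1, h⟩, h3⟩
    · exact Or.inr ⟨⟨h, h2⟩, h3⟩
  · rintro (⟨⟨h1, h2⟩, h3⟩ | ⟨⟨h1, h2⟩, h3⟩)
    · exact ⟨⟨h1, h2.trans hbc⟩, h3⟩
    · exact ⟨⟨hab.trans_lt h1, h2⟩, h3⟩

lemma primesIn_disjoint (a b c : ℕ) : Disjoint (primesIn a b) (primesIn b c) := by
  rw [Finset.disjoint_left]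
  intro p h1 h2
  rw [mem_primesIn] at h1 h2
  omega

/-- From Chebyshev's bound `θ(x) ≤ x log 4`. -/
lemma sum_inv_primes_dyadic (m : ℕ) (hm : 0 < m) :
    ∑ p ∈ primesIn (2 ^ m) (2 ^ (m + 1)), (1:ℝ) / p ≤ 4 / m := by
  have hm' : (0:ℝ) < m := by exact_mod_cast hm
  have h2 : 0 < log 2 := log_pos (by norm_num)
  have hth : ∑ p ∈ primesIn (2 ^ m) (2 ^ (m + 1)), log (p:ℝ) ≤ log 4 * 2 ^ (m+1) := by
    have h := Chebyshev.theta_le_log4_mul_x (x := ((2 ^ (m+1) : ℕ) : ℝ)) (by positivity)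
    unfold Chebyshev.theta at h
    rw [Nat.floor_natCast] at h
    push_cast at h
    refine le_trans (sum_le_sum_of_subset_of_nonneg ?_ ?_) h
    · intro p hp
      rw [mem_primesIn] at hp
      simp only [mem_filter, mem_Ioc]
      exact ⟨⟨hp.2.pos, hp.1.2⟩, hp.2⟩
    · intro p _ _; exact log_natCast_nonneg p
  have hlow : ∑ p ∈ primesIn (2 ^ m) (2 ^ (m + 1)), (1:ℝ) / p * (m * log 2 * 2 ^ m) ≤
      ∑ p ∈ primesIn (2 ^ m) (2 ^ (m + 1)), log (p:ℝ) := by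
    refine sum_le_sum fun p hp => ?_
    rw [mem_primesIn] at hp
    have hp0 : (2:ℝ) ^ m ≤ p := by exact_mod_cast hp.1.1.le
    have hpp : (0:ℝ) < p := by exact_mod_cast hp.2.pos
    have h1 : m * log 2 ≤ log p := by
      rw [← log_pow]; exact log_le_log (by positivity) hp0
    calc (1:ℝ) / p * (m * log 2 * 2 ^ m) = (m * log 2) * (2 ^ m / p) := by ring
      _ ≤ (m * log 2) * 1 := by
          refine mul_le_mul_of_nonneg_left ?_ (by positivity)
          rw [div_le_one hpp]; exact hp0
      _ ≤ _ := by linarith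
  rw [← sum_mul] at hlow
  have h4 : log 4 = 2 * log 2 := by
    rw [show (4:ℝ) = 2 ^ 2 by norm_num, log_pow]; norm_num
  have h := hlow.trans hth
  rw [h4, show (2:ℝ) ^ (m+1) = 2 ^ m * 2 from pow_succ _ _] at h
  rw [le_div_iff₀ hm']
  have hP : 0 < log 2 * 2 ^ m := by positivity
  refine le_of_mul_le_mul_right ?_ hP
  nlinarith

lemma sum_inv_primes_range (m n : ℕ) (hm : 0 < m) :
    ∑ p ∈ primesIn (2 ^ m) (2 ^ (m + n)), (1:ℝ) / p ≤ 4 * n / m := by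
  have hm' : (0:ℝ) < m := by exact_mod_cast hm
  induction n with
  | zero => simp [primesIn]
  | succ n ih =>
    rw [← add_assoc, primesIn_union (Nat.pow_le_pow_right (by norm_num) (Nat.le_add_right m n))
      (Nat.pow_le_pow_right (by norm_num) (Nat.le_succ _)), sum_union (primesIn_disjoint _ _ _)]
    have h := sum_inv_primes_dyadic (m + n) (by omega)
    have : (4:ℝ) / ((m + n : ℕ):ℝ) ≤ 4 / m := by
      push_cast
      gcongr
      linarith [(Nat.cast_nonneg n : (0:ℝ) ≤ n)]
    have e : (4:ℝ) * ((n+1:ℕ):ℝ) / m = 4 * n / m + 4 / m := by push_cast; ring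
    rw [e]; linarith

/-- The `i`-th block of sieving primes: those in `(2^(2^(i-1)), 2^(2^i)]` for `i ≥ 1`, and `2` alone for
`i = 0`. -/
def blk : ℕ → Finset ℕ
  | 0 => {2}
  | i + 1 => primesIn (2 ^ 2 ^ i) (2 ^ 2 ^ (i + 1))

lemma blk_prime {i p : ℕ} (h : p ∈ blk i) : p.Prime := by
  cases i with
  | zero => simp [blk] at h; subst h; exact Nat.prime_two
  | succ i => exact (mem_primesIn.1 h).2

lemma blk_le {i p : ℕ} (h : p ∈ blk i) : p ≤ 2 ^ 2 ^ i := by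
  cases i with
  | zero => simp [blk] at h; subst h; norm_num
  | succ i => exact (mem_primesIn.1 h).1.2

lemma blk_sum (i : ℕ) : ∑ p ∈ blk i, (1:ℝ) / p ≤ 4 := by
  cases i with
  | zero => simp [blk]; norm_num
  | succ i =>
    have h := sum_inv_primes_range (2 ^ i) (2 ^ i) (by positivity)
    rw [← two_mul, ← pow_succ'] at h
    refine h.trans (le_of_eq ?_)
    push_cast; field_simp

lemma primesIn_zero_succ (k : ℕ) : primesIn 0 (2 ^ 2 ^ (k+1)) = primesIn 0 (2 ^ 2 ^ k) ∪ blk (k+1) :=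
  primesIn_union (Nat.zero_le _) (Nat.pow_le_pow_right (by norm_num) (Nat.pow_le_pow_right (by norm_num) (Nat.le_succ _)))

lemma primesIn_zero_zero : primesIn 0 (2 ^ 2 ^ 0) = blk 0 := by
  decide

/-- By concavity, `4 ^ (-x)` lies below its chord `1 - x` on `[0, 1/2]`. -/
lemma one_sub_ge (x : ℝ) (h0 : 0 ≤ x) (h1 : x ≤ 1 / 2) : (4:ℝ) ^ (-x) ≤ 1 - x := by
  have hc := (convexOn_exp).2 (Set.mem_univ (0:ℝ)) (Set.mem_univ (-log 2))
    (show (0:ℝ) ≤ 1 - 2 * x by linarith) (show (0:ℝ) ≤ 2 * x by linarith) (by ring)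
  have h4 : log 4 = 2 * log 2 := by
    rw [show (4:ℝ) = 2 ^ 2 by norm_num, log_pow]; norm_num
  rw [Real.rpow_def_of_pos (by norm_num), h4]
  simp only [smul_eq_mul, mul_zero, zero_add, exp_zero, mul_one, exp_neg, exp_log (by norm_num : (0:ℝ) < 2)] at hc
  calc rexp (2 * log 2 * -x) = rexp (2 * x * -log 2) := by ring_nf
    _ ≤ _ := hc
    _ = 1 - x := by ring

lemma prod_one_sub_ge (s : Finset ℕ) (hs : ∀ p ∈ s, Nat.Prime p) (hsum : ∑ p ∈ s, (1:ℝ) / p ≤ 4) :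
    (1:ℝ) / 256 ≤ ∏ p ∈ s, (1 - (1:ℝ) / p) := by
  calc (1:ℝ) / 256 = (4:ℝ) ^ (-4:ℝ) := by
        rw [Real.rpow_neg (by norm_num)]; norm_num
    _ ≤ (4:ℝ) ^ (-∑ p ∈ s, (1:ℝ) / p) := Real.rpow_le_rpow_of_exponent_le (by norm_num) (by linarith)
    _ = ∏ p ∈ s, (4:ℝ) ^ (-((1:ℝ) / p)) := by
        rw [← Real.rpow_sum_of_pos (by norm_num), sum_neg_distrib]
    _ ≤ _ := by
        refine prod_le_prod (fun _ _ => by positivity) fun p hp => ?_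
        have h2 : (2:ℝ) ≤ p := by exact_mod_cast (hs p hp).two_le
        refine one_sub_ge _ (by positivity) ?_
        exact one_div_le_one_div_of_le (by norm_num) h2

/-- Sums of `1/e` over integers composed of primes of `s` are bounded by the Euler product. -/
lemma sum_inv_le_euler (s : Finset ℕ) (E : Finset ℕ)
    (hE : ∀ e ∈ E, e ≠ 0 ∧ ∀ p, p.Prime → p ∣ e → p ∈ s) :
    ∑ e ∈ E, (1:ℝ) / e ≤ ∏ p ∈ s with p.Prime, (1 - (1:ℝ) / p)⁻¹ := by
  let f : ℕ →* ℝ := ⟨⟨fun n => (1:ℝ) / n, by simp⟩, fun a b => by simp [mul_comm]⟩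
  have hf : ∀ {p : ℕ}, p.Prime → ‖f p‖ < 1 := by
    intro p hp
    have : (1:ℝ) < p := by exact_mod_cast hp.one_lt
    simp only [f, MonoidHom.coe_mk, OneHom.coe_mk, norm_div, norm_one, Real.norm_natCast]
    rw [div_lt_one (by linarith)]; exact this
  obtain ⟨_, h2⟩ := EulerProduct.summable_and_hasSum_factoredNumbers_prod_filter_prime_geometric hf s
  have hmem : ∀ e ∈ E, e ∈ Nat.factoredNumbers s := by
    intro e he
    rw [Nat.mem_factoredNumbers']
    exact (hE e he).2
  let E' : Finset (Nat.factoredNumbers s) := E.attach.map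
    ⟨fun e => ⟨e.1, hmem e.1 e.2⟩, fun a b hab => Subtype.ext (by
      have := congrArg (fun x : Nat.factoredNumbers s => (x:ℕ)) hab
      exact this)⟩
  have h3 := sum_le_hasSum E' (fun i _ => by
    show (0:ℝ) ≤ 1 / ((i:ℕ):ℝ)
    positivity) h2
  refine le_trans (le_of_eq ?_) h3
  simp only [E', sum_map]
  rw [← Finset.sum_attach]
  rfl

lemma primesIn_filter (a b : ℕ) : (primesIn a b).filter Nat.Prime = primesIn a b := by
  simp [primesIn, filter_filter]

/-- Mertens-type upper bound for `∏_{p ≤ z} (1 - 1/p)`. -/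
lemma prod_le_inv_log (z : ℕ) (hz : 2 ≤ z) : ∏ p ∈ primesIn 0 z, (1 - (1:ℝ) / p) ≤ 1 / log z := by
  have h := sum_inv_le_euler (primesIn 0 z) (Ioc 0 z) (by
    intro e he
    rw [mem_Ioc] at he
    refine ⟨by omega, fun p hp hd => ?_⟩
    exact mem_primesIn.2 ⟨⟨hp.pos, (Nat.le_of_dvd he.1 hd).trans he.2⟩, hp⟩)
  rw [primesIn_filter, prod_inv_distrib] at h
  have h2 := (harmonic_bounds z (by omega)).1
  have h3 : log z ≤ (∏ p ∈ primesIn 0 z, (1 - (1:ℝ) / p))⁻¹ := by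
    linarith [one_half_lt_eulerMascheroniConstant]
  have hl : 0 < log (z:ℝ) := log_pos (by exact_mod_cast hz)
  have := inv_anti₀ hl h3
  rw [inv_inv] at this
  rwa [one_div]

/-- `n` has no prime factor `≤ z`. -/
def Rough (z n : ℕ) : Prop := ∀ p, p.Prime → p ≤ z → ¬ p ∣ n

lemma prod_range_inv (k r : ℕ) :
    ∏ p ∈ primesIn (2 ^ 2 ^ k) (2 ^ 2 ^ (k + r)), (1 - (1:ℝ) / p)⁻¹ ≤ 256 ^ r := by
  induction r with
  | zero => simp [primesIn]
  | succ r ih =>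
    rw [← add_assoc, primesIn_union (b := 2 ^ 2 ^ (k + r)), prod_union (primesIn_disjoint _ _ _), pow_succ]
    · have h1 := prod_one_sub_ge (blk (k + r + 1)) (fun p hp => blk_prime hp) (blk_sum _)
      have h2 : ∏ p ∈ primesIn (2 ^ 2 ^ (k + r)) (2 ^ 2 ^ (k + r + 1)), (1 - (1:ℝ) / p)⁻¹ ≤ 256 := by
        rw [prod_inv_distrib]
        have := inv_anti₀ (by norm_num : (0:ℝ) < 1 / 256) h1
        simpa [blk] using this
      refine mul_le_mul ih h2 ?_ (pow_nonneg (by norm_num) r)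
      refine prod_nonneg fun p hp => ?_
      have h2 : (1:ℝ) ≤ p := by exact_mod_cast (mem_primesIn.1 hp).2.one_lt.le
      have : (1:ℝ) / p ≤ 1 := by rw [div_le_one (by linarith)]; exact h2
      exact inv_nonneg.2 (by linarith)
    · exact Nat.pow_le_pow_right (by norm_num) (Nat.pow_le_pow_right (by norm_num) (by omega))
    · exact Nat.pow_le_pow_right (by norm_num) (Nat.pow_le_pow_right (by norm_num) (by omega))

/-- Integers up to `z^(2^r)` without prime factors up to `z = 2^(2^k)` have bounded reciprocal sum, the
bound depending on `r` only. -/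
lemma sum_rough_inv (k r : ℕ) (E : Finset ℕ)
    (hE : ∀ e ∈ E, e ≠ 0 ∧ e ≤ 2 ^ 2 ^ (k + r) ∧ Rough (2 ^ 2 ^ k) e) :
    ∑ e ∈ E, (1:ℝ) / e ≤ 256 ^ r := by
  have h := sum_inv_le_euler (primesIn (2 ^ 2 ^ k) (2 ^ 2 ^ (k + r))) E (by
    intro e he
    obtain ⟨h0, h1, h2⟩ := hE e he
    refine ⟨h0, fun p hp hd => mem_primesIn.2 ⟨⟨?_, (Nat.le_of_dvd (by omega) hd).trans h1⟩, hp⟩⟩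
    by_contra hc
    exact h2 p hp (by omega) hd)
  rw [primesIn_filter] at h
  exact h.trans (prod_range_inv k r)

end SepPow

/-! ### Combinatorial sieve functions -/

namespace SepPow
open Finset Real

lemma sum_powerset_split (P Q : Finset ℕ) (h : Disjoint P Q) (F G : Finset ℕ → ℝ) :
    ∑ d ∈ (P ∪ Q).powerset, F (d ∩ P) * G (d ∩ Q)
      = (∑ a ∈ P.powerset, F a) * ∑ b ∈ Q.powerset, G b := by
  rw [sum_mul_sum, ← sum_product']
  refine sum_bij' (fun d _ => (d ∩ P, d ∩ Q)) (fun x _ => x.1 ∪ x.2) ?_ ?_ ?_ ?_ ?_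
  · intro d hd; simp [inter_subset_right]
  · rintro ⟨a, b⟩ hx
    simp only [mem_product, mem_powerset] at hx ⊢
    exact union_subset_union hx.1 hx.2
  · intro d hd
    rw [mem_powerset] at hd
    simp only
    rw [← inter_union_distrib_left]
    exact inter_eq_left.2 hd
  · rintro ⟨a, b⟩ hx
    simp only [mem_product, mem_powerset] at hx
    have h1 : b ∩ P = ∅ := disjoint_iff_inter_eq_empty.1 (disjoint_of_subset_left hx.2 h.symm)
    have h2 : a ∩ Q = ∅ := disjoint_iff_inter_eq_empty.1 (disjoint_of_subset_left hx.1 h)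
    simp only [union_inter_distrib_right, h1, h2, inter_eq_left.2 hx.1, inter_eq_left.2 hx.2,
      union_empty, empty_union]
  · intro d hd; rfl

/-- `Rep P w δ N`: the function `w` is a combination of the indicators of `∏ d ∣ n`
(`d ⊆ P`), with mean value `δ` and total coefficient mass at most `N`. -/
def Rep (P : Finset ℕ) (w : ℕ → ℝ) (δ N : ℝ) : Prop :=
  ∃ c : Finset ℕ → ℝ,
    (∀ n, w n = ∑ d ∈ P.powerset, c d * (if ∀ p ∈ d, p ∣ n then 1 else 0)) ∧
    δ = ∑ d ∈ P.powerset, c d * ∏ p ∈ d, (1 / (p:ℝ)) ∧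
    ∑ d ∈ P.powerset, |c d| ≤ N

lemma Rep.mul {P Q : Finset ℕ} {w w' : ℕ → ℝ} {δ δ' N N' : ℝ} (hPQ : Disjoint P Q)
    (h : Rep P w δ N) (h' : Rep Q w' δ' N') (hN : 0 ≤ N) :
    Rep (P ∪ Q) (fun n => w n * w' n) (δ * δ') (N * N') := by
  obtain ⟨c, h1, h2, h3⟩ := h
  obtain ⟨c', h1', h2', h3'⟩ := h'
  refine ⟨fun d => c (d ∩ P) * c' (d ∩ Q), ?_, ?_, ?_⟩
  · intro n
    beta_reduce
    rw [h1, h1', ← sum_powerset_split P Q hPQ]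
    refine sum_congr rfl fun d hd => ?_
    rw [mem_powerset] at hd
    have : (∀ p ∈ d, p ∣ n) ↔ (∀ p ∈ d ∩ P, p ∣ n) ∧ (∀ p ∈ d ∩ Q, p ∣ n) := by
      constructor
      · intro h
        exact ⟨fun p hp => h p (mem_inter.1 hp).1, fun p hp => h p (mem_inter.1 hp).1⟩
      · rintro ⟨ha, hb⟩ p hp
        rcases mem_union.1 (hd hp) with h | h
        · exact ha p (mem_inter.2 ⟨hp, h⟩)
        · exact hb p (mem_inter.2 ⟨hp, h⟩)
    by_cases ha : ∀ p ∈ d ∩ P, p ∣ n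
    · by_cases hb : ∀ p ∈ d ∩ Q, p ∣ n
      · rw [if_pos ha, if_pos hb, if_pos (this.2 ⟨ha, hb⟩)]; ring
      · rw [if_neg hb, if_neg (fun h => hb (this.1 h).2)]; ring
    · rw [if_neg ha, if_neg (fun h => ha (this.1 h).1)]; ring
  · rw [h2, h2', ← sum_powerset_split P Q hPQ]
    refine sum_congr rfl fun d hd => ?_
    rw [mem_powerset] at hd
    have hu : d = (d ∩ P) ∪ (d ∩ Q) := by
      rw [← inter_union_distrib_left]; exact (inter_eq_left.2 hd).symm
    have hdis : Disjoint (d ∩ P) (d ∩ Q) :=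
      disjoint_of_subset_left inter_subset_right (disjoint_of_subset_right inter_subset_right hPQ)
    conv_rhs => rw [hu, prod_union hdis, ← hu]
    ring
  · have := sum_powerset_split P Q hPQ (fun d => |c d|) (fun d => |c' d|)
    simp only [abs_mul]
    rw [this]
    exact mul_le_mul h3 h3' (sum_nonneg fun _ _ => abs_nonneg _) hN

lemma Rep.add {P : Finset ℕ} {w w' : ℕ → ℝ} {δ δ' N N' : ℝ}
    (h : Rep P w δ N) (h' : Rep P w' δ' N') :
    Rep P (fun n => w n + w' n) (δ + δ') (N + N') := by
  obtain ⟨c, h1, h2, h3⟩ := h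
  obtain ⟨c', h1', h2', h3'⟩ := h'
  refine ⟨fun d => c d + c' d, ?_, ?_, ?_⟩
  · intro n
    beta_reduce
    rw [h1, h1', ← sum_add_distrib]
    exact sum_congr rfl fun d _ => by ring
  · rw [h2, h2', ← sum_add_distrib]
    exact sum_congr rfl fun d _ => by ring
  · calc _ ≤ ∑ d ∈ P.powerset, (|c d| + |c' d|) := sum_le_sum fun d _ => abs_add_le _ _
      _ ≤ _ := by rw [sum_add_distrib]; linarith

lemma Rep.neg {P : Finset ℕ} {w : ℕ → ℝ} {δ N : ℝ} (h : Rep P w δ N) :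
    Rep P (fun n => - w n) (-δ) N := by
  obtain ⟨c, h1, h2, h3⟩ := h
  refine ⟨fun d => - c d, ?_, ?_, ?_⟩
  · intro n; beta_reduce; rw [h1, ← sum_neg_distrib]; exact sum_congr rfl fun d _ => by ring
  · rw [h2, ← sum_neg_distrib]; exact sum_congr rfl fun d _ => by ring
  · simpa using h3

lemma count_multiples (D Y H : ℕ) (hD : 0 < D) :
    |∑ n ∈ Ioc Y (Y + H), (if D ∣ n then (1:ℝ) else 0) - H / D| ≤ 1 := by
  have hD' : (0:ℝ) < D := by exact_mod_cast hD
  have hcount : ∀ M : ℕ, ∑ n ∈ Ioc 0 M, (if D ∣ n then (1:ℝ) else 0) = ((M / D : ℕ) : ℝ) := by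
    intro M
    rw [← Nat.Ioc_filter_dvd_card_eq_div, card_filter]
    push_cast; rfl
  have hsplit : ∑ n ∈ Ioc 0 (Y + H), (if D ∣ n then (1:ℝ) else 0) =
      ∑ n ∈ Ioc 0 Y, (if D ∣ n then (1:ℝ) else 0) + ∑ n ∈ Ioc Y (Y + H), (if D ∣ n then (1:ℝ) else 0) :=
    (sum_Ioc_consecutive _ (Nat.zero_le _) (Nat.le_add_right _ _)).symm
  rw [hcount, hcount] at hsplit
  have hfl : ∀ M : ℕ, (((M / D : ℕ) : ℝ) ≤ M / D) ∧ ((M:ℝ) / D ≤ ((M/D:ℕ):ℝ) + 1) := by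
    intro M
    refine ⟨Nat.cast_div_le, ?_⟩
    rw [div_le_iff₀ hD']
    have := (Nat.lt_div_mul_add (a := M) hD).le
    have h' : (M:ℝ) ≤ ((M/D:ℕ):ℝ) * D + D := by exact_mod_cast this
    linarith
  have h1 := hfl Y
  have h2 := hfl (Y + H)
  have e : (((Y + H : ℕ)):ℝ) / D = Y / D + H / D := by push_cast; ring
  rw [e] at h2
  rw [abs_le]
  constructor <;> linarith [h1.1, h1.2, h2.1, h2.2]

/-- The sum over an interval of length `H` is `δ H`, up to one unit per divisibility condition. -/
lemma Rep.count {P : Finset ℕ} (hP : ∀ p ∈ P, Nat.Prime p) {w : ℕ → ℝ} {δ N : ℝ}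
    (h : Rep P w δ N) (Y H : ℕ) : |∑ n ∈ Ioc Y (Y + H), w n - H * δ| ≤ N := by
  obtain ⟨c, h1, h2, h3⟩ := h
  have key : ∑ n ∈ Ioc Y (Y + H), w n - H * δ = ∑ d ∈ P.powerset, c d *
      (∑ n ∈ Ioc Y (Y + H), (if (∏ p ∈ d, p) ∣ n then (1:ℝ) else 0) - H / ((∏ p ∈ d, p : ℕ):ℝ)) := by
    simp only [h1]
    rw [sum_comm, h2, mul_sum, ← sum_sub_distrib]
    refine sum_congr rfl fun d hd => ?_
    rw [mem_powerset] at hd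
    rw [← mul_sum, mul_sub]
    congr 1
    · congr 1
      refine sum_congr rfl fun n _ => ?_
      congr 1
      rw [eq_iff_iff]
      constructor
      · intro h
        exact Finset.prod_primes_dvd n (fun p hp => (hP p (hd hp)).prime) h
      · intro h p hp
        exact (dvd_prod_of_mem _ hp).trans h
    · push_cast
      simp only [one_div, prod_inv_distrib]
      ring
  rw [key]
  refine (abs_sum_le_sum_abs _ _).trans (le_trans (sum_le_sum fun d hd => ?_) h3)
  rw [mem_powerset] at hd
  rw [abs_mul]
  have := count_multiples (∏ p ∈ d, p) Y H (prod_pos fun p hp => (hP p (hd hp)).pos)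
  calc _ ≤ |c d| * 1 := mul_le_mul_of_nonneg_left this (abs_nonneg _)
    _ = _ := mul_one _

/-- Mean values are monotone: a pointwise inequality passes to the densities. -/
lemma Rep.mono {P Q : Finset ℕ} (hP : ∀ p ∈ P, Nat.Prime p) (hQ : ∀ p ∈ Q, Nat.Prime p)
    {w w' : ℕ → ℝ} {δ δ' N N' : ℝ}
    (h : Rep P w δ N) (h' : Rep Q w' δ' N') (hw : ∀ n, w n ≤ w' n) : δ ≤ δ' := by
  by_contra hc
  push Not at hc
  obtain ⟨H, hH⟩ := exists_nat_gt ((N + N') / (δ - δ'))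
  have h1 := h.count hP 0 H
  have h2 := h'.count hQ 0 H
  have h3 : ∑ n ∈ Ioc 0 (0 + H), w n ≤ ∑ n ∈ Ioc 0 (0 + H), w' n := sum_le_sum fun n _ => hw n
  rw [div_lt_iff₀ (by linarith)] at hH
  rw [abs_le] at h1 h2
  nlinarith [h1.1, h2.2]

/-- The indicator of having no divisor in `P`. -/
noncomputable def ind (P : Finset ℕ) (n : ℕ) : ℝ := if ∀ p ∈ P, ¬ p ∣ n then 1 else 0

/-- Coefficients depending only on `#d`: pointwise value. -/
lemma card_eval (P : Finset ℕ) (f : ℕ → ℝ) (n : ℕ) :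
    ∑ d ∈ P.powerset, f #d * (if ∀ p ∈ d, p ∣ n then (1:ℝ) else 0)
      = ∑ m ∈ range (#(P.filter (· ∣ n)) + 1), ((#(P.filter (· ∣ n))).choose m : ℝ) * f m := by
  have h := Finset.sum_powerset_apply_card f (x := P.filter (· ∣ n))
  simp only [nsmul_eq_mul] at h
  rw [← h]
  symm
  refine sum_subset_zero_on_sdiff ?_ ?_ ?_
  · exact powerset_mono.2 (filter_subset _ _)
  · intro d hd
    rw [mem_sdiff, mem_powerset, mem_powerset] at hd
    rw [if_neg, mul_zero]
    intro hall
    exact hd.2 fun p hp => mem_filter.2 ⟨hd.1 hp, hall p hp⟩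
  · intro d hd
    rw [mem_powerset] at hd
    rw [if_pos, mul_one]
    intro p hp
    exact (mem_filter.1 (hd hp)).2

lemma ind_eq (P : Finset ℕ) (n : ℕ) : ind P n = if #(P.filter (· ∣ n)) = 0 then 1 else 0 := by
  unfold ind
  congr 1
  rw [eq_iff_iff, card_eq_zero, filter_eq_empty_iff]

lemma rep_ind (P : Finset ℕ) : Rep P (ind P) (∏ p ∈ P, (1 - 1 / (p:ℝ))) (2 ^ #P) := by
  refine ⟨fun d => (-1) ^ #d, ?_, ?_, ?_⟩
  · intro n
    rw [card_eval P (fun m => (-1) ^ m), ind_eq]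
    have := Int.alternating_sum_range_choose (n := #(P.filter (· ∣ n)))
    have h2 := congrArg (fun x : ℤ => (x:ℝ)) this
    push_cast at h2
    rw [← h2]
    exact sum_congr rfl fun _ _ => by ring
  · have : ∀ p ∈ P, (1 - 1 / (p:ℝ)) = 1 + (-(1 / (p:ℝ))) := fun p _ => by ring
    rw [prod_congr rfl this, prod_one_add]
    refine sum_congr rfl fun d _ => ?_
    rw [prod_neg]
  · simp

/-- Brun's upper truncation of the inclusion-exclusion sum. -/
noncomputable def Ub (P : Finset ℕ) (b n : ℕ) : ℝ :=
  ∑ d ∈ P.powerset, (if #d ≤ b then (-1:ℝ) ^ #d else 0) * (if ∀ p ∈ d, p ∣ n then (1:ℝ) else 0)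

/-- The number of `d ⊆ P` of size `b+1` all of whose members divide `n`. -/
noncomputable def Tb (P : Finset ℕ) (b n : ℕ) : ℝ :=
  ∑ d ∈ P.powerset, (if #d = b + 1 then (1:ℝ) else 0) * (if ∀ p ∈ d, p ∣ n then (1:ℝ) else 0)

lemma Tb_eq (P : Finset ℕ) (b n : ℕ) : Tb P b n = ((#(P.filter (· ∣ n))).choose (b+1) : ℝ) := by
  unfold Tb
  rw [card_eval P (fun m => if m = b + 1 then 1 else 0)]
  simp only [mul_ite, mul_one, mul_zero, sum_ite_eq', mem_range]
  split_ifs with h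
  · rfl
  · rw [Nat.choose_eq_zero_of_lt (by omega)]; simp

lemma Ub_eq (P : Finset ℕ) (b n : ℕ) :
    Ub P b n = ∑ m ∈ range (b + 1), (-1:ℝ) ^ m * ((#(P.filter (· ∣ n))).choose m : ℝ) := by
  unfold Ub
  rw [card_eval P (fun m => if m ≤ b then (-1:ℝ) ^ m else 0)]
  set ν := #(P.filter (· ∣ n))
  have h1 : ∑ m ∈ range (ν + 1), (ν.choose m : ℝ) * (if m ≤ b then (-1:ℝ) ^ m else 0)
      = ∑ m ∈ range (ν + b + 1), (ν.choose m : ℝ) * (if m ≤ b then (-1:ℝ) ^ m else 0) := by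
    refine sum_subset (range_mono (by omega)) fun m _ hm => ?_
    rw [mem_range] at hm
    rw [Nat.choose_eq_zero_of_lt (by omega)]; simp
  have h2 : ∑ m ∈ range (b + 1), (-1:ℝ) ^ m * (ν.choose m : ℝ)
      = ∑ m ∈ range (ν + b + 1), (ν.choose m : ℝ) * (if m ≤ b then (-1:ℝ) ^ m else 0) := by
    refine sum_subset_zero_on_sdiff (range_mono (by omega)) ?_ ?_
    · intro m hm
      rw [mem_sdiff, mem_range, mem_range] at hm
      rw [if_neg (by omega), mul_zero]
    · intro m hm
      rw [mem_range] at hm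
      rw [if_pos (by omega), mul_comm]
  rw [h1, h2]

/-- The Bonferroni inequalities: truncation at an even level overcounts, and the excess is at most the
first omitted term. -/
lemma Ub_bounds (P : Finset ℕ) (b n : ℕ) (hb : Even b) :
    ind P n ≤ Ub P b n ∧ Ub P b n - Tb P b n ≤ ind P n := by
  rw [ind_eq, Ub_eq, Tb_eq]
  set ν := #(P.filter (· ∣ n))
  rcases Nat.eq_zero_or_pos ν with h | h
  · rw [h]
    have : ∑ m ∈ range (b + 1), (-1:ℝ) ^ m * ((0:ℕ).choose m : ℝ) = 1 := by
      rw [sum_range_succ']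
      simp
    rw [this]; simp
  · obtain ⟨μ, hμ⟩ : ∃ μ, ν = μ + 1 := ⟨ν - 1, by omega⟩
    rw [hμ, if_neg (by omega)]
    have h := Int.alternating_sum_range_choose_eq_choose (n := μ) (m := b)
    rw [hb.neg_one_pow, one_mul] at h
    have h2 := congrArg (fun x : ℤ => (x:ℝ)) h
    push_cast at h2
    rw [h2]
    refine ⟨by positivity, ?_⟩
    have : μ.choose b ≤ (μ+1).choose (b+1) := by
      rw [Nat.choose_succ_succ]; omega
    have : (μ.choose b : ℝ) ≤ (μ+1).choose (b+1) := by exact_mod_cast this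
    linarith

lemma ind_nonneg (P : Finset ℕ) (n : ℕ) : 0 ≤ ind P n := by unfold ind; split_ifs <;> norm_num

lemma Tb_nonneg (P : Finset ℕ) (b n : ℕ) : 0 ≤ Tb P b n := by rw [Tb_eq]; positivity

lemma sum_choose_le (n b : ℕ) : ∑ m ∈ range (b + 1), n.choose m ≤ (n + 1) ^ b := by
  rw [add_pow]
  refine sum_le_sum fun m hm => ?_
  rw [mem_range] at hm
  have h1 := Nat.choose_le_pow n m
  have h2 : 0 < b.choose m := Nat.choose_pos (by omega)
  simp only [one_pow, mul_one]
  exact h1.trans (Nat.le_mul_of_pos_right _ h2)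

lemma rep_Ub (P : Finset ℕ) (b : ℕ) : ∃ δ, Rep P (Ub P b) δ ((#P + 1 : ℕ) ^ (b + 1)) := by
  refine ⟨_, fun d => if #d ≤ b then (-1:ℝ) ^ #d else 0, fun n => rfl, rfl, ?_⟩
  have h1 : ∀ d : Finset ℕ, |(if #d ≤ b then (-1:ℝ) ^ #d else 0)| = (fun m => if m ≤ b then (1:ℝ) else 0) #d := by
    intro d; simp only; split_ifs <;> simp
  simp only [h1]
  rw [Finset.sum_powerset_apply_card (fun m => if m ≤ b then (1:ℝ) else 0)]
  have h2 : ∑ m ∈ range (#P + 1), (#P).choose m • (if m ≤ b then (1:ℝ) else 0) ≤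
      ∑ m ∈ range (b + 1), ((#P).choose m : ℝ) := by
    simp only [nsmul_eq_mul, mul_ite, mul_one, mul_zero]
    rw [← sum_filter]
    refine sum_le_sum_of_subset_of_nonneg ?_ (fun _ _ _ => by positivity)
    intro m hm
    simp only [mem_filter, mem_range] at hm ⊢
    omega
  refine h2.trans ?_
  have h3 := sum_choose_le (#P) b
  have h4 : (#P + 1) ^ b ≤ (#P + 1) ^ (b+1) := Nat.pow_le_pow_right (by omega) (by omega)
  exact_mod_cast h3.trans h4

/-- Rankin's trick with parameter `64` bounds the density of `Tb`. -/
lemma rep_Tb (P : Finset ℕ) (b : ℕ) (hσ : ∑ p ∈ P, (1:ℝ) / p ≤ 4) :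
    ∃ δ, Rep P (Tb P b) δ ((#P + 1 : ℕ) ^ (b + 1)) ∧ δ ≤ 3 ^ 256 / 64 ^ (b + 1) := by
  refine ⟨_, ⟨fun d => if #d = b + 1 then 1 else 0, fun n => rfl, rfl, ?_⟩, ?_⟩
  · have h1 : ∀ d : Finset ℕ, |(if #d = b + 1 then (1:ℝ) else 0)| = (fun m => if m = b + 1 then (1:ℝ) else 0) #d := by
      intro d; simp only; split_ifs <;> simp
    simp only [h1]
    rw [Finset.sum_powerset_apply_card (fun m => if m = b + 1 then (1:ℝ) else 0)]
    simp only [nsmul_eq_mul, mul_ite, mul_one, mul_zero, sum_ite_eq', mem_range]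
    split_ifs
    · have h1 := Nat.choose_le_pow (#P) (b+1)
      have h2 : #P ^ (b+1) ≤ (#P + 1) ^ (b+1) := Nat.pow_le_pow_left (by omega) _
      exact_mod_cast h1.trans h2
    · positivity
  · rw [le_div_iff₀ (by positivity), sum_mul]
    calc _ ≤ ∑ d ∈ P.powerset, ∏ p ∈ d, (64 * (1 / (p:ℝ))) := by
          refine sum_le_sum fun d _ => ?_
          rw [prod_mul_distrib, prod_const]
          have : (0:ℝ) ≤ ∏ p ∈ d, (1 / (p:ℝ)) := prod_nonneg fun _ _ => by positivity
          beta_reduce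
          split_ifs with h
          · rw [h]; linarith
          · simp only [zero_mul]; positivity
      _ = ∏ p ∈ P, (1 + 64 * (1 / (p:ℝ))) := by rw [prod_one_add]
      _ ≤ ∏ p ∈ P, rexp (64 * (1 / (p:ℝ))) := by
          refine prod_le_prod (fun _ _ => by positivity) fun p _ => ?_
          linarith [Real.add_one_le_exp (64 * (1 / (p:ℝ)))]
      _ = rexp (64 * ∑ p ∈ P, (1 / (p:ℝ))) := by rw [← exp_sum, mul_sum]
      _ ≤ rexp (256 * 1) := exp_le_exp.2 (by linarith)
      _ = rexp 1 ^ 256 := by rw [← Real.exp_nat_mul]; norm_num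
      _ ≤ 3 ^ 256 := by
          have := Real.exp_one_lt_d9
          exact pow_le_pow_left₀ (exp_pos _).le (by linarith) _

end SepPow

/-! ### The fundamental lemma of the sieve -/

namespace SepPow
open Finset Real

/-- The union of the first `j` blocks. -/
def Pset (j : ℕ) : Finset ℕ := (range j).biUnion blk

lemma Pset_succ (j : ℕ) : Pset (j + 1) = Pset j ∪ blk j := by
  unfold Pset
  rw [range_add_one, biUnion_insert, union_comm]

lemma Pset_eq (k : ℕ) : Pset (k + 1) = primesIn 0 (2 ^ 2 ^ k) := by
  induction k with
  | zero => rw [primesIn_zero_zero, Pset_succ]; simp [Pset]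
  | succ k ih => rw [primesIn_zero_succ, Pset_succ, ih]

lemma Pset_prime {j p : ℕ} (h : p ∈ Pset j) : p.Prime := by
  unfold Pset at h
  rw [mem_biUnion] at h
  obtain ⟨i, _, hi⟩ := h
  exact blk_prime hi

lemma Pset_disjoint (j : ℕ) : Disjoint (Pset j) (blk j) := by
  cases j with
  | zero => simp [Pset]
  | succ k => rw [Pset_eq]; exact primesIn_disjoint _ _ _

lemma blk_card (i : ℕ) : #(blk i) + 1 ≤ 2 ^ 2 ^ i := by
  have h : blk i ⊆ Ioc 1 (2 ^ 2 ^ i) := fun p hp =>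
    mem_Ioc.2 ⟨(blk_prime hp).one_lt, blk_le hp⟩
  have h2 := card_le_card h
  rw [Nat.card_Ioc] at h2
  have : 0 < 2 ^ 2 ^ i := by positivity
  omega

lemma ind_union (P Q : Finset ℕ) (n : ℕ) : ind (P ∪ Q) n = ind P n * ind Q n := by
  unfold ind
  by_cases h1 : ∀ p ∈ P, ¬ p ∣ n
  · by_cases h2 : ∀ p ∈ Q, ¬ p ∣ n
    · rw [if_pos h1, if_pos h2, if_pos, mul_one]
      intro p hp
      rcases mem_union.1 hp with h | h
      · exact h1 p h
      · exact h2 p h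
    · rw [if_neg h2, if_neg, mul_zero]
      exact fun h => h2 fun p hp => h p (mem_union_right _ hp)
  · rw [if_neg h1, if_neg, zero_mul]
    exact fun h => h1 fun p hp => h p (mem_union_left _ hp)

lemma prod_one_sub_pos (P : Finset ℕ) (hP : ∀ p ∈ P, Nat.Prime p) :
    0 < ∏ p ∈ P, (1 - 1 / (p:ℝ)) := by
  refine prod_pos fun p hp => ?_
  have h2 : (1:ℝ) < p := by exact_mod_cast (hP p hp).one_lt
  have : 1 / (p:ℝ) < 1 := by rw [div_lt_one (by linarith)]; exact h2
  linarith

/-- Exponent controlling the coefficient mass after `j` blocks. -/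
def EE (B j : ℕ) : ℕ := ∑ i ∈ range j, 2 ^ i * (2 * (B - i) + 1)

/-- Relative sieve error after `j` blocks. -/
noncomputable def eps (B j : ℕ) : ℝ := ∑ i ∈ range j, 256 * (3 ^ 256 / 64 ^ (2 * (B - i) + 1))

/-- The Brun–Hooley sieve: the indicator of integers free of primes of the first `j` blocks lies between
`w - D` and `w`.  The upper function `w` is the product of the truncations `Ub` over the blocks, with
truncation level `2 (B - i)` at block `i`, and `D` telescopes the error of replacing one factor at a
time; its density is a tiny multiple of that of `w`. -/
lemma brun_hooley (B j : ℕ) : ∃ (w D : ℕ → ℝ) (δw δD : ℝ),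
    Rep (Pset j) w δw (2 ^ EE B j) ∧ Rep (Pset j) D δD (j * 2 ^ EE B j) ∧
    (∀ n, ind (Pset j) n ≤ w n) ∧ (∀ n, w n - D n ≤ ind (Pset j) n) ∧
    δD ≤ eps B j * δw := by
  induction j with
  | zero =>
    refine ⟨fun _ => 1, fun _ => 0, 1, 0, ⟨fun _ => 1, ?_, ?_, ?_⟩, ⟨fun _ => 0, ?_, ?_, ?_⟩, ?_, ?_, ?_⟩
    · intro n; simp [Pset, filter_singleton]
    all_goals simp [Pset, EE, eps, ind]
  | succ j ih =>
    obtain ⟨w, D, δw, δD, hw, hD, h1, h2, h3⟩ := ih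
    have hPp : ∀ p ∈ Pset j, Nat.Prime p := fun p hp => Pset_prime hp
    have hbp : ∀ p ∈ blk j, Nat.Prime p := fun p hp => blk_prime hp
    set b := 2 * (B - j) with hb
    have hbe : Even b := even_two_mul _
    obtain ⟨δU, hU⟩ := rep_Ub (blk j) b
    obtain ⟨δT, hT, hTδ⟩ := rep_Tb (blk j) b (blk_sum j)
    have hUb := fun n => Ub_bounds (blk j) b n hbe
    have hδw : 0 ≤ δw := (prod_one_sub_pos _ hPp).le.trans ((rep_ind (Pset j)).mono hPp hPp hw h1)
    have hδU : 1 / 256 ≤ δU := (prod_one_sub_ge _ hbp (blk_sum j)).trans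
      ((rep_ind (blk j)).mono hbp hbp hU fun n => (hUb n).1)
    have hdis := Pset_disjoint j
    have hw' := Rep.mul hdis hw hU (by positivity)
    have hD1 := Rep.mul hdis hD hU (by positivity)
    have hD2 := Rep.mul hdis hw hT (by positivity)
    have hD' := hD1.add hD2
    have hmass : (((#(blk j) + 1 : ℕ):ℝ)) ^ (b + 1) ≤ 2 ^ (2 ^ j * (b + 1)) := by
      rw [pow_mul]
      refine pow_le_pow_left₀ (by positivity) ?_ _
      exact_mod_cast blk_card j
    have hE : EE B (j+1) = EE B j + 2 ^ j * (b + 1) := by rw [EE, EE, sum_range_succ]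
    have hrep_mono : ∀ {P : Finset ℕ} {w : ℕ → ℝ} {δ N N' : ℝ}, Rep P w δ N → N ≤ N' → Rep P w δ N' := by
      rintro P w δ N N' ⟨c, q1, q2, q3⟩ hN
      exact ⟨c, q1, q2, q3.trans hN⟩
    refine ⟨fun n => w n * Ub (blk j) b n, fun n => D n * Ub (blk j) b n + w n * Tb (blk j) b n,
      δw * δU, δD * δU + δw * δT, ?_, ?_, ?_, ?_, ?_⟩
    · rw [Pset_succ]
      refine hrep_mono hw' ?_
      rw [hE, pow_add (2:ℝ) (EE B j)]
      exact mul_le_mul_of_nonneg_left hmass (by positivity)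
    · rw [Pset_succ]
      refine hrep_mono hD' ?_
      rw [hE, pow_add (2:ℝ) (EE B j)]
      have := mul_le_mul_of_nonneg_left hmass (show (0:ℝ) ≤ (j + 1) * 2 ^ EE B j by positivity)
      push_cast at this ⊢
      linarith
    · intro n
      rw [Pset_succ, ind_union]
      exact mul_le_mul (h1 n) (hUb n).1 (ind_nonneg _ _) ((ind_nonneg _ _).trans (h1 n))
    · intro n
      rw [Pset_succ, ind_union]
      beta_reduce
      have a1 := h1 n
      have a2 := h2 n
      obtain ⟨a3, a4⟩ := hUb n
      have a5 := ind_nonneg (blk j) n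
      have a6 := Tb_nonneg (blk j) b n
      have a7 := ind_nonneg (Pset j) n
      have c1 : (w n - D n) * Ub (blk j) b n ≤ ind (Pset j) n * Ub (blk j) b n :=
        mul_le_mul_of_nonneg_right a2 (a5.trans a3)
      have c2 : ind (Pset j) n * Ub (blk j) b n ≤ ind (Pset j) n * (ind (blk j) n + Tb (blk j) b n) :=
        mul_le_mul_of_nonneg_left (by linarith) a7
      have c3 : ind (Pset j) n * Tb (blk j) b n ≤ w n * Tb (blk j) b n :=
        mul_le_mul_of_nonneg_right a1 a6
      nlinarith
    · have he : eps B (j+1) = eps B j + 256 * (3 ^ 256 / 64 ^ (b + 1)) := by rw [eps, eps, sum_range_succ]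
      rw [he]
      set t : ℝ := 3 ^ 256 / 64 ^ (b + 1)
      have ht : 0 ≤ t := by positivity
      have c1 : δD * δU ≤ eps B j * δw * δU := mul_le_mul_of_nonneg_right h3 (by linarith)
      have c2 : δw * δT ≤ δw * t := mul_le_mul_of_nonneg_left hTδ hδw
      have c3 : δw * t * (1/256) ≤ δw * t * δU := mul_le_mul_of_nonneg_left hδU (by positivity)
      nlinarith

lemma EE_le (k : ℕ) : EE (400 + k) (k + 1) + (2 * 400 + 2 * k + 5) ≤ 2 ^ k * 1606 := by
  induction k with
  | zero => simp [EE]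
  | succ k ih =>
    have : EE (400 + (k + 1)) (k + 1 + 1) = 2 * EE (400 + k) (k + 1) + (2 * (400 + k + 1) + 1) := by
      unfold EE
      rw [sum_range_succ', mul_sum]
      congr 1
      · refine sum_congr rfl fun i _ => ?_
        rw [show 400 + (k + 1) - (i + 1) = 400 + k - i by omega, pow_succ]; ring
      · simp; ring
    rw [this, pow_succ]
    omega

lemma eps_le (k : ℕ) : eps (400 + k) (k + 1) ≤ 1 / 2 ^ 4000 := by
  have key : eps (400 + k) (k + 1) ≤
      2 * (256 * (3 ^ 256 / 64 ^ 801)) - 256 * (3 ^ 256 / 64 ^ (2 * (400 + k) + 1)) := by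
    induction k with
    | zero =>
      rw [eps, sum_range_one]
      simp only [Nat.sub_zero, add_zero]
      exact le_of_eq (by ring)
    | succ k ih =>
      have : eps (400 + (k + 1)) (k + 1 + 1) = eps (400 + k) (k + 1)
          + 256 * (3 ^ 256 / 64 ^ (2 * (400 + (k + 1)) + 1)) := by
        unfold eps
        rw [sum_range_succ']
        congr 1
        refine sum_congr rfl fun i _ => ?_
        rw [show 400 + (k + 1) - (i + 1) = 400 + k - i by omega]
      rw [this]
      have h2 : (3:ℝ) ^ 256 / 64 ^ (2 * (400 + k) + 1) = 4096 * (3 ^ 256 / 64 ^ (2 * (400 + (k + 1)) + 1)) := by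
        rw [show 2 * (400 + (k + 1)) + 1 = (2 * (400 + k) + 1) + 2 by ring, pow_add _ (2 * (400 + k) + 1) 2]
        field_simp; norm_num
      rw [h2] at ih
      have : (0:ℝ) ≤ 3 ^ 256 / 64 ^ (2 * (400 + (k + 1)) + 1) := by positivity
      linarith
  have h0 : (0:ℝ) ≤ 256 * (3 ^ 256 / 64 ^ (2 * (400 + k) + 1)) := by positivity
  have h1 : (2:ℝ) * (256 * (3 ^ 256 / 64 ^ 801)) ≤ 1 / 2 ^ 4000 := by
    have : (3:ℝ) ^ 256 ≤ 4 ^ 256 := pow_le_pow_left₀ (by norm_num) (by norm_num) _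
    calc (2:ℝ) * (256 * (3 ^ 256 / 64 ^ 801)) ≤ 2 * (256 * (4 ^ 256 / 64 ^ 801)) := by gcongr
      _ = 2 ^ 521 / 2 ^ 4806 := by
        rw [show (4:ℝ) = 2 ^ 2 by norm_num, show (64:ℝ) = 2 ^ 6 by norm_num, ← pow_mul, ← pow_mul]
        rw [show (2:ℝ) ^ 521 = 512 * 2 ^ (2 * 256) by
          rw [show 521 = 9 + 2 * 256 by norm_num, pow_add]; norm_num]
        rw [show 6 * 801 = 4806 by norm_num]
        generalize (2:ℝ) ^ 4806 = x
        generalize (2:ℝ) ^ (2 * 256) = y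
        ring
      _ ≤ 1 / 2 ^ 4000 := by
        rw [div_le_div_iff₀ (by positivity) (by positivity), ← pow_add, one_mul]
        exact pow_le_pow_right₀ (by norm_num) (by norm_num)
  linarith

/-- The sieving limit `z = 2^(2^k)`. -/
def zz (k : ℕ) : ℕ := 2 ^ 2 ^ k

/-- The indicator of integers without prime factors `≤ zz k`. -/
noncomputable def rgh (k n : ℕ) : ℝ := ind (primesIn 0 (zz k)) n

/-- The fundamental lemma of the sieve: in every interval the integers without prime factors `≤ z` have
density `δ ≪ 1 / log z`, with relative error `2^(-4000)` and absolute error `z^1608`. -/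
theorem fundamental_lemma (k : ℕ) : ∃ δ : ℝ, 0 < δ ∧ δ ≤ 2 / log (zz k) ∧
    ∀ Y H : ℕ, |∑ n ∈ Ioc Y (Y + H), rgh k n - δ * H| ≤ δ * H / 2 ^ 4000 + (zz k : ℝ) ^ 1608 := by
  obtain ⟨w, D, δw, δD, hw, hD, h1, h2, h3⟩ := brun_hooley (400 + k) (k + 1)
  have hPp : ∀ p ∈ Pset (k+1), Nat.Prime p := fun p hp => Pset_prime hp
  have hI := rep_ind (Pset (k+1))
  have hpos := prod_one_sub_pos _ hPp
  have hδw : 0 < δw := hpos.trans_le (hI.mono hPp hPp hw h1)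
  have hz2 : 2 ≤ zz k := by
    unfold zz
    calc 2 = 2 ^ 1 := by norm_num
      _ ≤ 2 ^ 2 ^ k := Nat.pow_le_pow_right (by norm_num) Nat.one_le_two_pow
  have hV := prod_le_inv_log (zz k) hz2
  have hsub := (hw.add hD.neg).mono hPp hPp hI (fun n => by linarith [h2 n])
  rw [Pset_eq] at hsub
  have heps := eps_le k
  have h4000 : (1:ℝ) / 2 ^ 4000 ≤ 1 / 2 := by
    apply one_div_le_one_div_of_le (by norm_num)
    exact le_self_pow₀ (by norm_num) (by norm_num)
  have hδD : δD ≤ 1 / 2 ^ 4000 * δw := h3.trans (mul_le_mul_of_nonneg_right heps hδw.le)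
  refine ⟨δw, hδw, ?_, fun Y H => ?_⟩
  · have : δw * (1 / 2) ≤ 1 / log (zz k) := by
      have : 1 / 2 ^ 4000 * δw ≤ 1 / 2 * δw := mul_le_mul_of_nonneg_right h4000 hδw.le
      unfold zz at hV ⊢
      linarith
    have e : (2:ℝ) / log (zz k) = 2 * (1 / log (zz k)) := by ring
    rw [e]; linarith
  · have c1 := hw.count hPp Y H
    have c2 := hD.count hPp Y H
    have s1 : ∑ n ∈ Ioc Y (Y + H), rgh k n ≤ ∑ n ∈ Ioc Y (Y + H), w n := by
      refine sum_le_sum fun n _ => ?_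
      have := h1 n
      rwa [Pset_eq] at this
    have s2 : ∑ n ∈ Ioc Y (Y + H), w n - ∑ n ∈ Ioc Y (Y + H), D n ≤ ∑ n ∈ Ioc Y (Y + H), rgh k n := by
      rw [← sum_sub_distrib]
      refine sum_le_sum fun n _ => ?_
      have := h2 n
      rwa [Pset_eq] at this
    have hmass : (2:ℝ) ^ EE (400 + k) (k + 1) + ((k + 1 : ℕ):ℝ) * 2 ^ EE (400 + k) (k + 1) ≤ (zz k : ℝ) ^ 1608 := by
      have hE := EE_le k
      have hk : k + 2 ≤ 2 ^ (k + 2) := Nat.lt_two_pow_self.le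
      have : (2 ^ EE (400 + k) (k + 1) + (k + 1) * 2 ^ EE (400 + k) (k + 1) : ℕ) ≤ (zz k) ^ 1608 := by
        calc _ = (k + 2) * 2 ^ EE (400 + k) (k + 1) := by ring
          _ ≤ 2 ^ (k + 2) * 2 ^ EE (400 + k) (k + 1) := Nat.mul_le_mul_right _ hk
          _ = 2 ^ (k + 2 + EE (400 + k) (k + 1)) := by rw [pow_add 2 (k+2)]
          _ ≤ 2 ^ (2 ^ k * 1608) := Nat.pow_le_pow_right (by norm_num) (by omega)
          _ = _ := by rw [zz, pow_mul]
      exact_mod_cast this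
    have hH : (0:ℝ) ≤ H := Nat.cast_nonneg H
    have c3 : H * δD ≤ δw * H / 2 ^ 4000 := by
      calc (H:ℝ) * δD ≤ H * (1 / 2 ^ 4000 * δw) := mul_le_mul_of_nonneg_left hδD hH
        _ = _ := by ring
    have c4 : 0 ≤ δw * H / 2 ^ 4000 := by positivity
    have c5 : (0:ℝ) ≤ ((k + 1 : ℕ):ℝ) * 2 ^ EE (400 + k) (k + 1) := by positivity
    rw [abs_le] at c1 c2 ⊢
    constructor <;> linarith [c1.1, c1.2, c2.1, c2.2]

end SepPow

/-! ### Rough integers and the von Mangoldt function -/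

namespace SepPow
open Finset Real
open scoped ArithmeticFunction.vonMangoldt ArithmeticFunction.Moebius

lemma rgh_nonneg (k n : ℕ) : 0 ≤ rgh k n := ind_nonneg _ _

lemma rgh_eq (k n : ℕ) [Decidable (Rough (zz k) n)] : rgh k n = if Rough (zz k) n then 1 else 0 := by
  unfold rgh ind Rough
  congr 1
  apply propext
  constructor
  · intro h p hp hz
    exact h p (mem_primesIn.2 ⟨⟨hp.pos, hz⟩, hp⟩)
  · intro h p hp
    rw [mem_primesIn] at hp
    exact h p hp.2 hp.1.2

lemma rgh_le_one (k n : ℕ) : rgh k n ≤ 1 := by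
  unfold rgh ind; split_ifs <;> norm_num

lemma rgh_mul (k a b : ℕ) : rgh k (a * b) = rgh k a * rgh k b := by
  unfold rgh ind
  by_cases ha : ∀ p ∈ primesIn 0 (zz k), ¬ p ∣ a
  · by_cases hb : ∀ p ∈ primesIn 0 (zz k), ¬ p ∣ b
    · rw [if_pos ha, if_pos hb, if_pos, mul_one]
      intro p hp h
      rcases (mem_primesIn.1 hp).2.dvd_mul.1 h with h | h
      · exact ha p hp h
      · exact hb p hp h
    · rw [if_neg hb, if_neg, mul_zero]
      exact fun h => hb fun p hp h' => h p hp (h'.mul_left _)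
  · rw [if_neg ha, if_neg, zero_mul]
    exact fun h => ha fun p hp h' => h p hp (h'.mul_right _)

/-- Hyperbola rearrangement on the short interval `(Y, Y+H]`. -/
lemma sum_hyp_short (g : ℕ → ℕ → ℝ) (Y H : ℕ) :
    ∑ n ∈ Ioc Y (Y + H), ∑ x ∈ n.divisorsAntidiagonal, g x.1 x.2
      = ∑ d ∈ Ioc 0 (Y + H), ∑ e ∈ Ioc (Y / d) ((Y + H) / d), g d e := by
  have split : ∀ (F : ℕ → ℝ) {a b : ℕ}, a ≤ b →
      ∑ n ∈ Ioc a b, F n = ∑ n ∈ Ioc 0 b, F n - ∑ n ∈ Ioc 0 a, F n := by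
    intro F a b hab
    rw [← sum_Ioc_consecutive F (Nat.zero_le a) hab]; ring
  rw [split _ (Nat.le_add_right Y H), ← sum_hyp, ← sum_hyp]
  have h2 : ∑ d ∈ Ioc 0 Y, ∑ e ∈ Ioc 0 (Y / d), g d e
      = ∑ d ∈ Ioc 0 (Y + H), ∑ e ∈ Ioc 0 (Y / d), g d e := by
    refine sum_subset (Ioc_subset_Ioc_right (Nat.le_add_right _ _)) fun d hd hd' => ?_
    rw [mem_Ioc] at hd hd'
    rw [Nat.div_eq_of_lt (by omega)]; simp
  rw [h2, ← sum_sub_distrib]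
  refine sum_congr rfl fun d _ => ?_
  rw [split (g d) (Nat.div_le_div_right (Nat.le_add_right Y H))]

lemma div_diff (Y H d : ℕ) (hd : 0 < d) :
    |(((Y + H) / d - Y / d : ℕ) : ℝ) - (H:ℝ) / d| ≤ 1 := by
  have hd' : (0:ℝ) < d := by exact_mod_cast hd
  have h1 := Nat.div_add_mod (Y + H) d
  have h2 := Nat.div_add_mod Y d
  have h3 := Nat.mod_lt (Y + H) hd
  have h4 := Nat.mod_lt Y hd
  rw [Nat.cast_sub (Nat.div_le_div_right (Nat.le_add_right _ _))]
  have r1 : (d:ℝ) * ((Y + H) / d : ℕ) + ((Y + H) % d : ℕ) = Y + H := by exact_mod_cast h1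
  have r2 : (d:ℝ) * (Y / d : ℕ) + (Y % d : ℕ) = Y := by exact_mod_cast h2
  have r3 : (((Y + H) % d : ℕ) : ℝ) < d := by exact_mod_cast h3
  have r4 : ((Y % d : ℕ) : ℝ) < d := by exact_mod_cast h4
  have r5 : (0:ℝ) ≤ ((Y + H) % d : ℕ) := by positivity
  have r6 : (0:ℝ) ≤ (Y % d : ℕ) := by positivity
  have e : ((((Y + H) / d : ℕ) : ℝ) - (Y / d : ℕ)) - (H:ℝ) / d
      = (((Y % d : ℕ) : ℝ) - ((Y + H) % d : ℕ)) / d := by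
    field_simp
    linarith
  rw [e, abs_div, abs_of_pos hd', div_le_one hd', abs_le]
  constructor <;> linarith

/-- The von Mangoldt weight of a non-rough prime power, summed against a weight `w`. -/
lemma sum_nonrough_le (k N : ℕ) (w : ℕ → ℝ) (hw : ∀ n, 0 ≤ w n) :
    ∑ n ∈ Ioc 0 N, (1 - rgh k n) * Λ n * w n ≤
      ∑ p ∈ primesIn 0 (zz k), ∑ c ∈ Icc 1 (Nat.log 2 N), log p * w (p ^ c) := by
  classical
  rw [← sum_product']
  set S := primesIn 0 (zz k) ×ˢ Icc 1 (Nat.log 2 N) with hS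
  set I := (Ioc 0 N).filter (fun n => (1 - rgh k n) * Λ n * w n ≠ 0) with hI
  have h0 : ∑ n ∈ Ioc 0 N, (1 - rgh k n) * Λ n * w n = ∑ n ∈ I, (1 - rgh k n) * Λ n * w n :=
    (sum_filter_ne_zero _).symm
  rw [h0]
  have hsurj : ∀ n ∈ I, ∃ x ∈ S, x.1 ^ x.2 = n := by
    intro n hn
    rw [hI, mem_filter, mem_Ioc] at hn
    obtain ⟨⟨hn0, hnN⟩, hne⟩ := hn
    have hΛ : Λ n ≠ 0 := fun h => hne (by rw [h]; ring)
    have hR : rgh k n ≠ 1 := fun h => hne (by rw [h]; ring)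
    rw [ArithmeticFunction.vonMangoldt_ne_zero_iff, isPrimePow_nat_iff] at hΛ
    obtain ⟨p, c, hp, hc, rfl⟩ := hΛ
    refine ⟨(p, c), ?_, rfl⟩
    rw [hS, mem_product, mem_primesIn, mem_Icc]
    rw [rgh_eq] at hR
    have hnr : ¬ Rough (zz k) (p ^ c) := fun h => hR (if_pos h)
    unfold Rough at hnr
    push Not at hnr
    obtain ⟨r, hr, hrz, hrd⟩ := hnr
    have : r = p := (Nat.prime_dvd_prime_iff_eq hr hp).1 (hr.dvd_of_dvd_pow hrd)
    subst this
    refine ⟨⟨⟨hp.pos, hrz⟩, hp⟩, hc, ?_⟩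
    refine Nat.le_log_of_pow_le (by norm_num) (le_trans ?_ hnN)
    exact Nat.pow_le_pow_left hp.two_le c
  choose! φ hφ1 hφ2 using hsurj
  have hinj : Set.InjOn φ I := by
    intro a ha b hb h
    rw [← hφ2 a ha, ← hφ2 b hb, h]
  calc ∑ n ∈ I, (1 - rgh k n) * Λ n * w n
      ≤ ∑ n ∈ I, log ((φ n).1) * w ((φ n).1 ^ (φ n).2) := by
        refine sum_le_sum fun n hn => ?_
        rw [hφ2 n hn]
        refine mul_le_mul_of_nonneg_right ?_ (hw n)
        have hx := hφ1 n hn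
        rw [hS, mem_product, mem_primesIn, mem_Icc] at hx
        have hΛ : Λ n = log ((φ n).1) := by
          conv_lhs => rw [← hφ2 n hn]
          rw [ArithmeticFunction.vonMangoldt_apply_pow (by omega),
            ArithmeticFunction.vonMangoldt_apply_prime hx.1.2]
        rw [← hΛ]
        have := vM_nonneg n
        nlinarith [rgh_nonneg k n]
    _ = ∑ x ∈ I.image φ, log (x.1 : ℕ) * w (x.1 ^ x.2) := by rw [sum_image hinj]
    _ ≤ ∑ x ∈ S, log (x.1 : ℕ) * w (x.1 ^ x.2) := by
        refine sum_le_sum_of_subset_of_nonneg ?_ fun x hx _ => ?_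
        · intro x hx
          rw [mem_image] at hx
          obtain ⟨n, hn, rfl⟩ := hx
          exact hφ1 n hn
        · exact mul_nonneg (log_natCast_nonneg _) (hw _)

lemma zz_two_le (k : ℕ) : 2 ≤ zz k := by
  unfold zz
  calc 2 = 2 ^ 1 := by norm_num
    _ ≤ 2 ^ 2 ^ k := Nat.pow_le_pow_right (by norm_num) Nat.one_le_two_pow

/-- Non-rough prime powers contribute at most `2 log z + 12` to the Mertens sum. -/
lemma nonrough_mertens (k N : ℕ) :
    ∑ n ∈ Ioc 0 N, (1 - rgh k n) * Λ n / n ≤ 2 * log (zz k) + 12 := by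
  have h := sum_nonrough_le k N (fun n => 1 / (n:ℝ)) (fun n => by positivity)
  have e : ∑ n ∈ Ioc 0 N, (1 - rgh k n) * Λ n / n = ∑ n ∈ Ioc 0 N, (1 - rgh k n) * Λ n * (1 / (n:ℝ)) :=
    sum_congr rfl fun n _ => by ring
  rw [e]
  refine h.trans ?_
  have geo : ∀ (x : ℝ) (M : ℕ), 0 ≤ x → x ≤ 1 / 2 → ∑ c ∈ Icc 1 M, x ^ c ≤ 2 * x := by
    intro x M h0 h1
    have : ∑ c ∈ Icc 1 M, x ^ c ≤ 2 * x * (1 - x ^ M) := by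
      induction M with
      | zero => simp
      | succ M ih =>
        rw [sum_Icc_succ_top (by omega)]
        have : 0 ≤ x ^ M := by positivity
        rw [pow_succ]
        nlinarith [mul_nonneg h0 this, mul_nonneg (mul_nonneg h0 this) (sub_nonneg.2 h1)]
    have h2 : 0 ≤ x ^ M := by positivity
    nlinarith
  have hz := zz_two_le k
  have hm := (abs_le.1 (mertens (zz k) (by omega))).2
  calc ∑ p ∈ primesIn 0 (zz k), ∑ c ∈ Icc 1 (Nat.log 2 N), log p * (1 / ((p ^ c : ℕ):ℝ))
      ≤ ∑ p ∈ primesIn 0 (zz k), 2 * (Λ p / p) := by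
        refine sum_le_sum fun p hp => ?_
        rw [mem_primesIn] at hp
        have h2 : (2:ℝ) ≤ p := by exact_mod_cast hp.2.two_le
        have hg := geo (1 / (p:ℝ)) (Nat.log 2 N) (by positivity)
          (one_div_le_one_div_of_le (by norm_num) h2)
        rw [← mul_sum, ArithmeticFunction.vonMangoldt_apply_prime hp.2]
        have : ∑ c ∈ Icc 1 (Nat.log 2 N), 1 / ((p ^ c : ℕ):ℝ) = ∑ c ∈ Icc 1 (Nat.log 2 N), (1 / (p:ℝ)) ^ c :=
          sum_congr rfl fun c _ => by push_cast; rw [one_div_pow]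
        rw [this]
        calc log p * ∑ c ∈ Icc 1 (Nat.log 2 N), (1 / (p:ℝ)) ^ c ≤ log p * (2 * (1 / (p:ℝ))) :=
              mul_le_mul_of_nonneg_left hg (log_natCast_nonneg _)
          _ = _ := by ring
    _ ≤ ∑ p ∈ Ioc 0 (zz k), 2 * (Λ p / p) := by
        refine sum_le_sum_of_subset_of_nonneg ?_ fun p _ _ => ?_
        · exact filter_subset _ _
        · have := vM_nonneg p; positivity
    _ ≤ _ := by rw [← mul_sum]; linarith

lemma log_nat_le (N : ℕ) : (Nat.log 2 N : ℝ) ≤ 2 * log N := by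
  rcases Nat.eq_zero_or_pos N with rfl | hN
  · simp
  have h : ((2:ℝ)) ^ (Nat.log 2 N) ≤ N := by exact_mod_cast Nat.pow_log_le_self 2 hN.ne'
  have h2 := log_le_log (by positivity) h
  rw [log_pow] at h2
  have h3 : (1:ℝ) / 2 ≤ log 2 := by linarith [log_two_gt_d9]
  have : (0:ℝ) ≤ Nat.log 2 N := by positivity
  nlinarith

lemma nonrough_psi (k N : ℕ) :
    ∑ n ∈ Ioc 0 N, (1 - rgh k n) * Λ n ≤ zz k * (2 * log N * log (zz k)) := by
  have h := sum_nonrough_le k N (fun n => 1) (fun n => by positivity)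
  simp only [mul_one] at h
  refine h.trans ?_
  have hz := zz_two_le k
  have hz1 : (1:ℝ) ≤ zz k := by exact_mod_cast (by omega : 1 ≤ zz k)
  have hq : 0 ≤ log (zz k) := log_nonneg hz1
  have hN : 0 ≤ log (N:ℝ) := log_natCast_nonneg N
  calc ∑ p ∈ primesIn 0 (zz k), ∑ c ∈ Icc 1 (Nat.log 2 N), log p
      ≤ ∑ p ∈ primesIn 0 (zz k), (2 * log N * log (zz k)) := by
        refine sum_le_sum fun p hp => ?_
        rw [mem_primesIn] at hp
        rw [sum_const, Nat.card_Icc, nsmul_eq_mul, Nat.add_sub_cancel]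
        refine mul_le_mul (log_nat_le N) ?_ (log_natCast_nonneg _) (by positivity)
        exact log_le_log (by exact_mod_cast hp.2.pos) (by exact_mod_cast hp.1.2)
    _ ≤ _ := by
        rw [sum_const, nsmul_eq_mul]
        refine mul_le_mul_of_nonneg_right ?_ (by positivity)
        have := card_le_card (filter_subset Nat.Prime (Ioc 0 (zz k)))
        rw [Nat.card_Ioc] at this
        exact_mod_cast this

end SepPow

/-! ### Rough factorisations and `Λ₂` on non-rough integers -/

namespace SepPow
open Finset Real
open scoped ArithmeticFunction.vonMangoldt ArithmeticFunction.Moebius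

/-- Integers with a prime factor `≤ z` carry little of the mass of `Λ₂` up to `N`. -/
lemma nonrough_Lam2 (k N : ℕ) :
    ∑ n ∈ Ioc 0 N, (1 - rgh k n) * Lam2 n ≤
      zz k * (2 * log N * log (zz k)) * log N + 12 * N * (2 * log (zz k) + 12) := by
  have hpt : ∀ n ∈ Ioc 0 N, (1 - rgh k n) * Lam2 n ≤ (1 - rgh k n) * Λ n * log N
      + ∑ x ∈ n.divisorsAntidiagonal, 2 * ((1 - rgh k x.1) * Λ x.1 * Λ x.2) := by
    intro n hn
    rw [mem_Ioc] at hn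
    unfold Lam2
    rw [mul_add]
    refine add_le_add ?_ ?_
    · rw [← mul_assoc]
      refine mul_le_mul_of_nonneg_left ?_ ?_
      · exact log_le_log (by exact_mod_cast hn.1) (by exact_mod_cast hn.2)
      · exact mul_nonneg (by linarith [rgh_le_one k n]) (vM_nonneg n)
    · have hsym : ∑ x ∈ n.divisorsAntidiagonal, (1 - rgh k x.2) * Λ x.1 * Λ x.2
          = ∑ x ∈ n.divisorsAntidiagonal, (1 - rgh k x.1) * Λ x.1 * Λ x.2 := by
        rw [← Nat.map_swap_divisorsAntidiagonal, sum_map]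
        refine sum_congr (by rw [Nat.map_swap_divisorsAntidiagonal]) fun x _ => ?_
        simp; ring
      rw [← mul_sum, two_mul]
      nth_rewrite 2 [← hsym]
      rw [← sum_add_distrib, mul_sum]
      refine sum_le_sum fun x hx => ?_
      rw [← (Nat.mem_divisorsAntidiagonal.1 hx).1, rgh_mul]
      have h1 := rgh_nonneg k x.1
      have h2 := rgh_nonneg k x.2
      have h3 := rgh_le_one k x.1
      have h4 := rgh_le_one k x.2
      have h5 : 0 ≤ Λ x.1 * Λ x.2 := mul_nonneg (vM_nonneg _) (vM_nonneg _)
      have h6 : 1 - rgh k x.1 * rgh k x.2 ≤ (1 - rgh k x.1) + (1 - rgh k x.2) := by nlinarith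
      nlinarith [mul_le_mul_of_nonneg_right h6 h5]
  refine (sum_le_sum hpt).trans ?_
  rw [sum_add_distrib]
  refine add_le_add ?_ ?_
  · rw [← sum_mul]
    exact mul_le_mul_of_nonneg_right (nonrough_psi k N) (log_natCast_nonneg _)
  · rw [← sum_hyp (fun a b => 2 * ((1 - rgh k a) * Λ a * Λ b))]
    have hm := nonrough_mertens k N
    calc ∑ d ∈ Ioc 0 N, ∑ e ∈ Ioc 0 (N / d), 2 * ((1 - rgh k d) * Λ d * Λ e)
        ≤ ∑ d ∈ Ioc 0 N, 12 * N * ((1 - rgh k d) * Λ d / d) := by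
          refine sum_le_sum fun d hd => ?_
          rw [mem_Ioc] at hd
          have hd0 : (0:ℝ) < d := by exact_mod_cast hd.1
          have e1 : ∑ e ∈ Ioc 0 (N / d), 2 * ((1 - rgh k d) * Λ d * Λ e)
              = 2 * ((1 - rgh k d) * Λ d) * psi (N / d) := by
            rw [psi, mul_sum]; exact sum_congr rfl fun e _ => by ring
          rw [e1]
          have hp := psi_le (N / d)
          have hc : ((N / d : ℕ) : ℝ) ≤ N / d := Nat.cast_div_le
          have h0 : 0 ≤ (1 - rgh k d) * Λ d :=
            mul_nonneg (by linarith [rgh_le_one k d]) (vM_nonneg d)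
          calc 2 * ((1 - rgh k d) * Λ d) * psi (N / d)
              ≤ 2 * ((1 - rgh k d) * Λ d) * (6 * (N / d)) :=
                mul_le_mul_of_nonneg_left (by linarith) (by positivity)
            _ = _ := by ring
      _ ≤ _ := by
          rw [← mul_sum]
          exact mul_le_mul_of_nonneg_left hm (by positivity)

/-- Double sum of rough factorisations `de = n` with `e ≤ E`. -/
lemma tail_count (k : ℕ) (δ : ℝ) (hδ0 : 0 < δ) (hδ1 : δ ≤ 2 / log (zz k)) (hδ2 : δ ≤ 1)
    (hFL : ∀ Y H : ℕ, |∑ n ∈ Ioc Y (Y + H), rgh k n - δ * H| ≤ δ * H / 2 ^ 4000 + (zz k : ℝ) ^ 1608)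
    (Y H E : ℕ) (hE : E ≤ zz k ^ 4096) :
    ∑ n ∈ Ioc Y (Y + H), ∑ x ∈ n.divisorsAntidiagonal,
        (if x.2 ≤ E then rgh k x.1 * rgh k x.2 else 0)
      ≤ 2 * H * (2 / log (zz k)) * 256 ^ 12 + E * (2 + (zz k : ℝ) ^ 1608) := by
  have hq : 0 ≤ 2 / log (zz k : ℝ) := hδ0.le.trans hδ1
  have e1 : ∑ n ∈ Ioc Y (Y + H), ∑ x ∈ n.divisorsAntidiagonal,
        (if x.2 ≤ E then rgh k x.1 * rgh k x.2 else 0)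
      = ∑ n ∈ Ioc Y (Y + H), ∑ x ∈ n.divisorsAntidiagonal,
        (if x.1 ≤ E then rgh k x.2 * rgh k x.1 else 0) := by
    refine sum_congr rfl fun n _ => ?_
    rw [← Nat.map_swap_divisorsAntidiagonal, sum_map]
    refine sum_congr (by rw [Nat.map_swap_divisorsAntidiagonal]) fun x _ => ?_
    rfl
  rw [e1, sum_hyp_short (fun a b => if a ≤ E then rgh k b * rgh k a else 0)]
  have hpt : ∀ d ∈ Ioc 0 (Y + H), ∑ e ∈ Ioc (Y / d) ((Y + H) / d), (if d ≤ E then rgh k e * rgh k d else 0)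
      ≤ if d ≤ E then 2 * H * (2 / log (zz k)) * (rgh k d * (1 / d)) + (2 + (zz k : ℝ) ^ 1608) else 0 := by
    intro d hd
    rw [mem_Ioc] at hd
    by_cases hdE : d ≤ E
    · simp only [hdE, if_true]
      rw [← sum_mul]
      have hle : Y / d ≤ (Y + H) / d := Nat.div_le_div_right (Nat.le_add_right _ _)
      have h1 := (abs_le.1 (hFL (Y / d) ((Y + H) / d - Y / d))).2
      rw [Nat.add_sub_cancel' hle] at h1
      have h2 := (abs_le.1 (div_diff Y H d hd.1)).2
      set G : ℝ := (((Y + H) / d - Y / d : ℕ) : ℝ) with hG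
      have hG0 : 0 ≤ G := by positivity
      have h3 : δ * G / 2 ^ 4000 ≤ δ * G := div_le_self (by positivity) (one_le_pow₀ (by norm_num))
      have h4 : 0 ≤ ∑ e ∈ Ioc (Y / d) ((Y + H) / d), rgh k e := sum_nonneg fun _ _ => rgh_nonneg _ _
      have h5 : δ * G ≤ (2 / log (zz k)) * (H / d) + 1 := by
        have a1 : δ * G ≤ δ * (H / d + 1) := mul_le_mul_of_nonneg_left (by linarith) hδ0.le
        have a2 : δ * (H / d) ≤ (2 / log (zz k)) * (H / d) :=
          mul_le_mul_of_nonneg_right hδ1 (by positivity)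
        linarith
      have h6 := rgh_nonneg k d
      have h7 := rgh_le_one k d
      have hz : (0:ℝ) ≤ (zz k : ℝ) ^ 1608 := by positivity
      calc (∑ e ∈ Ioc (Y / d) ((Y + H) / d), rgh k e) * rgh k d
          ≤ (2 * ((2 / log (zz k)) * (H / d)) + (2 + (zz k : ℝ) ^ 1608)) * rgh k d :=
            mul_le_mul_of_nonneg_right (by linarith) h6
        _ ≤ 2 * ((2 / log (zz k)) * (H / d)) * rgh k d + (2 + (zz k : ℝ) ^ 1608) := by
            rw [add_mul]; gcongr; exact mul_le_of_le_one_right (by positivity) h7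
        _ = _ := by ring
    · simp [hdE]
  refine (sum_le_sum hpt).trans ?_
  rw [← sum_filter, sum_add_distrib, ← mul_sum, sum_const, nsmul_eq_mul]
  refine add_le_add (mul_le_mul_of_nonneg_left ?_ (by positivity)) (mul_le_mul_of_nonneg_right ?_ (by positivity))
  · classical
    have h1 : ∑ d ∈ (Ioc 0 (Y + H)).filter (· ≤ E), rgh k d * (1 / (d:ℝ))
        = ∑ d ∈ ((Ioc 0 (Y + H)).filter (· ≤ E)).filter (Rough (zz k)), 1 / (d:ℝ) := by
      rw [sum_filter (Rough (zz k))]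
      refine sum_congr rfl fun d _ => ?_
      rw [rgh_eq]; split_ifs <;> simp
    rw [h1]
    refine sum_rough_inv k 12 _ fun e he => ?_
    rw [mem_filter, mem_filter, mem_Ioc] at he
    refine ⟨by omega, he.1.2.trans (hE.trans (le_of_eq ?_)), he.2⟩
    rw [zz, ← pow_mul, pow_add 2 k]
    norm_num
  · have : (Ioc 0 (Y + H)).filter (· ≤ E) ⊆ Ioc 0 E := by
      intro d hd
      rw [mem_filter, mem_Ioc] at hd
      exact mem_Ioc.2 ⟨hd.1.1, hd.2⟩
    have := card_le_card this
    rw [Nat.card_Ioc] at this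
    exact_mod_cast this

end SepPow

/-! ### Splitting the rough divisor sum -/

namespace SepPow
open Finset Real
open scoped ArithmeticFunction.vonMangoldt ArithmeticFunction.Moebius

lemma log_zz (k : ℕ) : log (zz k : ℝ) = 2 ^ k * log 2 := by
  unfold zz
  push_cast
  rw [log_pow]; push_cast; ring

lemma zz_large (k : ℕ) (hk : 20 ≤ k) : (2:ℝ) ^ 1000 ≤ zz k := by
  unfold zz
  push_cast
  refine pow_le_pow_right₀ (by norm_num) ?_
  calc 1000 ≤ 2 ^ 20 := by norm_num
    _ ≤ 2 ^ k := Nat.pow_le_pow_right (by norm_num) hk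

lemma log_zz_large (k : ℕ) (hk : 20 ≤ k) : (2:ℝ) ^ 19 ≤ log (zz k) := by
  rw [log_zz]
  have : (2:ℝ) ^ 20 ≤ 2 ^ k := pow_le_pow_right₀ (by norm_num) hk
  nlinarith [log_two_gt_d9]

lemma log_zz_le (k : ℕ) : log (zz k : ℝ) ≤ zz k := by
  have : (0:ℝ) < zz k := by exact_mod_cast (by have := zz_two_le k; omega : 0 < zz k)
  linarith [log_le_sub_one_of_pos this]

/-- The weighted sum attached to the rough part of `Λ₂` on `(Y, Y+H]`. -/
noncomputable def Ssum (k Y H : ℕ) : ℝ :=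
  ∑ n ∈ Ioc Y (Y + H), rgh k n * (Lam2 n + 2 * (log Y - log n) * Λ n)

lemma Ssum_eq (k Y H : ℕ) (hY : 0 < Y) : Ssum k Y H = ∑ d ∈ Ioc 0 (Y + H),
    ∑ e ∈ Ioc (Y / d) ((Y + H) / d), rgh k d * rgh k e * ((μ d : ℝ) * (log Y - log d) ^ 2) := by
  rw [← sum_hyp_short (fun d e => rgh k d * rgh k e * ((μ d : ℝ) * (log Y - log d) ^ 2))]
  refine sum_congr rfl fun n hn => ?_
  rw [mem_Ioc] at hn
  rw [← sum_moebius_log_div_sq n (by omega) (log Y), ← Nat.sum_divisorsAntidiagonal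
    (fun d _ => (μ d : ℝ) * (log Y - log d) ^ 2), mul_sum]
  refine sum_congr rfl fun x hx => ?_
  rw [← rgh_mul, (Nat.mem_divisorsAntidiagonal.1 hx).1]

/-- The part `d > Y / z^2048` of `Ssum`.  The cofactor `e` is then at most `z^4096`, so that
`log (Y/d) ≪ log z`, and the sieve bounds the number of rough `d` for each rough `e`. -/
lemma tail_bound (k : ℕ) (hk : 20 ≤ k) (δ : ℝ) (hδ0 : 0 < δ) (hδ1 : δ ≤ 2 / log (zz k)) (hδ2 : δ ≤ 1)
    (hFL : ∀ Y H : ℕ, |∑ n ∈ Ioc Y (Y + H), rgh k n - δ * H| ≤ δ * H / 2 ^ 4000 + (zz k : ℝ) ^ 1608)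
    (Y H : ℕ) (hY1 : zz k ^ 8192 ≤ Y) (hHY : H ≤ Y) (hYH : Y ≤ H * zz k ^ 2) :
    |∑ d ∈ Ioc (Y / zz k ^ 2048) (Y + H), ∑ e ∈ Ioc (Y / d) ((Y + H) / d),
      rgh k d * rgh k e * ((μ d : ℝ) * (log Y - log d) ^ 2)| ≤ 2 ^ 121 * log (zz k) * H := by
  have hz2 := zz_two_le k
  set z : ℝ := (zz k : ℝ) with hz
  have hzl : (2:ℝ) ^ 1000 ≤ z := zz_large k hk
  have hz1 : 1 ≤ z := (one_le_pow₀ (by norm_num)).trans hzl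
  set q := log z with hq
  have hq19 : (2:ℝ) ^ 19 ≤ q := log_zz_large k hk
  have hqz : q ≤ z := log_zz_le k
  have hq0 : 0 < q := lt_of_lt_of_le (by positivity) hq19
  have hzpos : 0 < zz k ^ 2048 := by positivity
  have hYpos : 0 < Y := lt_of_lt_of_le (by positivity) hY1
  set E := 2 * zz k ^ 2048 with hE
  have hcount := tail_count k δ hδ0 hδ1 hδ2 hFL Y H E (by
    rw [hE, show 4096 = 2048 + 2048 by norm_num, pow_add]
    refine Nat.mul_le_mul_right _ (hz2.trans (Nat.le_self_pow (by norm_num) _)))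
  rw [sum_hyp_short (fun a b => if b ≤ E then rgh k a * rgh k b else 0)] at hcount
  have hlarge : 2 ^ 23 * q * (z ^ 2048 * (2 + z ^ 1608)) ≤ H := by
    have h1 : z ^ 8190 ≤ H := by
      have : zz k ^ 8192 ≤ H * zz k ^ 2 := hY1.trans hYH
      rw [show 8192 = 8190 + 2 by norm_num, pow_add] at this
      have := Nat.le_of_mul_le_mul_right this (by positivity)
      rw [hz]; exact_mod_cast this
    have hz2R : (2:ℝ) ≤ z := by rw [hz]; exact_mod_cast hz2
    have h2 : (2:ℝ) ^ 23 ≤ z := le_trans (pow_le_pow_right₀ (by norm_num) (by norm_num)) hzl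
    have h3 : 2 ≤ z ^ 1608 := by
      have : z ≤ z ^ 1608 := le_self_pow₀ hz1 (by norm_num)
      exact hz2R.trans this
    have h4 : 2 + z ^ 1608 ≤ z * z ^ 1608 := by
      calc 2 + z ^ 1608 ≤ z ^ 1608 + z ^ 1608 := by gcongr
        _ = 2 * z ^ 1608 := by ring
        _ ≤ z * z ^ 1608 := by gcongr
    calc 2 ^ 23 * q * (z ^ 2048 * (2 + z ^ 1608)) ≤ z * z * (z ^ 2048 * (z * z ^ 1608)) := by gcongr
      _ = z ^ 3659 := by rw [← pow_succ', ← pow_add, ← sq, ← pow_add]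
      _ ≤ z ^ 8190 := pow_le_pow_right₀ hz1 (by norm_num)
      _ ≤ H := h1
  calc |∑ d ∈ Ioc (Y / zz k ^ 2048) (Y + H), ∑ e ∈ Ioc (Y / d) ((Y + H) / d),
        rgh k d * rgh k e * ((μ d : ℝ) * (log Y - log d) ^ 2)|
      ≤ ∑ d ∈ Ioc (Y / zz k ^ 2048) (Y + H), ∑ e ∈ Ioc (Y / d) ((Y + H) / d),
        (2048 * q) ^ 2 * (if e ≤ E then rgh k d * rgh k e else 0) := by
        refine (abs_sum_le_sum_abs _ _).trans (sum_le_sum fun d hd => ?_)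
        refine (abs_sum_le_sum_abs _ _).trans (sum_le_sum fun e he => ?_)
        rw [mem_Ioc] at hd he
        have hd1 : Y < d * zz k ^ 2048 := (Nat.div_lt_iff_lt_mul hzpos).1 hd.1
        have hdpos : 0 < d := lt_of_le_of_lt (Nat.zero_le _) hd.1
        have hed : e * d ≤ Y + H := (Nat.le_div_iff_mul_le hdpos).1 he.2
        have heE : e ≤ E := by
          by_contra hcon
          push Not at hcon
          have : E * d < e * d := Nat.mul_lt_mul_of_pos_right hcon hdpos
          rw [hE] at this
          nlinarith
        rw [if_pos heE, abs_mul, abs_of_nonneg (mul_nonneg (rgh_nonneg k d) (rgh_nonneg k e)), mul_comm]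
        refine mul_le_mul_of_nonneg_right ?_ (mul_nonneg (rgh_nonneg k d) (rgh_nonneg k e))
        rw [abs_mul, abs_of_nonneg (sq_nonneg (log (Y:ℝ) - log d))]
        have hμ := abs_moebius_le d
        have hlog : |log (Y:ℝ) - log d| ≤ 2048 * q := by
          have hdR : (0:ℝ) < d := by exact_mod_cast hdpos
          have hYR : (0:ℝ) < Y := by exact_mod_cast hYpos
          rw [abs_le]
          constructor
          · have : log (d:ℝ) ≤ log (2 * Y) := log_le_log hdR (by
              have : d ≤ 2 * Y := by omega
              exact_mod_cast this)
            rw [log_mul (by norm_num) hYR.ne'] at this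
            have : log 2 ≤ 1 := by linarith [log_two_lt_d9]
            nlinarith
          · have : log (Y:ℝ) ≤ log (d * z ^ 2048) := log_le_log hYR (by
              rw [hz]; exact_mod_cast hd1.le)
            rw [log_mul hdR.ne' (by positivity), log_pow] at this
            push_cast at this
            linarith
        calc |(μ d:ℝ)| * (log (Y:ℝ) - log d) ^ 2 ≤ 1 * (2048 * q) ^ 2 := by
              refine mul_le_mul hμ ?_ (sq_nonneg _) (by norm_num)
              exact sq_le_sq' (abs_le.1 hlog).1 (abs_le.1 hlog).2
          _ = _ := one_mul _
    _ ≤ ∑ d ∈ Ioc 0 (Y + H), ∑ e ∈ Ioc (Y / d) ((Y + H) / d),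
        (2048 * q) ^ 2 * (if e ≤ E then rgh k d * rgh k e else 0) := by
        refine sum_le_sum_of_subset_of_nonneg (Ioc_subset_Ioc_left (Nat.zero_le _)) fun d _ _ => ?_
        refine sum_nonneg fun e _ => mul_nonneg (sq_nonneg _) ?_
        split_ifs
        · exact mul_nonneg (rgh_nonneg k d) (rgh_nonneg k e)
        · exact le_rfl
    _ ≤ (2048 * q) ^ 2 * (2 * H * (2 / q) * 256 ^ 12 + E * (2 + z ^ 1608)) := by
        simp only [← mul_sum]
        exact mul_le_mul_of_nonneg_left hcount (sq_nonneg _)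
    _ = 2 ^ 120 * q * H + q * (2 ^ 23 * q * (z ^ 2048 * (2 + z ^ 1608))) := by
        rw [hE]; push_cast
        rw [← hz]
        generalize z ^ 2048 = A
        generalize z ^ 1608 = B
        field_simp
        ring
    _ ≤ 2 ^ 120 * q * H + q * H := by gcongr
    _ ≤ 2 ^ 121 * q * H := by
        have : 0 ≤ q * H := by positivity
        nlinarith

/-- The part `d ≤ D` of `Ssum`: the sieve counts the rough `e` in `(Y/d, (Y+H)/d]` asymptotically, which
makes this part proportional to `H`.  The parameters `ε`, `W` are the relative and absolute errors of the
sieve, `q` stands for `log z`, and `A` bounds the reciprocal sum of rough integers. -/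
lemma head_bound (k Y H D : ℕ) (δ ε W q A : ℝ) (hδ0 : 0 < δ) (hq0 : 0 < q) (hδ1 : δ ≤ 2 / q) (hδ2 : δ ≤ 1)
    (hε0 : 0 ≤ ε) (hε1 : ε ≤ 1) (hW : 0 ≤ W) (hA : 0 ≤ A)
    (hFL : ∀ Y H : ℕ, |∑ n ∈ Ioc Y (Y + H), rgh k n - δ * H| ≤ ε * (δ * H) + W)
    (hY0 : 0 < Y) (hlogY : log Y ≤ 2 ^ 202 * q) (hDY : D ≤ Y)
    (hrough : ∑ d ∈ Ioc 0 D, rgh k d * (1 / (d:ℝ)) ≤ A) (hεA : 2 ^ 405 * (ε * A) ≤ 1)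
    (hDW : D * (2 ^ 404 * q * (2 + W)) ≤ H) :
    |∑ d ∈ Ioc 0 D, ∑ e ∈ Ioc (Y / d) ((Y + H) / d),
      rgh k d * rgh k e * ((μ d : ℝ) * (log Y - log d) ^ 2)
      - H * (δ * ∑ d ∈ Ioc 0 D, rgh k d * ((μ d : ℝ) * (log Y - log d) ^ 2) / d)|
      ≤ 2 * q * H := by
  have hYR : (1:ℝ) ≤ Y := by exact_mod_cast hY0
  have hlogY0 : 0 ≤ log (Y:ℝ) := log_nonneg hYR
  have hH0 : (0:ℝ) ≤ H := Nat.cast_nonneg H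
  rw [mul_sum, mul_sum, ← sum_sub_distrib]
  calc |∑ d ∈ Ioc 0 D, (∑ e ∈ Ioc (Y / d) ((Y + H) / d),
        rgh k d * rgh k e * ((μ d : ℝ) * (log Y - log d) ^ 2)
        - H * (δ * (rgh k d * ((μ d : ℝ) * (log Y - log d) ^ 2) / d)))|
      ≤ ∑ d ∈ Ioc 0 D, ((log Y) ^ 2 * (ε * δ * H) * (rgh k d * (1 / d))
          + (log Y) ^ 2 * (2 + W)) := by
        refine (abs_sum_le_sum_abs _ _).trans (sum_le_sum fun d hd => ?_)
        rw [mem_Ioc] at hd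
        have hdR : (1:ℝ) ≤ d := by exact_mod_cast hd.1
        have hle : Y / d ≤ (Y + H) / d := Nat.div_le_div_right (Nat.le_add_right _ _)
        have h1 := hFL (Y / d) ((Y + H) / d - Y / d)
        rw [Nat.add_sub_cancel' hle] at h1
        have h2 := div_diff Y H d hd.1
        set G : ℝ := (((Y + H) / d - Y / d : ℕ) : ℝ) with hG
        have e1 : ∑ e ∈ Ioc (Y / d) ((Y + H) / d),
            rgh k d * rgh k e * ((μ d : ℝ) * (log Y - log d) ^ 2)
            - H * (δ * (rgh k d * ((μ d : ℝ) * (log Y - log d) ^ 2) / d))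
            = (rgh k d * ((μ d : ℝ) * (log Y - log d) ^ 2)) *
              (∑ e ∈ Ioc (Y / d) ((Y + H) / d), rgh k e - δ * (H / d)) := by
          rw [mul_sub, mul_sum]
          congr 1
          · exact sum_congr rfl fun e _ => by ring
          · ring
        have hr0 := rgh_nonneg k d
        have hr1 := rgh_le_one k d
        have e2 : |rgh k d * ((μ d : ℝ) * (log Y - log d) ^ 2)| ≤ (log Y) ^ 2 * rgh k d := by
          rw [abs_mul, abs_of_nonneg hr0, abs_mul, abs_of_nonneg (sq_nonneg (log (Y:ℝ) - log d)), mul_comm]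
          refine mul_le_mul_of_nonneg_right ?_ hr0
          have hμ := abs_moebius_le d
          have a1 : 0 ≤ log (d:ℝ) := log_nonneg hdR
          have a2 : log (d:ℝ) ≤ log Y := log_le_log (by linarith) (by exact_mod_cast hd.2.trans hDY)
          calc |(μ d:ℝ)| * (log (Y:ℝ) - log d) ^ 2 ≤ 1 * (log Y) ^ 2 := by
                refine mul_le_mul hμ ?_ (sq_nonneg _) (by norm_num)
                exact pow_le_pow_left₀ (by linarith) (by linarith) 2
            _ = _ := one_mul _
        have e3 : |∑ e ∈ Ioc (Y / d) ((Y + H) / d), rgh k e - δ * (H / d)| ≤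
            ε * δ * (H / d) + (2 + W) := by
          have b1 : |δ * G - δ * (H / d)| ≤ 1 := by
            rw [← mul_sub, abs_mul, abs_of_pos hδ0]
            nlinarith [abs_nonneg (G - H / d)]
          have b2 : ε * (δ * G) ≤ ε * δ * (H / d) + 1 := by
            have c1 : G ≤ H / d + 1 := by linarith [(abs_le.1 h2).2]
            have c2 : 0 ≤ ε * δ := by positivity
            have c3 : ε * δ ≤ 1 := by nlinarith
            have c4 := mul_le_mul_of_nonneg_left c1 c2
            linarith
          calc _ ≤ |∑ e ∈ Ioc (Y / d) ((Y + H) / d), rgh k e - δ * G| + |δ * G - δ * (H / d)| :=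
                abs_sub_le _ _ _
            _ ≤ _ := by linarith
        rw [e1, abs_mul]
        calc _ ≤ ((log Y) ^ 2 * rgh k d) * (ε * δ * (H / d) + (2 + W)) :=
              mul_le_mul e2 e3 (abs_nonneg _) (by positivity)
          _ ≤ (log Y) ^ 2 * rgh k d * (ε * δ * (H / d)) + (log Y) ^ 2 * 1 * (2 + W) := by
              rw [mul_add]; gcongr
          _ = _ := by ring
    _ ≤ (log Y) ^ 2 * (ε * δ * H) * A + D * ((log Y) ^ 2 * (2 + W)) := by
        rw [sum_add_distrib, ← mul_sum, sum_const, nsmul_eq_mul, Nat.card_Ioc, Nat.sub_zero]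
        gcongr
    _ ≤ q * H + q * H := by
        have hsq : (log (Y:ℝ)) ^ 2 ≤ 2 ^ 404 * q ^ 2 := by
          calc (log (Y:ℝ)) ^ 2 ≤ (2 ^ 202 * q) ^ 2 := pow_le_pow_left₀ hlogY0 hlogY 2
            _ = _ := by rw [mul_pow, ← pow_mul]
        refine add_le_add ?_ ?_
        · calc (log (Y:ℝ)) ^ 2 * (ε * δ * H) * A
              ≤ (2 ^ 404 * q ^ 2) * (ε * (2 / q) * H) * A := by gcongr
            _ = q * H * (2 ^ 405 * (ε * A)) := by
                rw [show (2:ℝ) ^ 405 = 2 ^ 404 * 2 from pow_succ _ _]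
                generalize (2:ℝ) ^ 404 = B
                field_simp
            _ ≤ q * H * 1 := mul_le_mul_of_nonneg_left hεA (by positivity)
            _ = q * H := mul_one _
        · calc (D:ℝ) * ((log Y) ^ 2 * (2 + W)) ≤ D * ((2 ^ 404 * q ^ 2) * (2 + W)) := by gcongr
            _ = q * (D * (2 ^ 404 * q * (2 + W))) := by ring
            _ ≤ q * H := by gcongr
    _ = 2 * q * H := by ring

end SepPow

/-! ### Selberg's formula for rough integers in short intervals -/

namespace SepPow
open Finset Real
open scoped ArithmeticFunction.vonMangoldt ArithmeticFunction.Moebius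

lemma log_le_of_le_tower (k Y : ℕ) (hY0 : 0 < Y) (hY2 : Y ≤ 2 ^ 2 ^ (k + 202)) :
    log (Y:ℝ) ≤ 2 ^ 202 * log (zz k) := by
  have h1 : (Y:ℝ) ≤ (2:ℝ) ^ 2 ^ (k + 202) := by
    have := (Nat.cast_le (α := ℝ)).2 hY2
    rwa [Nat.cast_pow, Nat.cast_ofNat] at this
  have := log_le_log (by exact_mod_cast hY0) h1
  rw [log_pow, Nat.cast_pow, pow_add, Nat.cast_ofNat] at this
  rw [log_zz]
  linarith

/-- The accumulated sieve remainder over `d ≤ D` is at most `H` when `D * z ^ 2046 ≤ H`. -/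
lemma cutoff_absorb (z q D H : ℝ) (hz2 : 2 ≤ z) (h404 : 2 ^ 404 ≤ z) (hq0 : 0 ≤ q) (hqz : q ≤ z)
    (hD : 0 ≤ D) (hDH : D * z ^ 2046 ≤ H) : D * (2 ^ 404 * q * (2 + z ^ 1608)) ≤ H := by
  have hz1 : (1:ℝ) ≤ z := one_le_two.trans hz2
  have hz0 : (0:ℝ) ≤ z := zero_le_one.trans hz1
  have h1611 : z ^ 1608 * z ^ 3 ≤ z ^ 2046 := by
    rw [← pow_add]; exact pow_le_pow_right₀ hz1 (by norm_num)
  have hP2 : (2:ℝ) ≤ z ^ 1608 := hz2.trans (le_self_pow₀ hz1 (by norm_num))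
  refine le_trans (mul_le_mul_of_nonneg_left ?_ hD) hDH
  refine le_trans ?_ h1611
  generalize z ^ 1608 = P at *
  have hP0 : 0 ≤ P := le_trans (by norm_num) hP2
  clear hDH h1611
  have h4 : 2 + P ≤ z * P :=
    calc 2 + P ≤ P + P := add_le_add_left hP2 P
      _ = 2 * P := by ring
      _ ≤ z * P := mul_le_mul_of_nonneg_right hz2 hP0
  have h5 : (2:ℝ) ^ 404 * q ≤ z * z := mul_le_mul h404 hqz hq0 hz0
  calc (2:ℝ) ^ 404 * q * (2 + P) ≤ z * z * (z * P) :=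
        mul_le_mul h5 h4 (add_nonneg (by norm_num) hP0) (mul_nonneg hz0 hz0)
    _ = P * z ^ 3 := by ring

/-- Up to an admissible error, `Ssum k Y H` is proportional to the length `H`, with a factor `M` independent
of `H`. -/
lemma S_short (k : ℕ) (hk : 20 ≤ k) (Y : ℕ) (hY1 : zz k ^ 8192 ≤ Y) (hY2 : Y ≤ 2 ^ 2 ^ (k + 202)) :
    ∃ M : ℝ, ∀ H : ℕ, H ≤ Y → Y ≤ H * zz k ^ 2 →
      |Ssum k Y H - H * M| ≤ 2 ^ 122 * log (zz k) * H := by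
  classical
  obtain ⟨δ, hδ0, hδ1, hFL⟩ := fundamental_lemma k
  have hq19 := log_zz_large k hk
  have hqz := log_zz_le k
  have hq0 : 0 < log (zz k : ℝ) := lt_of_lt_of_le (by positivity) hq19
  have hδ2 : δ ≤ 1 := hδ1.trans (by
    rw [div_le_one hq0]
    exact le_trans (by norm_num) hq19)
  have hYpos : 0 < Y := lt_of_lt_of_le (pow_pos (by have := zz_two_le k; omega) _) hY1
  have hlogY := log_le_of_le_tower k Y hYpos hY2
  set D := Y / zz k ^ 2048 with hD
  have hDz : D * zz k ^ 2048 ≤ Y := Nat.div_mul_le_self _ _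
  have hDY : D ≤ Y := Nat.div_le_self _ _
  have hrough : ∑ d ∈ Ioc 0 D, rgh k d * (1 / (d:ℝ)) ≤ 256 ^ 202 := by
    have h1 : ∑ d ∈ Ioc 0 D, rgh k d * (1 / (d:ℝ))
        = ∑ d ∈ (Ioc 0 D).filter (Rough (zz k)), 1 / (d:ℝ) := by
      rw [sum_filter]
      refine sum_congr rfl fun d _ => ?_
      rw [rgh_eq]; split_ifs <;> simp
    rw [h1]
    refine sum_rough_inv k 202 _ fun e he => ?_
    rw [mem_filter, mem_Ioc] at he
    exact ⟨he.1.1.ne', (he.1.2.trans hDY).trans hY2, he.2⟩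
  have hεA : (2:ℝ) ^ 405 * (1 / 2 ^ 4000 * 256 ^ 202) ≤ 1 := by
    rw [show (256:ℝ) = 2 ^ 8 by norm_num, ← pow_mul, one_div_mul_eq_div, ← mul_div_assoc,
      div_le_one (pow_pos (by norm_num) _), ← pow_add]
    exact pow_le_pow_right₀ (by norm_num) (by norm_num)
  refine ⟨δ * ∑ d ∈ Ioc 0 D, rgh k d * ((μ d : ℝ) * (log Y - log d) ^ 2) / d, fun H hHY hYH => ?_⟩
  have htail := tail_bound k hk δ hδ0 hδ1 hδ2 hFL Y H hY1 hHY hYH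
  have hDW : (D:ℝ) * (2 ^ 404 * log (zz k) * (2 + (zz k : ℝ) ^ 1608)) ≤ H := by
    have hz2 : (2:ℝ) ≤ zz k := by exact_mod_cast zz_two_le k
    have hzl := zz_large k hk
    have hDH : (D:ℝ) * (zz k : ℝ) ^ 2046 ≤ H := by
      have : D * zz k ^ 2048 ≤ H * zz k ^ 2 := hDz.trans hYH
      rw [show 2048 = 2046 + 2 by norm_num, pow_add, ← mul_assoc] at this
      have := Nat.le_of_mul_le_mul_right this (pow_pos (by have := zz_two_le k; omega) _)
      exact_mod_cast this
    have h404 : (2:ℝ) ^ 404 ≤ zz k := le_trans (pow_le_pow_right₀ (by norm_num) (by norm_num)) hzl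
    exact cutoff_absorb _ _ _ _ hz2 h404 hq0.le hqz (Nat.cast_nonneg D) hDH
  have hFL' : ∀ Y H : ℕ, |∑ n ∈ Ioc Y (Y + H), rgh k n - δ * H|
      ≤ 1 / 2 ^ 4000 * (δ * H) + (zz k : ℝ) ^ 1608 := by
    intro Y H
    have := hFL Y H
    rwa [div_eq_inv_mul, ← one_div] at this
  have hhead := head_bound k Y H D δ (1 / 2 ^ 4000) ((zz k : ℝ) ^ 1608) (log (zz k)) (256 ^ 202)
    hδ0 hq0 hδ1 hδ2 (one_div_nonneg.2 (pow_nonneg (by norm_num) _))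
    ((div_le_one (pow_pos (by norm_num) _)).2 (one_le_pow₀ (by norm_num)))
    (pow_nonneg (Nat.cast_nonneg _) _) (pow_nonneg (by norm_num) _) hFL' hYpos hlogY hDY hrough hεA hDW
  rw [Ssum_eq k Y H hYpos, ← sum_Ioc_consecutive _ (Nat.zero_le D) (hDY.trans (Nat.le_add_right Y H))]
  rw [← hD] at htail
  clear hFL hFL' hY2 hεA hrough hDW hDz hY1
  have hqH : 0 ≤ log (zz k : ℝ) * H := by positivity
  rw [abs_le] at *
  constructor <;> nlinarith [hhead.1, hhead.2, htail.1, htail.2]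

/-- The rough part of `Λ₂` summed over `(Y, Y+H]`. -/
noncomputable def Tsum (k Y H : ℕ) : ℝ := ∑ n ∈ Ioc Y (Y + H), rgh k n * Lam2 n

/-- The two weights differ by `2 log(n/Y) Λ(n)`, and `Λ(n) ≤ Λ₂(n) / log n`. -/
lemma Tsum_Ssum (k Y H : ℕ) (hY : 1 < Y) (hHY : H ≤ Y) :
    |Tsum k Y H - Ssum k Y H| ≤ 2 / log Y * Tsum k Y H := by
  unfold Tsum Ssum
  rw [← sum_sub_distrib, mul_sum]
  refine (abs_sum_le_sum_abs _ _).trans (sum_le_sum fun n hn => ?_)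
  rw [mem_Ioc] at hn
  have hYR : (1:ℝ) < Y := by exact_mod_cast hY
  have hL : 0 < log (Y:ℝ) := log_pos hYR
  have hnY : (Y:ℝ) ≤ n := by exact_mod_cast hn.1.le
  have hl1 : log (Y:ℝ) ≤ log n := log_le_log (by linarith) hnY
  have hl2 : log (n:ℝ) ≤ log 2 + log Y := by
    rw [← log_mul (by norm_num) (by linarith)]
    exact log_le_log (by linarith) (by exact_mod_cast (by omega : n ≤ 2 * Y))
  have hlog2 := log_two_lt_d9
  have hΛ := vM_nonneg n
  have hR := rgh_nonneg k n
  have hΛ2 : Λ n * log Y ≤ Lam2 n := by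
    unfold Lam2
    have : 0 ≤ ∑ x ∈ n.divisorsAntidiagonal, Λ x.1 * Λ x.2 :=
      sum_nonneg fun x _ => mul_nonneg (vM_nonneg _) (vM_nonneg _)
    nlinarith [mul_le_mul_of_nonneg_left hl1 hΛ]
  have e : rgh k n * Lam2 n - rgh k n * (Lam2 n + 2 * (log Y - log n) * Λ n)
      = rgh k n * (2 * (log n - log Y) * Λ n) := by ring
  rw [e, abs_of_nonneg (mul_nonneg hR (mul_nonneg (by linarith) hΛ))]
  calc rgh k n * (2 * (log n - log Y) * Λ n) ≤ rgh k n * (2 * 1 * Λ n) := by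
        gcongr; linarith
    _ = 2 / log Y * (rgh k n * (Λ n * log Y)) := by field_simp
    _ ≤ 2 / log Y * (rgh k n * Lam2 n) := by gcongr

/-- On the long interval `(Y, 2Y]` the classical formula `selberg` applies. -/
lemma Tsum_long (k : ℕ) (hk : 20 ≤ k) (Y : ℕ) (hY1 : zz k ^ 8192 ≤ Y)
    (hlogY : log (Y:ℝ) ≤ 2 ^ 202 * log (zz k)) :
    |Tsum k Y Y - 2 * Y * log Y| ≤ 64 * log (zz k) * Y := by
  have hq19 := log_zz_large k hk
  have hqz := log_zz_le k
  have hzl := zz_large k hk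
  have hz2 : (2:ℝ) ≤ zz k := by exact_mod_cast zz_two_le k
  have hz1 : (1:ℝ) ≤ zz k := one_le_two.trans hz2
  have hYpos : 0 < Y := lt_of_lt_of_le (pow_pos (by have := zz_two_le k; omega) _) hY1
  have hYR : (1:ℝ) ≤ Y := by exact_mod_cast hYpos
  have h5 : 2 * (zz k : ℝ) ^ 5 ≤ Y := by
    have : (zz k : ℝ) ^ 8192 ≤ Y := by exact_mod_cast hY1
    refine le_trans ?_ this
    calc 2 * (zz k : ℝ) ^ 5 ≤ zz k * (zz k : ℝ) ^ 5 := by gcongr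
      _ = (zz k : ℝ) ^ 6 := by ring
      _ ≤ _ := pow_le_pow_right₀ hz1 (by norm_num)
  have h203 : (2:ℝ) ^ 203 ≤ zz k := le_trans (pow_le_pow_right₀ (by norm_num) (by norm_num)) hzl
  have s1 := selberg Y hYpos
  have s2 := selberg (2 * Y) (by omega)
  have s3 := nonrough_Lam2 k (2 * Y)
  push_cast at s2 s3
  have hl2Y : log (2 * (Y:ℝ)) = log 2 + log Y := log_mul (by norm_num) (by linarith)
  have hlog2 := log_two_lt_d9
  have hlog2' := log_two_gt_d9
  have hq0 : 0 < log (zz k : ℝ) := lt_of_lt_of_le (by positivity) hq19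
  have hY0 : 0 ≤ log (Y:ℝ) := log_nonneg hYR
  have hl2 : log (2 * (Y:ℝ)) ≤ (zz k : ℝ) ^ 2 := by
    have : log (2 * (Y:ℝ)) ≤ 2 ^ 203 * log (zz k) := by
      rw [hl2Y]
      have : (1:ℝ) ≤ log (zz k) := le_trans (by norm_num) hq19
      generalize log (zz k : ℝ) = q at *
      linarith
    refine this.trans ?_
    rw [sq]; gcongr
  have hsplit : Tsum k Y Y = ∑ n ∈ Ioc 0 (2 * Y), Lam2 n - ∑ n ∈ Ioc 0 Y, Lam2 n
      - ∑ n ∈ Ioc Y (2 * Y), (1 - rgh k n) * Lam2 n := by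
    rw [← sum_Ioc_consecutive Lam2 (Nat.zero_le Y) (by omega : Y ≤ 2 * Y), add_sub_cancel_left,
      ← sum_sub_distrib, Tsum, ← two_mul]
    exact sum_congr rfl fun n _ => by ring
  have hN0 : 0 ≤ ∑ n ∈ Ioc Y (2 * Y), (1 - rgh k n) * Lam2 n :=
    sum_nonneg fun n _ => mul_nonneg (by linarith [rgh_le_one k n]) (Lam2_nonneg n)
  have hN1 : ∑ n ∈ Ioc Y (2 * Y), (1 - rgh k n) * Lam2 n
      ≤ ∑ n ∈ Ioc 0 (2 * Y), (1 - rgh k n) * Lam2 n :=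
    sum_le_sum_of_subset_of_nonneg (Ioc_subset_Ioc_left (Nat.zero_le _))
      fun n _ _ => mul_nonneg (by linarith [rgh_le_one k n]) (Lam2_nonneg n)
  have h6 : (zz k : ℝ) * (2 * log (2 * (Y:ℝ)) * log (zz k)) * log (2 * (Y:ℝ)) ≤ log (zz k) * Y := by
    have : 0 ≤ log (2 * (Y:ℝ)) := by rw [hl2Y]; linarith
    calc (zz k : ℝ) * (2 * log (2 * (Y:ℝ)) * log (zz k)) * log (2 * (Y:ℝ))
        = log (zz k) * (2 * (zz k * (log (2 * (Y:ℝ)) * log (2 * (Y:ℝ))))) := by ring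
      _ ≤ log (zz k) * (2 * (zz k * ((zz k : ℝ) ^ 2 * (zz k : ℝ) ^ 2))) := by gcongr
      _ = log (zz k) * (2 * (zz k : ℝ) ^ 5) := by ring
      _ ≤ _ := by gcongr
  rw [hl2Y] at s2
  clear hY1 hzl h203 h5 hlogY hl2
  have hqY : (2:ℝ) ^ 19 * Y ≤ log (zz k) * Y := by gcongr
  have hYl : (Y:ℝ) * log 2 ≤ Y := mul_le_of_le_one_right (by linarith) (by linarith)
  have hYl0 : 0 ≤ (Y:ℝ) * log 2 := by positivity
  rw [hsplit]
  rw [abs_le] at s1 s2 ⊢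
  norm_num at hqY
  constructor
  · nlinarith [s1.1, s1.2, s2.1, s2.2]
  · nlinarith [s1.1, s1.2, s2.1, s2.2]

/-- Selberg's symmetry formula for rough integers in short intervals: `S_short` compares `(Y, Y+H]` with
`(Y, 2Y]`, where the main term is known. -/
theorem short_selberg (k : ℕ) (hk : 20 ≤ k) (Y H : ℕ) (hY1 : zz k ^ 8192 ≤ Y)
    (hY2 : Y ≤ 2 ^ 2 ^ (k + 202)) (hHY : H ≤ Y) (hYH : Y ≤ H * zz k ^ 2) :
    |Tsum k Y H - 2 * H * log Y| ≤ 2 ^ 125 * log (zz k) * H := by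
  obtain ⟨M, hM⟩ := S_short k hk Y hY1 hY2
  have hz2 := zz_two_le k
  have hYpos : 0 < Y := lt_of_lt_of_le (pow_pos (by omega) _) hY1
  have hSY := hM Y le_rfl (Nat.le_mul_of_pos_right _ (pow_pos (by omega) _))
  have hSH := hM H hHY hYH
  have hlogY := log_le_of_le_tower k Y hYpos hY2
  have hTY := Tsum_long k hk Y hY1 hlogY
  have hY2' : 1 < Y := lt_of_lt_of_le (by omega)
    ((hz2.trans (Nat.le_self_pow (by norm_num) _)).trans hY1)
  have dY := Tsum_Ssum k Y Y hY2' le_rfl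
  have dH := Tsum_Ssum k Y H hY2' hHY
  have hL : 2 ^ 13 * log (zz k) ≤ log (Y:ℝ) := by
    have : ((zz k : ℝ)) ^ 8192 ≤ Y := by exact_mod_cast hY1
    have := log_le_log (pow_pos (by exact_mod_cast (by omega : 0 < zz k)) _) this
    rw [log_pow] at this
    norm_num at this ⊢
    exact this
  have hq19 := log_zz_large k hk
  have hT0 : 0 ≤ Tsum k Y H := sum_nonneg fun n _ => mul_nonneg (rgh_nonneg k n) (Lam2_nonneg n)
  have hTY0 : 0 ≤ Tsum k Y Y := sum_nonneg fun n _ => mul_nonneg (rgh_nonneg k n) (Lam2_nonneg n)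
  have hYR : (0:ℝ) < Y := by exact_mod_cast hYpos
  have hHR : (0:ℝ) ≤ H := Nat.cast_nonneg H
  clear hY1 hY2 hM hlogY
  generalize Tsum k Y Y = TY at *
  generalize Tsum k Y H = TH at *
  generalize Ssum k Y Y = SY at *
  generalize Ssum k Y H = SH at *
  generalize log (zz k : ℝ) = q at *
  generalize log (Y:ℝ) = L at *
  have hq0 : 0 < q := lt_of_lt_of_le (by positivity) hq19
  have hL0 : 0 < L := lt_of_lt_of_le (by positivity) hL
  -- the long interval determines the constant `M`
  have c1 : |TY - SY| ≤ 6 * Y := by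
    refine dY.trans ?_
    have : TY ≤ 3 * (Y * L) := by
      have := (abs_le.1 hTY).2
      have : q * Y * 2 ^ 13 ≤ Y * L := by nlinarith
      nlinarith
    calc 2 / L * TY ≤ 2 / L * (3 * (Y * L)) := by gcongr
      _ = 6 * Y := by field_simp; norm_num
  have c2 : |M - 2 * L| ≤ 2 ^ 123 * q := by
    have : |(Y:ℝ) * (M - 2 * L)| ≤ Y * (2 ^ 123 * q) := by
      have hqY : (2:ℝ) ^ 19 * Y ≤ q * Y := by gcongr
      rw [abs_le] at *
      constructor <;> nlinarith [hSY.1, hSY.2, hTY.1, hTY.2, c1.1, c1.2]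
    rw [abs_mul, abs_of_pos hYR] at this
    exact le_of_mul_le_mul_left this hYR
  have c3 : |H * M - 2 * H * L| ≤ 2 ^ 123 * q * H := by
    rw [show H * M - 2 * H * L = H * (M - 2 * L) by ring, abs_mul, abs_of_nonneg hHR]
    nlinarith
  have hqH : (2:ℝ) ^ 19 * H ≤ q * H := by gcongr
  have hqL : 2 ^ 13 * (q * H) ≤ L * H := by nlinarith
  have c4 : SH ≤ 2 * H * L + 2 ^ 124 * (q * H) := by
    have := (abs_le.1 hSH).2
    have := (abs_le.1 c3).2
    nlinarith
  have hL4 : 2 / L ≤ 1 / 2 := by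
    rw [div_le_div_iff₀ hL0 (by norm_num)]
    nlinarith
  have c5 : TH ≤ 4 * (H * L) + 2 ^ 125 * (q * H) := by
    have := (abs_le.1 dH).2
    have := mul_le_mul_of_nonneg_right hL4 hT0
    nlinarith
  have c6 : |TH - SH| ≤ 2 ^ 114 * H := by
    refine dH.trans ?_
    have : TH ≤ (H * L) * 2 ^ 113 := by nlinarith
    calc 2 / L * TH ≤ 2 / L * ((H * L) * 2 ^ 113) := by gcongr
      _ = 2 ^ 114 * H := by field_simp
  rw [abs_le] at c6 c3 hSH ⊢
  constructor <;> nlinarith [c6.1, c6.2, c3.1, c3.2, hSH.1, hSH.2]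

end SepPow

/-! ### Functions satisfying a discrete Selberg relation -/

namespace SepPow
open Finset Real

/-- The self-convolution `∑_{i + k = m} α i * α k`. -/
noncomputable def conv (α : ℕ → ℝ) (m : ℕ) : ℝ := ∑ i ∈ range (m + 1), α i * α (m - i)

/-- The discrete form of Selberg's symmetry relation used for the contradiction.  Here `α` is the
normalised mass of the primes in logarithmic cells, `χ = 1 - f` where `f` is a local average of
`α`, and `β` is the normalised mass of `Λ₂`. -/
structure Conv (α χ β : ℕ → ℝ) (ε : ℝ) (J i₀ : ℕ) : Prop where
  eps0 : 0 ≤ ε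
  eps1 : 50000000 * ε < 1
  J1 : 1 ≤ ε * J
  i₀J : 8 * i₀ + 8 ≤ J
  a0 : ∀ i, 0 ≤ α i
  mert : ∀ j ≤ J, |∑ i ∈ range (j + 1), α i - j| ≤ ε * J
  chi : ∀ j ≤ J, |χ j| ≤ 1 + ε
  reg : ∀ j, i₀ ≤ j → j < J → |χ (j + 1) - χ j| ≤ ε
  vol : ∀ j ≤ J, |j * χ j + ∑ i ∈ range (j + 1), α i * χ (j - i)| ≤ ε * J
  blo : ∀ m, i₀ ≤ m → m ≤ J → (m : ℝ) ≤ β m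
  bup : ∀ m, 1 ≤ m → m ≤ J → β m ≤ (m + 1) * α m + conv α m + conv α (m - 1)
  avg : ∀ u v, i₀ ≤ u → u ≤ v → v ≤ J → |∑ i ∈ Ico u v, χ i| ≤ ε * J

namespace Conv

variable {α χ β : ℕ → ℝ} {ε : ℝ} {J i₀ : ℕ}

/-- The defect `1 - |χ| + 2ε`, which is nonnegative. -/
def om (χ : ℕ → ℝ) (ε : ℝ) (j : ℕ) : ℝ := 1 - |χ j| + 2 * ε

lemma om_ge (h : Conv α χ β ε J i₀) (j : ℕ) (hj : j ≤ J) : ε ≤ om χ ε j := by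
  have := h.chi j hj
  unfold om; linarith

lemma om_le (χ : ℕ → ℝ) (ε : ℝ) (j : ℕ) : om χ ε j ≤ 1 + 2 * ε := by
  have := abs_nonneg (χ j)
  unfold om; linarith

lemma asum (h : Conv α χ β ε J i₀) (j : ℕ) (hj : j ≤ J) :
    ∑ i ∈ range (j + 1), α i ≤ (1 + ε) * J := by
  have := (abs_le.1 (h.mert j hj)).2
  have : (j:ℝ) ≤ J := by exact_mod_cast hj
  linarith

/-- Where `|χ j|` is close to `1`, `χ (j - i)` is close to `-χ j` on the support of `α`. -/
lemma E4 (h : Conv α χ β ε J i₀) (j : ℕ) (hj : j ≤ J) :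
    ∑ i ∈ range (j + 1), α i * |χ (j - i) + χ j| ≤ J * (2 * om χ ε j + 6 * ε) := by
  have he0 := h.eps0
  have he1 := h.eps1
  have hjJ : (j:ℝ) ≤ J := by exact_mod_cast hj
  have hJ0 : (0:ℝ) ≤ J := Nat.cast_nonneg _
  obtain ⟨s, hs1, hs2⟩ : ∃ s : ℝ, |s| = 1 ∧ s * χ j = |χ j| := by
    rcases le_total 0 (χ j) with h0 | h0
    · exact ⟨1, by norm_num, by rw [abs_of_nonneg h0]; ring⟩
    · exact ⟨-1, by norm_num, by rw [abs_of_nonpos h0]; ring⟩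
  have hss : s * s = 1 := by rw [← abs_mul_abs_self, hs1]; norm_num
  have hom := h.om_ge j hj
  have hom2 := om_le χ ε j
  have hcj := h.chi j hj
  have hpt : ∀ i ∈ range (j + 1), α i * |χ (j - i) + χ j|
      ≤ s * (α i * χ (j - i)) + (1 + 2 * ε + om χ ε j) * α i := by
    intro i hi
    have hc := h.chi (j - i) ((Nat.sub_le _ _).trans hj)
    have h1 : |χ (j - i) + χ j| = |(s * χ (j - i) + 1) + (s * χ j - 1)| := by
      rw [show (s * χ (j - i) + 1) + (s * χ j - 1) = s * (χ (j - i) + χ j) by ring, abs_mul, hs1,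
        one_mul]
    have h2 : |s * χ (j - i)| ≤ 1 + ε := by rw [abs_mul, hs1, one_mul]; exact hc
    have h3 : |s * χ (j - i) + 1| ≤ s * χ (j - i) + 1 + 2 * ε := by
      rw [abs_le] at *; constructor <;> linarith
    have h4 : |s * χ j - 1| ≤ om χ ε j := by
      rw [hs2]; unfold om; rw [abs_le]; constructor <;> linarith
    have h5 : |χ (j - i) + χ j| ≤ s * χ (j - i) + 1 + 2 * ε + om χ ε j := by
      rw [h1]; exact (abs_add_le _ _).trans (by linarith)
    have := mul_le_mul_of_nonneg_left h5 (h.a0 i)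
    linarith
  refine (sum_le_sum hpt).trans ?_
  rw [sum_add_distrib, ← mul_sum, ← mul_sum]
  have hv := h.vol j hj
  have hm := (abs_le.1 (h.mert j hj)).2
  have h6 : s * ∑ i ∈ range (j + 1), α i * χ (j - i) ≤ ε * J - j * |χ j| := by
    have : |s * (j * χ j + ∑ i ∈ range (j + 1), α i * χ (j - i))| ≤ ε * J := by
      rw [abs_mul, hs1, one_mul]; exact hv
    have := (abs_le.1 this).2
    rw [← hs2]; linarith
  have h7 : (1 + 2 * ε + om χ ε j) * ∑ i ∈ range (j + 1), α i
      ≤ (1 + 2 * ε + om χ ε j) * (j + ε * J) :=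
    mul_le_mul_of_nonneg_left (by linarith) (by linarith)
  have h8 : (1 + 2 * ε + om χ ε j) * (ε * J) ≤ 3 * (ε * J) :=
    mul_le_mul_of_nonneg_right (by linarith) (mul_nonneg he0 hJ0)
  have h9 : (j:ℝ) * om χ ε j ≤ J * om χ ε j := mul_le_mul_of_nonneg_right hjJ (by linarith)
  have h10 : (j:ℝ) * |χ j| = j * (1 + 2 * ε - om χ ε j) := by unfold om; ring
  nlinarith [mul_le_mul_of_nonneg_right hjJ he0]

lemma om_sub (χ : ℕ → ℝ) (ε : ℝ) (i j : ℕ) : om χ ε i ≤ om χ ε j + |χ i + χ j| := by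
  have h1 := abs_sub_abs_le_abs_sub (χ j) (-χ i)
  rw [abs_neg, sub_neg_eq_add, add_comm (χ j)] at h1
  unfold om; linarith

lemma om_sub' (χ : ℕ → ℝ) (ε : ℝ) (i j : ℕ) : om χ ε i ≤ om χ ε j + |χ i - χ j| := by
  have h1 := abs_sub_abs_le_abs_sub (χ j) (χ i)
  rw [abs_sub_comm] at h1
  unfold om; linarith

lemma conv_sum (α g : ℕ → ℝ) (j : ℕ) : ∑ m ∈ range (j + 1), conv α m * g m
    = ∑ i ∈ range (j + 1), α i * ∑ k ∈ range (j - i + 1), α k * g (i + k) := by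
  have := Finset.sum_range_diag_flip (j + 1) (fun i k => α i * (α k * g (i + k)))
  calc ∑ m ∈ range (j + 1), conv α m * g m
      = ∑ m ∈ range (j + 1), ∑ i ∈ range (m + 1), α i * (α (m - i) * g (i + (m - i))) := by
        refine sum_congr rfl fun m _ => ?_
        unfold conv
        rw [sum_mul]
        refine sum_congr rfl fun i hi => ?_
        rw [Nat.add_sub_cancel' (by rw [mem_range] at hi; omega)]; ring
    _ = _ := by
        rw [this]
        refine sum_congr rfl fun i hi => ?_
        rw [mul_sum, show j + 1 - i = j - i + 1 by rw [mem_range] at hi; omega]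

lemma conv_nonneg (h : Conv α χ β ε J i₀) (m : ℕ) : 0 ≤ conv α m :=
  sum_nonneg fun _ _ => mul_nonneg (h.a0 _) (h.a0 _)

lemma conv_total (h : Conv α χ β ε J i₀) (j : ℕ) (hj : j ≤ J) :
    ∑ m ∈ range (j + 1), conv α m ≤ 2 * (J:ℝ) ^ 2 := by
  have he0 := h.eps0
  have he1 := h.eps1
  have h1 := conv_sum α (fun _ => 1) j
  simp only [mul_one] at h1
  rw [h1]
  have hJ0 : (0:ℝ) ≤ J := Nat.cast_nonneg _
  have h2 : ∑ i ∈ range (j + 1), α i * ∑ k ∈ range (j - i + 1), α k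
      ≤ ∑ i ∈ range (j + 1), α i * ((1 + ε) * J) :=
    sum_le_sum fun i _ => mul_le_mul_of_nonneg_left (h.asum _ ((Nat.sub_le _ _).trans hj)) (h.a0 i)
  rw [← sum_mul] at h2
  have h3 := mul_le_mul_of_nonneg_right (h.asum j hj) (by positivity : 0 ≤ (1 + ε) * (J:ℝ))
  have h4 : (1 + ε) * (1 + ε) ≤ 2 := by nlinarith
  nlinarith [mul_le_mul_of_nonneg_right h4 (sq_nonneg (J:ℝ))]

/-- Two steps of `E4`: `χ (j - m)` is close to `χ j` on the support of `conv α`. -/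
lemma E5 (h : Conv α χ β ε J i₀) (j : ℕ) (hj : j ≤ J) :
    ∑ m ∈ range (j + 1), conv α m * |χ (j - m) - χ j| ≤ (J:ℝ) ^ 2 * (8 * om χ ε j + 40 * ε) := by
  have he0 := h.eps0
  have he1 := h.eps1
  have hJ0 : (0:ℝ) ≤ J := Nat.cast_nonneg _
  have hom := h.om_ge j hj
  have hom2 := om_le χ ε j
  rw [conv_sum α (fun m => |χ (j - m) - χ j|)]
  have hpt : ∀ i ∈ range (j + 1),
      α i * ∑ k ∈ range (j - i + 1), α k * |χ (j - (i + k)) - χ j|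
      ≤ J * (2 * om χ ε j + 6 * ε) * α i
        + (J * 2 + (1 + ε) * J) * (α i * |χ (j - i) + χ j|) := by
    intro i hi
    have hji : j - i ≤ J := (Nat.sub_le _ _).trans hj
    have h1 : ∑ k ∈ range (j - i + 1), α k * |χ (j - (i + k)) - χ j|
        ≤ ∑ k ∈ range (j - i + 1), α k * |χ (j - i - k) + χ (j - i)|
          + (∑ k ∈ range (j - i + 1), α k) * |χ (j - i) + χ j| := by
      rw [sum_mul, ← sum_add_distrib]
      refine sum_le_sum fun k _ => ?_
      rw [← mul_add, Nat.sub_sub]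
      refine mul_le_mul_of_nonneg_left ?_ (h.a0 k)
      have := abs_sub (χ (j - (i + k)) + χ (j - i)) (χ (j - i) + χ j)
      calc |χ (j - (i + k)) - χ j|
          = |(χ (j - (i + k)) + χ (j - i)) - (χ (j - i) + χ j)| := by congr 1; ring
        _ ≤ _ := this
    have h2 := h.E4 (j - i) hji
    have h3 := om_sub χ ε (j - i) j
    have h4 := mul_le_mul_of_nonneg_right (h.asum (j - i) hji) (abs_nonneg (χ (j - i) + χ j))
    have h5 : ∑ k ∈ range (j - i + 1), α k * |χ (j - (i + k)) - χ j|
        ≤ J * (2 * om χ ε j + 6 * ε) + (J * 2 + (1 + ε) * J) * |χ (j - i) + χ j| := by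
      nlinarith [mul_le_mul_of_nonneg_left h3 hJ0]
    have := mul_le_mul_of_nonneg_left h5 (h.a0 i)
    linarith
  refine (sum_le_sum hpt).trans ?_
  rw [sum_add_distrib, ← mul_sum, ← mul_sum]
  have a1 := h.asum j hj
  have a2 := h.E4 j hj
  have b1 := mul_le_mul_of_nonneg_left a1 (by positivity : 0 ≤ J * (2 * (ε) + 6 * ε))
  have c1 : 0 ≤ J * (2 * om χ ε j + 6 * ε) := mul_nonneg hJ0 (by linarith)
  have c2 : 0 ≤ J * 2 + (1 + ε) * (J:ℝ) := by positivity
  have d1 := mul_le_mul_of_nonneg_left a1 c1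
  have d2 := mul_le_mul_of_nonneg_left a2 c2
  refine (add_le_add d1 d2).trans ?_
  have e1 : J * (2 * om χ ε j + 6 * ε) * ((1 + ε) * J) +
      (J * 2 + (1 + ε) * J) * (J * (2 * om χ ε j + 6 * ε))
      = (J:ℝ) ^ 2 * ((2 * om χ ε j + 6 * ε) * (4 + 2 * ε)) := by ring
  rw [e1]
  refine mul_le_mul_of_nonneg_left ?_ (sq_nonneg _)
  nlinarith

/-- Integration of a slowly varying nonnegative `g` against `m` through `β ≥ m`. -/
lemma weigh (h : Conv α χ β ε J i₀) (hi₀ : 1 ≤ i₀) (g : ℕ → ℝ) (hg : ∀ m, 0 ≤ g m) (j : ℕ)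
    (hj : j ≤ J)
    (P Q : ℝ) (hP : ∑ m ∈ range (j + 1), α m * g m ≤ J * P)
    (hQ : ∑ m ∈ range (j + 1), conv α m * g m ≤ (J:ℝ) ^ 2 * Q)
    (hreg : ∀ m, m + 1 + i₀ ≤ j → g (m + 1) ≤ g m + 3 * ε)
    (s : Finset ℕ) (hs : ∀ m ∈ s, i₀ ≤ m ∧ m + i₀ ≤ j) :
    ∑ m ∈ s, (m:ℝ) * g m ≤ (J:ℝ) ^ 2 * ((1 + ε) * P + 2 * Q + 6 * ε) := by
  have he0 := h.eps0
  have hJ0 : (0:ℝ) ≤ J := Nat.cast_nonneg _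
  have hpt : ∀ m ∈ s, (m:ℝ) * g m ≤ (1 + ε) * J * (α m * g m) + conv α m * g m
      + conv α (m - 1) * (g (m - 1) + 3 * ε) := by
    intro m hm
    obtain ⟨h1, h2⟩ := hs m hm
    have hmJ : m ≤ J := by omega
    have hmJR : (m:ℝ) ≤ J := by exact_mod_cast hmJ
    have hb : (m:ℝ) ≤ (m + 1) * α m + conv α m + conv α (m - 1) :=
      (h.blo m h1 hmJ).trans (h.bup m (by omega) hmJ)
    have h3 := mul_le_mul_of_nonneg_right hb (hg m)
    have h4 : g m ≤ g (m - 1) + 3 * ε := by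
      have := hreg (m - 1) (by omega)
      rwa [Nat.sub_add_cancel (by omega)] at this
    have h5 := mul_le_mul_of_nonneg_left h4 (h.conv_nonneg (m - 1))
    have h6 : ((m:ℝ) + 1) ≤ (1 + ε) * J := by linarith [h.J1]
    have h7 := mul_le_mul_of_nonneg_right h6 (mul_nonneg (h.a0 m) (hg m))
    nlinarith
  refine (sum_le_sum hpt).trans ?_
  rw [sum_add_distrib, sum_add_distrib, ← mul_sum]
  have hsub : s ⊆ range (j + 1) := fun m hm => mem_range.2 (by have := hs m hm; omega)
  have s1 : ∑ m ∈ s, α m * g m ≤ J * P :=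
    (sum_le_sum_of_subset_of_nonneg hsub fun m _ _ => mul_nonneg (h.a0 m) (hg m)).trans hP
  have s2 : ∑ m ∈ s, conv α m * g m ≤ (J:ℝ) ^ 2 * Q :=
    (sum_le_sum_of_subset_of_nonneg hsub fun m _ _ => mul_nonneg (h.conv_nonneg m) (hg m)).trans hQ
  have s3 : ∑ m ∈ s, conv α (m - 1) * (g (m - 1) + 3 * ε)
      ≤ ∑ m ∈ range (j + 1), conv α m * (g m + 3 * ε) := by
    have hinj : Set.InjOn (fun m => m - 1) (s : Set ℕ) := by
      intro x hx y hy hxy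
      have := hs x hx; have := hs y hy
      simp only at hxy; omega
    rw [← sum_image (f := fun m => conv α m * (g m + 3 * ε)) hinj]
    refine sum_le_sum_of_subset_of_nonneg ?_ fun m _ _ =>
      mul_nonneg (h.conv_nonneg m) (by have := hg m; linarith)
    intro x hx
    obtain ⟨m, hm, rfl⟩ := mem_image.1 hx
    have := hs m hm
    rw [mem_range]; omega
  have s4 : ∑ m ∈ range (j + 1), conv α m * (g m + 3 * ε)
      = ∑ m ∈ range (j + 1), conv α m * g m + 3 * ε * ∑ m ∈ range (j + 1), conv α m := by
    rw [mul_sum, ← sum_add_distrib]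
    exact sum_congr rfl fun m _ => by ring
  have s5 := h.conv_total j hj
  have s6 := mul_le_mul_of_nonneg_left s1 (by positivity : 0 ≤ (1 + ε) * (J:ℝ))
  have s7 := mul_le_mul_of_nonneg_left s5 (by positivity : 0 ≤ 3 * ε)
  nlinarith

end Conv
end SepPow

/-! ### Approximate multiplicativity -/

namespace SepPow
open Finset Real
namespace Conv

variable {α χ β : ℕ → ℝ} {ε : ℝ} {J i₀ : ℕ}

lemma om_J (hJ : 1 - ε ≤ χ J) : om χ ε J ≤ 3 * ε := by
  have := le_abs_self (χ J)
  unfold om; linarith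

/-- If `χ J` is close to `1`, then `|χ|` is close to `1` on average. -/
lemma E8 (h : Conv α χ β ε J i₀) (hi₀ : 1 ≤ i₀) (hJ : 1 - ε ≤ χ J)
    (s : Finset ℕ) (hs : ∀ m ∈ s, i₀ ≤ m ∧ m + i₀ ≤ J) :
    ∑ m ∈ s, (m:ℝ) * om χ ε (J - m) ≤ (J:ℝ) ^ 2 * (170 * ε) := by
  have he0 := h.eps0
  have he1 := h.eps1
  have hJ0 : (0:ℝ) ≤ J := Nat.cast_nonneg _
  have hω := om_J hJ
  have hω0 := h.om_ge J le_rfl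
  have h1 : ∑ m ∈ range (J + 1), α m * om χ ε (J - m) ≤ J * (16 * ε) := by
    have : ∀ m ∈ range (J + 1), α m * om χ ε (J - m)
        ≤ 3 * ε * α m + α m * |χ (J - m) + χ J| := by
      intro m _
      have := mul_le_mul_of_nonneg_left ((om_sub χ ε (J - m) J).trans (add_le_add_left hω _))
        (h.a0 m)
      linarith
    refine (sum_le_sum this).trans ?_
    rw [sum_add_distrib, ← mul_sum]
    have a := h.asum J le_rfl
    have b := h.E4 J le_rfl
    have c := mul_le_mul_of_nonneg_left a (by positivity : 0 ≤ 3 * ε)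
    have d := mul_le_mul_of_nonneg_left hω hJ0
    nlinarith [mul_nonneg hJ0 he0]
  have h2 : ∑ m ∈ range (J + 1), conv α m * om χ ε (J - m) ≤ (J:ℝ) ^ 2 * (70 * ε) := by
    have : ∀ m ∈ range (J + 1), conv α m * om χ ε (J - m)
        ≤ 3 * ε * conv α m + conv α m * |χ (J - m) - χ J| := by
      intro m _
      have := mul_le_mul_of_nonneg_left ((om_sub' χ ε (J - m) J).trans (add_le_add_left hω _))
        (h.conv_nonneg m)
      linarith
    refine (sum_le_sum this).trans ?_
    rw [sum_add_distrib, ← mul_sum]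
    have a := h.conv_total J le_rfl
    have b := h.E5 J le_rfl
    have c := mul_le_mul_of_nonneg_left a (by positivity : 0 ≤ 3 * ε)
    have d := mul_le_mul_of_nonneg_left hω (sq_nonneg (J:ℝ))
    nlinarith [mul_nonneg (sq_nonneg (J:ℝ)) he0]
  -- `weigh` needs global nonnegativity, hence the absolute value
  have hom : ∀ m, |om χ ε (J - m)| = om χ ε (J - m) := fun m =>
    abs_of_nonneg (he0.trans (h.om_ge _ (Nat.sub_le _ _)))
  have h3 := h.weigh hi₀ (fun m => |om χ ε (J - m)|) (fun m => abs_nonneg _) J le_rfl (16 * ε)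
    (70 * ε) (by simpa only [hom] using h1) (by simpa only [hom] using h2) ?_ s hs
  · simp only [hom] at h3
    refine h3.trans (mul_le_mul_of_nonneg_left ?_ (sq_nonneg _))
    nlinarith
  · intro m hm
    simp only [hom]
    have h4 := om_sub' χ ε (J - (m + 1)) (J - m)
    have h5 := h.reg (J - (m + 1)) (by omega) (by omega)
    rw [show J - (m + 1) + 1 = J - m by omega, abs_sub_comm] at h5
    linarith

/-- Multiplicativity of `χ` on average: `χ (j - m)` is close to `χ j * χ (J - m)`. -/
lemma E7 (h : Conv α χ β ε J i₀) (hi₀ : 1 ≤ i₀) (hJ : 1 - ε ≤ χ J) (j : ℕ) (hj : j ≤ J)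
    (s : Finset ℕ) (hs : ∀ m ∈ s, i₀ ≤ m ∧ m + i₀ ≤ j) :
    ∑ m ∈ s, (m:ℝ) * |χ (j - m) - χ j * χ (J - m)|
      ≤ (J:ℝ) ^ 2 * (18 * om χ ε j + 270 * ε) := by
  have he0 := h.eps0
  have he1 := h.eps1
  have hJ0 : (0:ℝ) ≤ J := Nat.cast_nonneg _
  have hω := om_J hJ
  have hω0 := h.om_ge J le_rfl
  have hωj := h.om_ge j hj
  have hωj2 := om_le χ ε j
  have hc := h.chi j hj
  have hJ1 : |1 - χ J| ≤ ε := by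
    have := h.chi J le_rfl
    rw [abs_le] at *; constructor <;> linarith
  have hsub : range (j + 1) ⊆ range (J + 1) := range_mono (by omega)
  have h1 : ∑ m ∈ range (j + 1), α m * |χ (j - m) - χ j * χ (J - m)|
      ≤ J * (2 * om χ ε j + 21 * ε) := by
    have : ∀ m ∈ range (j + 1), α m * |χ (j - m) - χ j * χ (J - m)|
        ≤ α m * |χ (j - m) + χ j| + (1 + ε) * (α m * |χ (J - m) + χ J|) + (1 + ε) * ε * α m := by
      intro m _
      have e1 : χ (j - m) - χ j * χ (J - m) =
          (χ (j - m) + χ j) - χ j * ((χ (J - m) + χ J) + (1 - χ J)) := by ring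
      have e2 : |χ (j - m) - χ j * χ (J - m)| ≤ |χ (j - m) + χ j| +
          (1 + ε) * (|χ (J - m) + χ J| + ε) := by
        rw [e1]
        refine (abs_sub _ _).trans ?_
        rw [abs_mul]
        gcongr
        exact (abs_add_le _ _).trans (by gcongr)
      have := mul_le_mul_of_nonneg_left e2 (h.a0 m)
      linarith
    refine (sum_le_sum this).trans ?_
    rw [sum_add_distrib, sum_add_distrib, ← mul_sum, ← mul_sum]
    have a := h.asum j hj
    have b := h.E4 j hj
    have b2 : ∑ m ∈ range (j + 1), α m * |χ (J - m) + χ J| ≤ J * (12 * ε) := by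
      refine (sum_le_sum_of_subset_of_nonneg hsub fun m _ _ =>
        mul_nonneg (h.a0 m) (abs_nonneg _)).trans ((h.E4 J le_rfl).trans ?_)
      exact mul_le_mul_of_nonneg_left (by linarith) hJ0
    have c := mul_le_mul_of_nonneg_left a (by positivity : 0 ≤ (1 + ε) * ε)
    have d := mul_le_mul_of_nonneg_left b2 (by positivity : 0 ≤ 1 + ε)
    have e : (1 + ε) * ε * ((1 + ε) * J) + (1 + ε) * (J * (12 * ε)) ≤ J * (15 * ε) := by
      have : (1 + ε) * ε * (1 + ε) + (1 + ε) * (12 * ε) ≤ 15 * ε := by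
        have : (1 + ε) * (1 + ε) ≤ 2 := by nlinarith
        nlinarith
      nlinarith
    nlinarith
  have h2 : ∑ m ∈ range (j + 1), conv α m * |χ (j - m) - χ j * χ (J - m)|
      ≤ (J:ℝ) ^ 2 * (8 * om χ ε j + 120 * ε) := by
    have : ∀ m ∈ range (j + 1), conv α m * |χ (j - m) - χ j * χ (J - m)|
        ≤ conv α m * |χ (j - m) - χ j| + (1 + ε) * (conv α m * |χ (J - m) - χ J|)
          + (1 + ε) * ε * conv α m := by
      intro m _
      have e1 : χ (j - m) - χ j * χ (J - m) =
          (χ (j - m) - χ j) - χ j * ((χ (J - m) - χ J) - (1 - χ J)) := by ring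
      have e2 : |χ (j - m) - χ j * χ (J - m)| ≤ |χ (j - m) - χ j| +
          (1 + ε) * (|χ (J - m) - χ J| + ε) := by
        rw [e1]
        refine (abs_sub _ _).trans ?_
        rw [abs_mul]
        gcongr
        exact (abs_sub _ _).trans (by gcongr)
      have := mul_le_mul_of_nonneg_left e2 (h.conv_nonneg m)
      linarith
    refine (sum_le_sum this).trans ?_
    rw [sum_add_distrib, sum_add_distrib, ← mul_sum, ← mul_sum]
    have a := h.conv_total j hj
    have b := h.E5 j hj
    have b2 : ∑ m ∈ range (j + 1), conv α m * |χ (J - m) - χ J| ≤ (J:ℝ) ^ 2 * (64 * ε) := by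
      refine (sum_le_sum_of_subset_of_nonneg hsub fun m _ _ =>
        mul_nonneg (h.conv_nonneg m) (abs_nonneg _)).trans ((h.E5 J le_rfl).trans ?_)
      exact mul_le_mul_of_nonneg_left (by linarith) (sq_nonneg _)
    have c := mul_le_mul_of_nonneg_left a (by positivity : 0 ≤ (1 + ε) * ε)
    have d := mul_le_mul_of_nonneg_left b2 (by positivity : 0 ≤ 1 + ε)
    have e : (1 + ε) * ε * (2 * (J:ℝ) ^ 2) + (1 + ε) * ((J:ℝ) ^ 2 * (64 * ε))
        ≤ (J:ℝ) ^ 2 * (80 * ε) := by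
      have : (1 + ε) * ε * 2 + (1 + ε) * (64 * ε) ≤ 80 * ε := by nlinarith
      nlinarith [mul_le_mul_of_nonneg_left this (sq_nonneg (J:ℝ))]
    nlinarith
  have h3 := h.weigh hi₀ (fun m => |χ (j - m) - χ j * χ (J - m)|) (fun m => abs_nonneg _) j hj
    _ _ h1 h2 ?_ s hs
  · refine h3.trans (mul_le_mul_of_nonneg_left ?_ (sq_nonneg _))
    nlinarith
  · intro m hm
    have h5 := h.reg (J - (m + 1)) (by omega) (by omega)
    have h6 := h.reg (j - (m + 1)) (by omega) (by omega)
    rw [show J - (m + 1) + 1 = J - m by omega] at h5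
    rw [show j - (m + 1) + 1 = j - m by omega] at h6
    have e1 : χ (j - (m + 1)) - χ j * χ (J - (m + 1))
        = (χ (j - m) - χ j * χ (J - m))
          + (χ j * (χ (J - m) - χ (J - (m + 1))) - (χ (j - m) - χ (j - (m + 1)))) := by ring
    rw [e1]
    refine (abs_add_le _ _).trans (add_le_add_right ?_ _)
    refine (abs_sub _ _).trans ?_
    rw [abs_mul]
    have := mul_le_mul hc h5 (abs_nonneg _) (by linarith)
    nlinarith

end Conv
end SepPow

/-! ### Incompatibility with mean zero -/

namespace SepPow
open Finset Real
namespace Conv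

variable {α χ β : ℕ → ℝ} {ε : ℝ} {J i₀ : ℕ}

/-- On average over the middle range `|χ|` is close to `1`; this is `E8` with the weight `m ≥ J/8` removed. -/
lemma sum_om (h : Conv α χ β ε J i₀) (hi₀ : 1 ≤ i₀) (hJ : 1 - ε ≤ χ J) (r : ℕ) (hr : J = 8 * r)
    (T : Finset ℕ) (hT : ∀ j ∈ T, r ≤ j ∧ j ≤ 7 * r) :
    ∑ j ∈ T, om χ ε j ≤ 10880 * ε * r := by
  have h8 := h.i₀J
  have hr0 : (0:ℝ) < r := by exact_mod_cast (by omega : 0 < r)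
  have hinj : Set.InjOn (fun j => J - j) (T : Set ℕ) := by
    intro x hx y hy hxy
    have := hT x hx; have := hT y hy
    simp only at hxy; omega
  have h1 := h.E8 hi₀ hJ (T.image fun j => J - j) (by
    intro m hm
    obtain ⟨j, hj, rfl⟩ := mem_image.1 hm
    have := hT j hj
    omega)
  rw [sum_image hinj] at h1
  have h2 : ∑ j ∈ T, (r:ℝ) * om χ ε j ≤ ∑ j ∈ T, ((J - j : ℕ) : ℝ) * om χ ε (J - (J - j)) := by
    refine sum_le_sum fun j hj => ?_
    have := hT j hj
    rw [Nat.sub_sub_self (by omega)]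
    refine mul_le_mul_of_nonneg_right (by exact_mod_cast (by omega : r ≤ J - j)) ?_
    exact h.eps0.trans (h.om_ge j (by omega))
  rw [← mul_sum] at h2
  have h3 := h2.trans h1
  rw [hr] at h3
  push_cast at h3
  refine le_of_mul_le_mul_left (h3.trans (le_of_eq ?_)) hr0
  ring

/-- `E7` summed over `j`, with the weight `m ≥ J/8` removed and the defects controlled by `sum_om`. -/
lemma sum_mult (h : Conv α χ β ε J i₀) (hi₀ : 1 ≤ i₀) (hJ : 1 - ε ≤ χ J) (r : ℕ) (hr : J = 8 * r)
    (T : Finset ℕ) (hT : ∀ j ∈ T, 3 * r ≤ j ∧ j ≤ 6 * r) (hc : T.card ≤ 3 * r) :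
    ∑ j ∈ T, ∑ m ∈ Ico r (2 * r), |χ (j - m) - χ j * χ (J - m)| ≤ 12585600 * ε * r ^ 2 := by
  have h8 := h.i₀J
  have he0 := h.eps0
  have hr0 : (0:ℝ) < r := by exact_mod_cast (by omega : 0 < r)
  have h1 : ∀ j ∈ T, ∑ m ∈ Ico r (2 * r), |χ (j - m) - χ j * χ (J - m)|
      ≤ 64 * r * (18 * om χ ε j + 270 * ε) := by
    intro j hj
    have := hT j hj
    have h2 := h.E7 hi₀ hJ j (by omega) (Ico r (2 * r)) (by
      intro m hm; rw [mem_Ico] at hm; omega)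
    have h3 : ∑ m ∈ Ico r (2 * r), (r:ℝ) * |χ (j - m) - χ j * χ (J - m)|
        ≤ ∑ m ∈ Ico r (2 * r), (m:ℝ) * |χ (j - m) - χ j * χ (J - m)| := by
      refine sum_le_sum fun m hm => mul_le_mul_of_nonneg_right ?_ (abs_nonneg _)
      exact_mod_cast (mem_Ico.1 hm).1
    rw [← mul_sum] at h3
    have h4 := h3.trans h2
    rw [hr] at h4 ⊢
    push_cast at h4
    refine le_of_mul_le_mul_left (h4.trans (le_of_eq ?_)) hr0
    ring
  refine (sum_le_sum h1).trans ?_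
  rw [← mul_sum, sum_add_distrib, ← mul_sum, sum_const, nsmul_eq_mul]
  have h5 := h.sum_om hi₀ hJ r hr T (fun j hj => by have := hT j hj; omega)
  have h6 : (T.card : ℝ) ≤ 3 * r := by exact_mod_cast hc
  have h7 : 18 * ∑ j ∈ T, om χ ε j + T.card * (270 * ε) ≤ 196650 * ε * r := by nlinarith
  have := mul_le_mul_of_nonneg_left h7 (by positivity : 0 ≤ 64 * (r:ℝ))
  linarith

lemma sum_pairs (χ : ℕ → ℝ) (a n : ℕ) :
    ∑ i ∈ Ico a (a + 2 * n), χ i = ∑ t ∈ range n, (χ (a + 2 * t) + χ (a + 2 * t + 1)) := by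
  induction n with
  | zero => simp
  | succ n ih =>
    rw [sum_range_succ, ← ih, show a + 2 * (n + 1) = a + 2 * n + 1 + 1 by ring,
      sum_Ico_succ_top (by omega), sum_Ico_succ_top (by omega)]
    ring

/-- The sum of `χ` over an arithmetic progression of step `2` is small, since `χ` has small sums over
intervals and varies slowly. -/
lemma sum_even (h : Conv α χ β ε J i₀) (r : ℕ) (hr : J = 8 * r) (j : ℕ)
    (hj : 5 * r ≤ j) (hj2 : j < 6 * r) :
    |∑ m ∈ Ico r (2 * r), χ (j - 2 * m)| ≤ 8 * ε * r := by
  have h8 := h.i₀J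
  have he0 := h.eps0
  set a := j - 4 * r + 1 with ha
  have e1 : ∑ m ∈ Ico r (2 * r), χ (j - 2 * m) = ∑ t ∈ range r, χ (a + 2 * t + 1) := by
    rw [sum_Ico_eq_sum_range, show 2 * r - r = r by omega, ← sum_range_reflect]
    refine sum_congr rfl fun t ht => ?_
    rw [mem_range] at ht
    congr 1; omega
  have e2 := h.avg a (a + 2 * r) (by omega) (by omega) (by omega)
  rw [sum_pairs, sum_add_distrib] at e2
  have e3 : |∑ t ∈ range r, χ (a + 2 * t + 1) - ∑ t ∈ range r, χ (a + 2 * t)| ≤ r * ε := by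
    rw [← sum_sub_distrib]
    refine (abs_sum_le_sum_abs _ _).trans ?_
    have : ∀ t ∈ range r, |χ (a + 2 * t + 1) - χ (a + 2 * t)| ≤ ε := by
      intro t ht
      rw [mem_range] at ht
      exact h.reg _ (by omega) (by omega)
    simpa using sum_le_sum this
  rw [e1]
  have hJr : (J:ℝ) = 8 * r := by rw [hr]; push_cast; ring
  rw [hJr] at e2
  rw [abs_le] at *
  have : 0 ≤ ε * r := by positivity
  constructor <;> linarith

lemma one_sub_sq (h : Conv α χ β ε J i₀) (i : ℕ) (hi : i ≤ J) :
    |1 - χ i ^ 2| ≤ 3 * om χ ε i := by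
  have he0 := h.eps0
  have he1 := h.eps1
  have hc := h.chi i hi
  have h0 := abs_nonneg (χ i)
  have hω := h.om_ge i hi
  have h1 : |1 - abs (χ i)| ≤ om χ ε i := by
    unfold om; rw [abs_le]; constructor <;> linarith
  have h2 : 1 - χ i ^ 2 = (1 - |χ i|) * (1 + |χ i|) := by
    rw [← sq_abs]; ring
  rw [h2, abs_mul, abs_of_nonneg (by linarith : 0 ≤ 1 + |χ i|), mul_comm 3]
  exact mul_le_mul h1 (by linarith) (by linarith) (by linarith)

/-- The relation forces `χ` to be multiplicative with `χ² ≈ 1`, hence `χ (j - 2m) ≈ χ j`, which is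
incompatible with `χ` having mean zero. -/
theorem contradiction (h : Conv α χ β ε J i₀) (hi₀ : 1 ≤ i₀) (hJ : 1 - ε ≤ χ J) (r : ℕ)
    (hr : J = 8 * r) : False := by
  have h8 := h.i₀J
  have he0 := h.eps0
  have he1 := h.eps1
  have hr0 : (0:ℝ) < r := by exact_mod_cast (by omega : 0 < r)
  have A1 := h.sum_mult hi₀ hJ r hr (Ico (5 * r) (6 * r))
    (fun j hj => by rw [mem_Ico] at hj; omega) (by rw [Nat.card_Ico]; omega)
  have A2 := h.sum_mult hi₀ hJ r hr (Ico (3 * r) (5 * r + 1))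
    (fun j hj => by rw [mem_Ico] at hj; omega) (by rw [Nat.card_Ico]; omega)
  have A3 : ∑ j ∈ Ico (5 * r) (6 * r), ∑ m ∈ Ico r (2 * r),
      |χ (j - 2 * m) - χ (j - m) * χ (J - m)| ≤ 12585600 * ε * r ^ 2 := by
    refine le_trans ?_ A2
    rw [sum_comm, sum_comm (s := Ico (3 * r) (5 * r + 1))]
    refine sum_le_sum fun m hm => ?_
    rw [mem_Ico] at hm
    have hinj : Set.InjOn (fun j => j - m) (Ico (5 * r) (6 * r) : Finset ℕ) := by
      intro x hx y hy hxy
      rw [mem_coe, mem_Ico] at hx hy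
      simp only at hxy; omega
    have e : ∑ j ∈ Ico (5 * r) (6 * r), |χ (j - 2 * m) - χ (j - m) * χ (J - m)|
        = ∑ j ∈ (Ico (5 * r) (6 * r)).image (fun j => j - m),
          |χ (j - m) - χ j * χ (J - m)| := by
      rw [sum_image hinj]
      refine sum_congr rfl fun j _ => ?_
      rw [Nat.sub_sub, two_mul]
    rw [e]
    refine sum_le_sum_of_subset_of_nonneg ?_ fun _ _ _ => abs_nonneg _
    intro x hx
    obtain ⟨j, hj, rfl⟩ := mem_image.1 hx
    rw [mem_Ico] at *; omega
  have W1 := h.sum_om hi₀ hJ r hr (Ico (5 * r) (6 * r))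
    (fun j hj => by rw [mem_Ico] at hj; omega)
  have W2 : ∑ m ∈ Ico r (2 * r), om χ ε (J - m) ≤ 10880 * ε * r := by
    have hinj : Set.InjOn (fun j => J - j) (Ico r (2 * r) : Finset ℕ) := by
      intro x hx y hy hxy
      rw [mem_coe, mem_Ico] at hx hy
      simp only at hxy; omega
    have := h.sum_om hi₀ hJ r hr ((Ico r (2 * r)).image fun j => J - j) (fun j hj => by
      obtain ⟨m, hm, rfl⟩ := mem_image.1 hj
      rw [mem_Ico] at hm; omega)
    rwa [sum_image hinj] at this
  -- `χ (j - 2m) ≈ χ (j - m) χ (J - m) ≈ χ j χ (J - m)² ≈ χ j`, multiplied by `χ j`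
  have hpt : ∀ j ∈ Ico (5 * r) (6 * r), ∀ m ∈ Ico r (2 * r),
      (1:ℝ) ≤ χ j * χ (j - 2 * m) + 3 * om χ ε j
        + (101 / 100) * |χ (j - 2 * m) - χ (j - m) * χ (J - m)|
        + (102 / 100) * |χ (j - m) - χ j * χ (J - m)| + 4 * om χ ε (J - m) := by
    intro j hj m hm
    rw [mem_Ico] at hj hm
    have c1 := h.chi j (by omega)
    have c2 := h.chi (J - m) (by omega)
    have o1 := h.one_sub_sq j (by omega)
    have o2 := h.one_sub_sq (J - m) (by omega)
    have ω0 := h.om_ge (J - m) (by omega)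
    set u := χ (j - 2 * m) - χ (j - m) * χ (J - m) with hu
    set v := χ (j - m) - χ j * χ (J - m) with hv
    have e : 1 = χ j * χ (j - 2 * m) + (1 - χ j ^ 2) - χ j * u - (χ j * χ (J - m)) * v
        + (χ j * χ j) * (1 - χ (J - m) ^ 2) := by rw [hu, hv]; ring
    have b1 : -(χ j * u) ≤ 101 / 100 * |u| := by
      refine (neg_le_abs _).trans ?_
      rw [abs_mul]
      exact mul_le_mul_of_nonneg_right (by linarith) (abs_nonneg _)
    have b2 : -(χ j * χ (J - m) * v) ≤ 102 / 100 * |v| := by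
      refine (neg_le_abs _).trans ?_
      rw [abs_mul, abs_mul]
      refine mul_le_mul_of_nonneg_right ?_ (abs_nonneg _)
      calc |χ j| * |χ (J - m)| ≤ (1 + ε) * (1 + ε) :=
            mul_le_mul c1 c2 (abs_nonneg _) (by linarith)
        _ ≤ _ := by nlinarith
    have b3 : (χ j * χ j) * (1 - χ (J - m) ^ 2) ≤ 4 * om χ ε (J - m) := by
      refine (le_abs_self _).trans ?_
      rw [abs_mul, abs_mul]
      have : |χ j| * |χ j| ≤ 4 / 3 := by
        calc |χ j| * |χ j| ≤ (1 + ε) * (1 + ε) :=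
              mul_le_mul c1 c1 (abs_nonneg _) (by linarith)
          _ ≤ _ := by nlinarith
      calc |χ j| * |χ j| * |1 - χ (J - m) ^ 2| ≤ 4 / 3 * (3 * om χ ε (J - m)) :=
            mul_le_mul this o2 (abs_nonneg _) (by norm_num)
        _ = _ := by ring
    have b4 := (abs_le.1 o1).2
    linarith
  have hsum := sum_le_sum fun j hj => sum_le_sum (hpt j hj)
  simp only [sum_add_distrib, ← mul_sum, sum_const, Nat.card_Ico, nsmul_eq_mul, mul_one] at hsum
  rw [show 6 * r - 5 * r = r by omega, show 2 * r - r = r by omega] at hsum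
  -- the sums over `m` are small because `χ` has mean zero
  have B : ∑ j ∈ Ico (5 * r) (6 * r), χ j * ∑ m ∈ Ico r (2 * r), χ (j - 2 * m)
      ≤ r * (16 * ε * r) := by
    have : ∀ j ∈ Ico (5 * r) (6 * r), χ j * ∑ m ∈ Ico r (2 * r), χ (j - 2 * m)
        ≤ 16 * ε * r := by
      intro j hj
      rw [mem_Ico] at hj
      refine (le_abs_self _).trans ?_
      rw [abs_mul]
      calc _ ≤ (1 + ε) * (8 * ε * r) :=
            mul_le_mul (h.chi j (by omega)) (h.sum_even r hr j hj.1 hj.2) (abs_nonneg _)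
              (by linarith)
        _ ≤ 2 * (8 * ε * r) := mul_le_mul_of_nonneg_right (by linarith) (by positivity)
        _ = _ := by ring
    have := sum_le_sum this
    rw [sum_const, Nat.card_Ico, nsmul_eq_mul, show 6 * r - 5 * r = r by omega] at this
    exact this
  have D1 := mul_le_mul_of_nonneg_left W1 hr0.le
  have D2 := mul_le_mul_of_nonneg_left W2 hr0.le
  have fin : (r:ℝ) * r ≤ 40000000 * ε * (r * r) := by nlinarith
  have : 0 < (r:ℝ) * r := by positivity
  nlinarith

end Conv
end SepPow

/-! ### Window averages on a multiplicative grid -/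

namespace SepPow
open Finset Real

/-- Normalised data of a multiplicative grid: `α` is the mass of the primes in each cell, `β` the
mass of `Λ₂`, and `θ m` the part of `conv α m` coming from products that fall in cell `m + 1`
rather than in cell `m`. -/
structure Grid (α β θ : ℕ → ℝ) (h M : ℕ) : Prop where
  a0 : ∀ i, 0 ≤ α i
  mert : ∀ j, |∑ i ∈ range j, α i - j| ≤ h
  th0 : ∀ m, 0 ≤ θ m
  thle : ∀ m, θ m ≤ conv α m
  lo : ∀ m : ℕ, (m + 1) * α (m + 1) ≤ β (m + 1) - conv α (m + 1) + θ (m + 1) - θ m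
  hi : ∀ m : ℕ, β (m + 1) - conv α (m + 1) + θ (m + 1) - θ m ≤ (m + 2) * α (m + 1)
  breg : ∀ m, h ≤ m → m ≤ M → |β m - 2 * m| ≤ m / 2 ^ 32

/-- The average of `α` over the window `[j, j + N)`. -/
noncomputable def fav (α : ℕ → ℝ) (N j : ℕ) : ℝ := (∑ t ∈ range N, α (j + t)) / N

/-- The deviation `1 - fav`, cut off at small arguments. -/
noncomputable def chi (α : ℕ → ℝ) (N h j : ℕ) : ℝ := if j < 2 * h then 0 else 1 - fav α N j

/-- The arithmetic core of `symm_formula`: `f` is the window average, `S` the averaged convolution, `T` the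
window sum of `β`, and `C` the window sum of `conv α`. -/
lemma symm_arith (N J h x f S T C θ₁ θ₀ : ℝ) (hNR : 2 ^ 32 ≤ N) (hNh : N ≤ h)
    (hJR : h * 2 ^ 36 ≤ J) (hf3 : f ≤ 3) (hC1 : N * S ≤ C) (hC2 : C ≤ N * S + N * (12 * h))
    (hT1 : |T - N * (2 * x)| ≤ N * (2 * N + 2 * J / 2 ^ 32))
    (L : x * (N * f) ≤ T - C + (θ₁ - θ₀)) (U : T - C + (θ₁ - θ₀) ≤ (x + N) * (N * f))
    (t1 : θ₀ ≤ 6 * J) (t2 : θ₁ ≤ 6 * J) (t3 : 0 ≤ θ₀) (t4 : 0 ≤ θ₁) :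
    |N * (x * f + S - 2 * x)| ≤ N * (J / 2 ^ 28) := by
  have hNp : (0:ℝ) < N := lt_of_lt_of_le (by norm_num) hNR
  have hJ0 : (0:ℝ) ≤ J := by linarith
  have hNf : N * (N * f) ≤ 3 * (N * N) := by
    have := mul_le_mul_of_nonneg_left hf3 (mul_nonneg hNp.le hNp.le)
    linarith
  have hNN : N * N ≤ N * h := mul_le_mul_of_nonneg_left hNh hNp.le
  have key : |N * (x * f + S - 2 * x)| ≤ N * (17 * h + 2 * J / 2 ^ 32) + 6 * J := by
    rw [abs_le] at hT1 ⊢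
    obtain ⟨c1, c2⟩ := hT1
    constructor <;> linarith
  have a : 6 * J ≤ N * (6 * J / 2 ^ 32) := by
    rw [mul_div_assoc', le_div_iff₀ (by norm_num)]
    have := mul_le_mul_of_nonneg_right hNR (by linarith : 0 ≤ 6 * J)
    linarith
  have b : 17 * h + 2 * J / 2 ^ 32 + 6 * J / 2 ^ 32 ≤ J / 2 ^ 28 := by linarith
  have c := mul_le_mul_of_nonneg_left b hNp.le
  linarith

namespace Grid
variable {α β θ : ℕ → ℝ} {h M : ℕ}

lemma beta_ge (g : Grid α β θ h M) (m : ℕ) : (m + 1) * α (m + 1) + θ m ≤ β (m + 1) := by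
  have := g.lo m
  have := g.thle (m + 1)
  linarith

lemma alpha_le (g : Grid α β θ h M) (hh : 1 ≤ h) (m : ℕ) (h1 : h ≤ m) (h2 : m ≤ M) :
    α m ≤ 2 + 1 / 2 ^ 32 := by
  have hb := (abs_le.1 (g.breg m h1 h2)).2
  obtain ⟨n, rfl⟩ : ∃ n, m = n + 1 := ⟨m - 1, by omega⟩
  have h3 := g.beta_ge n
  have h4 := g.th0 n
  push_cast at hb
  have hn : (0:ℝ) < n + 1 := by positivity
  refine le_of_mul_le_mul_left ?_ hn
  linarith

lemma fav_nonneg (g : Grid α β θ h M) (N j : ℕ) : 0 ≤ fav α N j :=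
  div_nonneg (sum_nonneg fun _ _ => g.a0 _) (Nat.cast_nonneg _)

lemma fav_le (g : Grid α β θ h M) (hh : 1 ≤ h) (N j : ℕ) (hN : 0 < N) (h1 : h ≤ j)
    (h2 : j + N ≤ M) : fav α N j ≤ 2 + 1 / 2 ^ 32 := by
  unfold fav
  rw [div_le_iff₀ (by exact_mod_cast hN)]
  have : ∀ t ∈ range N, α (j + t) ≤ 2 + 1 / 2 ^ 32 := fun t ht =>
    g.alpha_le hh _ (by omega) (by rw [mem_range] at ht; omega)
  have := sum_le_sum this
  rw [sum_const, card_range, nsmul_eq_mul] at this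
  linarith

lemma fav_reg (g : Grid α β θ h M) (hh : 1 ≤ h) (N j : ℕ) (hN : 2 ^ 32 ≤ N) (h1 : h ≤ j)
    (h2 : j + N ≤ M) : |fav α N (j + 1) - fav α N j| ≤ 1 / 67108864 := by
  have hN0 : (2:ℝ) ^ 32 ≤ N := by exact_mod_cast hN
  have hNp : (0:ℝ) < N := lt_of_lt_of_le (by norm_num) hN0
  have e : fav α N (j + 1) - fav α N j = (α (j + N) - α j) / N := by
    unfold fav
    rw [← sub_div, ← sum_sub_distrib]
    congr 1
    have := sum_range_sub (fun t => α (j + t)) N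
    rw [add_zero] at this
    rw [← this]
    refine sum_congr rfl fun t _ => ?_
    rw [show j + 1 + t = j + (t + 1) by ring]
  rw [e, abs_div, abs_of_pos hNp, div_le_iff₀ hNp]
  have a1 := g.alpha_le hh (j + N) (by omega) h2
  have a2 := g.alpha_le hh j h1 (by omega)
  have b1 := g.a0 (j + N)
  have b2 := g.a0 j
  rw [abs_le]
  constructor <;> linarith

/-- Mertens' estimate makes `α` equal to `1` on average, so the deviations sum to little. -/
lemma avg (g : Grid α β θ h M) (N u v : ℕ) (hN : 0 < N) (hu : 2 * h ≤ u) (huv : u ≤ v) :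
    |∑ i ∈ Ico u v, chi α N h i| ≤ 2 * h := by
  have hNp : (0:ℝ) < N := by exact_mod_cast hN
  have e1 : ∑ i ∈ Ico u v, chi α N h i
      = (∑ t ∈ range N, ((v:ℝ) - u - ∑ i ∈ Ico u v, α (i + t))) / N := by
    have : ∀ i ∈ Ico u v, chi α N h i = 1 - fav α N i := fun i hi => by
      unfold chi; rw [if_neg (by rw [mem_Ico] at hi; omega)]
    rw [sum_congr rfl this, sum_sub_distrib, sum_sub_distrib]
    unfold fav
    rw [← sum_div, sum_comm, sum_const, sum_const, Nat.card_Ico, card_range, nsmul_eq_mul,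
      nsmul_eq_mul, Nat.cast_sub huv]
    field_simp
  rw [e1, abs_div, abs_of_pos hNp, div_le_iff₀ hNp]
  refine (abs_sum_le_sum_abs _ _).trans ?_
  have : ∀ t ∈ range N, |(v:ℝ) - u - ∑ i ∈ Ico u v, α (i + t)| ≤ 2 * h := by
    intro t _
    have e2 : ∑ i ∈ Ico u v, α (i + t) = ∑ i ∈ range (v + t), α i - ∑ i ∈ range (u + t), α i := by
      rw [sum_Ico_add', sum_Ico_eq_sub _ (by omega)]
    have m1 := g.mert (v + t)
    have m2 := g.mert (u + t)
    push_cast at m1 m2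
    rw [e2]
    rw [abs_le] at *
    constructor <;> linarith
  have := sum_le_sum this
  rw [sum_const, card_range, nsmul_eq_mul] at this
  linarith

/-- Truncating the convolution at `j - 2h` costs at most `12 h`, because `α ≤ 3` there and the omitted
mass of `α` is at most `4 h`. -/
lemma conv_split (g : Grid α β θ h M) (hh : 1 ≤ h) (N t j : ℕ) (hN : N ≤ h) (ht : t < N)
    (h1 : 3 * h ≤ j) (h2 : j + N ≤ M) :
    ∑ i ∈ range (j - 2 * h + 1), α i * α (j - i + t) ≤ conv α (j + t) ∧
    conv α (j + t) ≤ ∑ i ∈ range (j - 2 * h + 1), α i * α (j - i + t) + 12 * h := by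
  have e : conv α (j + t) = ∑ i ∈ range (j - 2 * h + 1), α i * α (j - i + t)
      + ∑ i ∈ Ico (j - 2 * h + 1) (j + t + 1), α i * α (j + t - i) := by
    unfold conv
    rw [← sum_range_add_sum_Ico _ (by omega : j - 2 * h + 1 ≤ j + t + 1)]
    congr 1
    refine sum_congr rfl fun i hi => ?_
    rw [mem_range] at hi
    rw [show j + t - i = j - i + t by omega]
  have b0 : 0 ≤ ∑ i ∈ Ico (j - 2 * h + 1) (j + t + 1), α i * α (j + t - i) :=
    sum_nonneg fun _ _ => mul_nonneg (g.a0 _) (g.a0 _)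
  have b1 : ∑ i ∈ Ico (j - 2 * h + 1) (j + t + 1), α i * α (j + t - i)
      ≤ 3 * ∑ i ∈ range (2 * h + t), α i := by
    have e2 : ∑ i ∈ range (2 * h + t), α i
        = ∑ i ∈ Ico (j - 2 * h + 1) (j + t + 1), α (j + t - i) := by
      rw [sum_Ico_eq_sum_range, show j + t + 1 - (j - 2 * h + 1) = 2 * h + t by omega,
        ← sum_range_reflect]
      refine sum_congr rfl fun s hs => ?_
      rw [mem_range] at hs
      congr 1; omega
    rw [e2, mul_sum]
    refine sum_le_sum fun i hi => ?_
    rw [mem_Ico] at hi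
    refine mul_le_mul_of_nonneg_right ?_ (g.a0 _)
    exact (g.alpha_le hh i (by omega) (by omega)).trans (by norm_num)
  have b2 := (abs_le.1 (g.mert (2 * h + t))).2
  have b3 : (t:ℝ) ≤ h := by exact_mod_cast (by omega : t ≤ h)
  push_cast at b2
  rw [e]
  constructor <;> linarith

/-- The window-averaged form of Selberg's symmetry formula. -/
lemma symm_formula (g : Grid α β θ h M) (hh : 1 ≤ h) (N J j : ℕ) (hN0 : 2 ^ 32 ≤ N) (hN : N ≤ h)
    (hJ : h * 2 ^ 36 ≤ J) (h1 : 3 * h ≤ j) (hjJ : j ≤ J) (h2 : J + N ≤ M) :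
    |j * fav α N j + ∑ i ∈ range (j - 2 * h + 1), α i * fav α N (j - i) - 2 * j|
      ≤ J / 2 ^ 28 := by
  have hNR : (2:ℝ) ^ 32 ≤ N := by exact_mod_cast hN0
  have hNp : (0:ℝ) < N := lt_of_lt_of_le (by norm_num) hNR
  have hNh : (N:ℝ) ≤ h := by exact_mod_cast hN
  have hJR : (h:ℝ) * 2 ^ 36 ≤ J := by exact_mod_cast hJ
  have hjR : (j:ℝ) ≤ J := by exact_mod_cast hjJ
  have hf0 := g.fav_nonneg N j
  have hf1 := g.fav_le hh N j (by omega) (by omega) (by omega)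
  set f := fav α N j with hf
  set S := ∑ i ∈ range (j - 2 * h + 1), α i * fav α N (j - i) with hS
  have hF : ∑ t ∈ range N, α (j + t) = N * f := by
    rw [hf]; unfold fav; field_simp
  have hNS : N * S = ∑ t ∈ range N, ∑ i ∈ range (j - 2 * h + 1), α i * α (j - i + t) := by
    rw [hS, sum_comm, mul_sum]
    refine sum_congr rfl fun i _ => ?_
    unfold fav
    rw [← mul_sum]
    field_simp
  set C := ∑ t ∈ range N, conv α (j + t) with hC
  have hC1 : N * S ≤ C := by
    rw [hNS]
    exact sum_le_sum fun t ht => (g.conv_split hh N t j hN (mem_range.1 ht) h1 (by omega)).1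
  have hC2 : C ≤ N * S + N * (12 * h) := by
    have : ∀ t ∈ range N, conv α (j + t) ≤
        ∑ i ∈ range (j - 2 * h + 1), α i * α (j - i + t) + 12 * h :=
      fun t ht => (g.conv_split hh N t j hN (mem_range.1 ht) h1 (by omega)).2
    have := sum_le_sum this
    rw [sum_add_distrib, ← hNS, sum_const, card_range, nsmul_eq_mul] at this
    exact this
  set T := ∑ t ∈ range N, β (j + t) with hT
  have hT1 : |T - N * (2 * j)| ≤ N * (2 * N + 2 * J / 2 ^ 32) := by
    have e : T - N * (2 * j) = ∑ t ∈ range N, (β (j + t) - 2 * j) := by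
      rw [sum_sub_distrib, sum_const, card_range, nsmul_eq_mul]
    rw [e]
    refine (abs_sum_le_sum_abs _ _).trans ?_
    have : ∀ t ∈ range N, |β (j + t) - 2 * j| ≤ 2 * N + 2 * J / 2 ^ 32 := by
      intro t ht
      rw [mem_range] at ht
      have b := g.breg (j + t) (by omega) (by omega)
      have htN : (t:ℝ) ≤ N := by exact_mod_cast ht.le
      have ht0 : (0:ℝ) ≤ t := Nat.cast_nonneg _
      push_cast at b
      have hjt : (j + t : ℝ) / 2 ^ 32 ≤ 2 * J / 2 ^ 32 := by
        gcongr
        have : (h:ℝ) * 2 ^ 36 ≥ h := by nlinarith [Nat.cast_nonneg (α := ℝ) h]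
        linarith
      rw [abs_le] at *
      constructor <;> linarith
    have := sum_le_sum this
    rw [sum_const, card_range, nsmul_eq_mul] at this
    exact this
  obtain ⟨n, rfl⟩ : ∃ n, j = n + 1 := ⟨j - 1, by omega⟩
  have htel : ∑ t ∈ range N, (θ (n + 1 + t) - θ (n + t)) = θ (n + N) - θ n := by
    have := sum_range_sub (fun t => θ (n + t)) N
    rw [add_zero] at this
    rw [← this]
    refine sum_congr rfl fun t _ => ?_
    rw [show n + 1 + t = n + (t + 1) by ring]
  have hth : ∀ m, h ≤ m + 1 → m + 1 ≤ J + N → θ m ≤ 6 * J := by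
    intro m hm1 hm2
    have b := (abs_le.1 (g.breg (m + 1) hm1 (by omega))).2
    have c := g.beta_ge m
    have d := mul_nonneg (by positivity : (0:ℝ) ≤ m + 1) (g.a0 (m + 1))
    have e : ((m + 1 : ℕ) : ℝ) ≤ J + N := by exact_mod_cast hm2
    have h0 : (0:ℝ) ≤ h := Nat.cast_nonneg _
    linarith
  have t1 := hth n (by omega) (by omega)
  have t2 := hth (n + N) (by omega) (by omega)
  have t3 := g.th0 n
  have t4 := g.th0 (n + N)
  have L : ∀ t ∈ range N, ((n + 1 : ℕ) : ℝ) * α (n + 1 + t)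
      ≤ β (n + 1 + t) - conv α (n + 1 + t) + (θ (n + 1 + t) - θ (n + t)) := by
    intro t _
    have := g.lo (n + t)
    rw [show n + t + 1 = n + 1 + t by ring] at this
    have h3 := mul_nonneg (Nat.cast_nonneg (α := ℝ) t) (g.a0 (n + 1 + t))
    push_cast at *
    linarith
  have U : ∀ t ∈ range N, β (n + 1 + t) - conv α (n + 1 + t) + (θ (n + 1 + t) - θ (n + t))
      ≤ ((n + 1 : ℕ) + N : ℝ) * α (n + 1 + t) := by
    intro t ht
    rw [mem_range] at ht
    have := g.hi (n + t)
    rw [show n + t + 1 = n + 1 + t by ring] at this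
    have ht2 : (t:ℝ) + 1 ≤ N := by exact_mod_cast ht
    have h3 := mul_le_mul_of_nonneg_right ht2 (g.a0 (n + 1 + t))
    push_cast at *
    linarith
  have L' := sum_le_sum L
  have U' := sum_le_sum U
  rw [← mul_sum, hF, sum_add_distrib, sum_sub_distrib, htel, ← hT, ← hC] at L'
  rw [← mul_sum, hF, sum_add_distrib, sum_sub_distrib, htel, ← hT, ← hC] at U'
  generalize ((n + 1 : ℕ) : ℝ) = x at *
  have hf3 : f ≤ 3 := hf1.trans (by norm_num)
  have key := symm_arith N J h x f S T C (θ (n + N)) (θ n) hNR hNh hJR hf3 hC1 hC2 hT1 L' U'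
    t1 t2 t3 t4
  rw [abs_mul, abs_of_pos hNp] at key
  exact le_of_mul_le_mul_left key hNp

/-- The window averages of a grid satisfy the hypotheses of the abstract contradiction argument. -/
theorem toConv (g : Grid α β θ h M) (N J : ℕ) (hN0 : 2 ^ 32 ≤ N) (hN : N ≤ h)
    (hJ : h * 2 ^ 36 ≤ J) (h2 : J + N ≤ M) :
    Conv α (chi α N h) β (1 / 67108864) J (2 * h) := by
  have hh : 1 ≤ h := by omega
  have hhR : (1:ℝ) ≤ h := by exact_mod_cast hh
  have hJR : (h:ℝ) * 2 ^ 36 ≤ J := by exact_mod_cast hJ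
  have hchi : ∀ j ≤ J, |chi α N h j| ≤ 1 + 1 / 67108864 := by
    intro j hj
    unfold chi
    split_ifs with hc
    · rw [abs_zero]; norm_num
    · have f0 := g.fav_nonneg N j
      have f1 := g.fav_le hh N j (by omega) (by omega) (by omega)
      rw [abs_le]; constructor <;> linarith
  refine ⟨by norm_num, by norm_num, ?_, by omega, g.a0, ?_, hchi, ?_, ?_, ?_, ?_, ?_⟩
  · linarith
  · intro j _
    have := g.mert (j + 1)
    push_cast at this
    rw [abs_le] at *
    constructor <;> linarith
  · intro j h3 h4
    unfold chi
    rw [if_neg (by omega), if_neg (by omega)]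
    have := g.fav_reg hh N j hN0 (by omega) (by omega)
    rw [abs_sub_comm] at this
    rwa [sub_sub_sub_cancel_left]
  · intro j hj
    rcases lt_or_ge j (3 * h) with h3 | h3
    · have c1 : ∀ i ≤ J, |chi α N h i| ≤ 2 := fun i hi => (hchi i hi).trans (by norm_num)
      have hj3 : (j:ℝ) + 1 ≤ 3 * h := by exact_mod_cast h3
      have b1 : |(j:ℝ) * chi α N h j| ≤ 3 * h * 2 := by
        rw [abs_mul, Nat.abs_cast]
        exact mul_le_mul (by linarith) (c1 j hj) (abs_nonneg _) (by positivity)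
      have b2 : |∑ i ∈ range (j + 1), α i * chi α N h (j - i)| ≤ 4 * h * 2 := by
        refine (abs_sum_le_sum_abs _ _).trans ?_
        have : ∀ i ∈ range (j + 1), |α i * chi α N h (j - i)| ≤ α i * 2 := by
          intro i _
          rw [abs_mul, abs_of_nonneg (g.a0 i)]
          exact mul_le_mul_of_nonneg_left (c1 _ (by omega)) (g.a0 i)
        refine (sum_le_sum this).trans ?_
        rw [← sum_mul]
        have := (abs_le.1 (g.mert (j + 1))).2
        push_cast at this
        linarith
      refine (abs_add_le _ _).trans ?_
      linarith
    · have e1 : ∑ i ∈ range (j + 1), α i * chi α N h (j - i)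
          = ∑ i ∈ range (j - 2 * h + 1), α i
            - ∑ i ∈ range (j - 2 * h + 1), α i * fav α N (j - i) := by
        rw [← sum_range_add_sum_Ico _ (by omega : j - 2 * h + 1 ≤ j + 1), ← sum_sub_distrib]
        have z : ∑ i ∈ Ico (j - 2 * h + 1) (j + 1), α i * chi α N h (j - i) = 0 := by
          refine sum_eq_zero fun i hi => ?_
          rw [mem_Ico] at hi
          unfold chi
          rw [if_pos (by omega), mul_zero]
        rw [z, add_zero]
        refine sum_congr rfl fun i hi => ?_
        rw [mem_range] at hi
        unfold chi
        rw [if_neg (by omega)]; ring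
      have e2 : chi α N h j = 1 - fav α N j := by unfold chi; rw [if_neg (by omega)]
      rw [e1, e2]
      have s1 := g.symm_formula hh N J j hN0 hN hJ h3 hj h2
      have s2 := g.mert (j - 2 * h + 1)
      rw [Nat.cast_add, Nat.cast_sub (by omega)] at s2
      push_cast at s2
      rw [abs_le] at *
      constructor <;> linarith
  · intro m h3 h4
    have := (abs_le.1 (g.breg m (by omega) (by omega))).1
    have : (0:ℝ) ≤ m := Nat.cast_nonneg _
    linarith
  · intro m h3 h4
    obtain ⟨n, rfl⟩ : ∃ n, m = n + 1 := ⟨m - 1, by omega⟩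
    have := g.hi n
    have := g.th0 (n + 1)
    have := g.thle n
    rw [Nat.add_sub_cancel]
    push_cast
    linarith
  · intro u v h3 h4 h5
    refine (g.avg N u v (by omega) h3 h4).trans ?_
    linarith

/-- The grid average cannot be tiny at `J`. -/
theorem fav_gt (g : Grid α β θ h M) (N r : ℕ) (hN0 : 2 ^ 32 ≤ N) (hN : N ≤ h)
    (hJ : h * 2 ^ 36 ≤ 8 * r) (h2 : 8 * r + N ≤ M) : 1 / 67108864 < fav α N (8 * r) := by
  by_contra hc
  refine (g.toConv N (8 * r) hN0 hN hJ h2).contradiction (by omega) ?_ r rfl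
  unfold chi
  rw [if_neg (by omega)]
  linarith

end Grid
end SepPow

/-! ### The grid of ratio `1 + 1/z` -/

namespace SepPow
open Finset Real
open scoped ArithmeticFunction.vonMangoldt

/-- The ratio `1 + 1/z` of the multiplicative grid. -/
noncomputable def lam (k : ℕ) : ℝ := 1 + 1 / (zz k : ℝ)

lemma zz_pos' (k : ℕ) : (0:ℝ) < zz k := by
  have : (2:ℝ) ≤ zz k := by exact_mod_cast zz_two_le k
  linarith

lemma one_lt_lam (k : ℕ) : 1 < lam k := by
  unfold lam
  have := one_div_pos.2 (zz_pos' k)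
  linarith

lemma lam_pow_pos (k i : ℕ) : 0 < lam k ^ i := pow_pos (by linarith [one_lt_lam k]) _

lemma one_le_lam_pow (k i : ℕ) : 1 ≤ lam k ^ i := one_le_pow₀ (one_lt_lam k).le

lemma exists_idx (k n : ℕ) : ∃ i : ℕ, (n:ℝ) ≤ lam k ^ (i + 1) := by
  obtain ⟨i, hi⟩ := pow_unbounded_of_one_lt (n:ℝ) (one_lt_lam k)
  exact ⟨i, hi.le.trans (pow_le_pow_right₀ (one_lt_lam k).le (by omega))⟩

open Classical in
/-- The index of the grid cell `(λ^i, λ^(i+1)]` containing `n > 1`. -/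
noncomputable def idx (k n : ℕ) : ℕ := Nat.find (exists_idx k n)

lemma idx_spec (k n : ℕ) : (n:ℝ) ≤ lam k ^ (idx k n + 1) := by
  classical
  exact Nat.find_spec (exists_idx k n)

lemma idx_lt (k n : ℕ) (hn : 1 < n) : lam k ^ idx k n < n := by
  classical
  rcases Nat.eq_zero_or_pos (idx k n) with h | h
  · rw [h, pow_zero]; exact_mod_cast hn
  · have := Nat.find_min (exists_idx k n) (m := idx k n - 1) (by unfold idx at *; omega)
    rw [Nat.sub_add_cancel h] at this
    exact not_le.1 this

lemma idx_eq (k n i : ℕ) (h1 : lam k ^ i < n) (h2 : (n:ℝ) ≤ lam k ^ (i + 1)) : idx k n = i := by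
  have hn : 1 < n := by
    have := (one_le_lam_pow k i).trans_lt h1
    exact_mod_cast this
  have a := (idx_lt k n hn).trans_le h2
  have b := h1.trans_le (idx_spec k n)
  rw [pow_lt_pow_iff_right₀ (one_lt_lam k)] at a b
  omega

lemma idx_mono (k : ℕ) {m n : ℕ} (h : m ≤ n) (hm : 1 < m) : idx k m ≤ idx k n := by
  have a := (idx_lt k m hm).trans_le ((Nat.cast_le (α := ℝ)).2 h) |>.trans_le (idx_spec k n)
  rw [pow_lt_pow_iff_right₀ (one_lt_lam k)] at a
  omega

/-- Cell indices are additive under multiplication up to a carry of at most `1`. -/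
lemma idx_mul (k x y : ℕ) (hx : 1 < x) (hy : 1 < y) :
    idx k (x * y) = idx k x + idx k y ∨ idx k (x * y) = idx k x + idx k y + 1 := by
  have a := mul_lt_mul'' (idx_lt k x hx) (idx_lt k y hy) (lam_pow_pos k _).le (lam_pow_pos k _).le
  have b := mul_le_mul (idx_spec k x) (idx_spec k y) (Nat.cast_nonneg _) (lam_pow_pos k _).le
  rw [← pow_add, ← Nat.cast_mul] at a b
  have hxy : 1 < x * y := by nlinarith
  have c := a.trans_le (idx_spec k (x * y))
  have d := (idx_lt k (x * y) hxy).trans_le b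
  rw [pow_lt_pow_iff_right₀ (one_lt_lam k)] at c d
  omega

/-- The integer part of `λ^i`. -/
noncomputable def fl (k i : ℕ) : ℕ := ⌊lam k ^ i⌋₊

lemma fl_mono (k : ℕ) : Monotone (fl k) := fun _ _ h =>
  Nat.floor_mono (pow_le_pow_right₀ (one_lt_lam k).le h)

lemma fl_zero (k : ℕ) : fl k 0 = 1 := by simp [fl]

lemma one_le_fl (k i : ℕ) : 1 ≤ fl k i := by rw [← fl_zero k]; exact fl_mono k (Nat.zero_le _)

/-- The integers in the cell `(λ^i, λ^(i+1)]`. -/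
noncomputable def cell (k i : ℕ) : Finset ℕ := Ioc (fl k i) (fl k (i + 1))

lemma mem_cell (k i n : ℕ) : n ∈ cell k i ↔ 1 < n ∧ idx k n = i := by
  unfold cell fl
  rw [mem_Ioc, Nat.floor_lt (lam_pow_pos k _).le, Nat.le_floor_iff (lam_pow_pos k _).le]
  constructor
  · rintro ⟨h1, h2⟩
    exact ⟨by exact_mod_cast (one_le_lam_pow k i).trans_lt h1, idx_eq k n i h1 h2⟩
  · rintro ⟨h1, rfl⟩
    exact ⟨idx_lt k n h1, idx_spec k n⟩

lemma le_fl (k n m : ℕ) (h : idx k n ≤ m) : n ≤ fl k (m + 1) := by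
  unfold fl
  rw [Nat.le_floor_iff (lam_pow_pos k _).le]
  exact (idx_spec k n).trans (pow_le_pow_right₀ (one_lt_lam k).le (by omega))

/-- The weight `R(n) Λ(n) / n`, where `R` is the indicator of rough numbers. -/
noncomputable def wt (k n : ℕ) : ℝ := rgh k n * Λ n / n

lemma wt_nonneg (k n : ℕ) : 0 ≤ wt k n :=
  div_nonneg (mul_nonneg (rgh_nonneg k n) (vM_nonneg n)) (Nat.cast_nonneg _)

lemma wt_one (k : ℕ) : wt k 1 = 0 := by simp [wt]

/-- Pairs of integers in `(1, L]`. -/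
def QQ (L : ℕ) : Finset (ℕ × ℕ) := Ioc 1 L ×ˢ Ioc 1 L

lemma mem_QQ (L : ℕ) (p : ℕ × ℕ) : p ∈ QQ L ↔ (1 < p.1 ∧ p.1 ≤ L) ∧ (1 < p.2 ∧ p.2 ≤ L) := by
  unfold QQ; rw [mem_product, mem_Ioc, mem_Ioc]

lemma conv_raw (k m : ℕ) : conv (fun i => ∑ n ∈ cell k i, wt k n) m
    = ∑ p ∈ (QQ (fl k (m + 1))).filter (fun p => idx k p.1 + idx k p.2 = m),
        wt k p.1 * wt k p.2 := by
  unfold conv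
  rw [← sum_fiberwise_of_maps_to (s := (QQ (fl k (m + 1))).filter
      (fun p => idx k p.1 + idx k p.2 = m)) (t := range (m + 1)) (g := fun p => idx k p.1) (by
    intro p hp
    rw [mem_filter] at hp
    rw [mem_range]; omega) (fun p => wt k p.1 * wt k p.2)]
  refine sum_congr rfl fun i hi => ?_
  rw [mem_range] at hi
  rw [sum_mul_sum, ← sum_product']
  refine sum_congr ?_ fun _ _ => rfl
  ext ⟨x, y⟩
  rw [mem_product, mem_cell, mem_cell, mem_filter, mem_filter, mem_QQ]
  constructor
  · rintro ⟨⟨h1, h2⟩, h3, h4⟩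
    exact ⟨⟨⟨⟨h1, le_fl k x m (by simp only at *; omega)⟩, h3, le_fl k y m (by simp only at *; omega)⟩,
      by simp only at *; omega⟩, h2⟩
  · rintro ⟨⟨⟨⟨h1, _⟩, h3, _⟩, h4⟩, h5⟩
    exact ⟨⟨h1, h5⟩, h3, by simp only at *; omega⟩

lemma beta_raw (k m : ℕ) : ∑ n ∈ cell k m, ∑ x ∈ n.divisorsAntidiagonal, wt k x.1 * wt k x.2
    = ∑ p ∈ (QQ (fl k (m + 1))).filter (fun p => idx k (p.1 * p.2) = m),
        wt k p.1 * wt k p.2 := by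
  rw [← sum_fiberwise_of_maps_to (s := (QQ (fl k (m + 1))).filter
      (fun p => idx k (p.1 * p.2) = m)) (t := cell k m) (g := fun p => p.1 * p.2) (by
    intro p hp
    rw [mem_filter, mem_QQ] at hp
    rw [mem_cell]; exact ⟨by nlinarith, hp.2⟩) (fun p => wt k p.1 * wt k p.2)]
  refine sum_congr rfl fun n hn => ?_
  rw [mem_cell] at hn
  symm
  refine sum_subset ?_ ?_
  · intro p hp
    rw [mem_filter] at hp
    rw [Nat.mem_divisorsAntidiagonal]
    exact ⟨hp.2, by omega⟩
  · intro p hp hp2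
    rw [Nat.mem_divisorsAntidiagonal] at hp
    by_contra hne
    have n1 : p.1 ≠ 1 := fun h => hne (by rw [h, wt_one, zero_mul])
    have n2 : p.2 ≠ 1 := fun h => hne (by rw [h, wt_one, mul_zero])
    have z1 : p.1 ≠ 0 := fun h => hp.2 (by rw [← hp.1, h, zero_mul])
    have z2 : p.2 ≠ 0 := fun h => hp.2 (by rw [← hp.1, h, mul_zero])
    have hnL := le_fl k n m hn.2.le
    apply hp2
    rw [mem_filter, mem_filter, mem_QQ]
    have l1 : p.1 ≤ p.1 * p.2 := Nat.le_mul_of_pos_right _ (by omega)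
    have l2 : p.2 ≤ p.1 * p.2 := Nat.le_mul_of_pos_left _ (by omega)
    rw [hp.1] at l1 l2
    exact ⟨⟨⟨⟨by omega, by omega⟩, by omega, by omega⟩, by rw [hp.1]; exact hn.2⟩, hp.1⟩

/-- The part of the convolution at `m` coming from products that land in cell `m + 1`. -/
noncomputable def thraw (k m : ℕ) : ℝ :=
  ∑ p ∈ (QQ (fl k (m + 1))).filter
    (fun p => idx k p.1 + idx k p.2 = m ∧ idx k (p.1 * p.2) = m + 1), wt k p.1 * wt k p.2

lemma thraw_nonneg (k m : ℕ) : 0 ≤ thraw k m :=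
  sum_nonneg fun _ _ => mul_nonneg (wt_nonneg _ _) (wt_nonneg _ _)

lemma thraw_le (k m : ℕ) : thraw k m ≤ conv (fun i => ∑ n ∈ cell k i, wt k n) m := by
  rw [conv_raw]
  refine sum_le_sum_of_subset_of_nonneg ?_ fun _ _ _ => mul_nonneg (wt_nonneg _ _) (wt_nonneg _ _)
  intro p hp
  rw [mem_filter] at *
  exact ⟨hp.1, hp.2.1⟩

lemma thraw_ext (k m : ℕ) : thraw k m = ∑ p ∈ (QQ (fl k (m + 2))).filter
    (fun p => idx k p.1 + idx k p.2 = m ∧ idx k (p.1 * p.2) = m + 1), wt k p.1 * wt k p.2 := by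
  unfold thraw
  refine sum_congr ?_ fun _ _ => rfl
  ext p
  rw [mem_filter, mem_filter, mem_QQ, mem_QQ]
  have hmono := fl_mono k (by omega : m + 1 ≤ m + 2)
  constructor
  · rintro ⟨⟨⟨h1, h2⟩, h3, h4⟩, h5⟩
    exact ⟨⟨⟨h1, h2.trans hmono⟩, h3, h4.trans hmono⟩, h5⟩
  · rintro ⟨⟨⟨h1, h2⟩, h3, h4⟩, h5⟩
    exact ⟨⟨⟨h1, le_fl k _ m (by omega)⟩, h3, le_fl k _ m (by omega)⟩, h5⟩

/-- Regrouping the products `xy` of cell `m + 1` by `idx x + idx y`, which equals `m + 1` or `m`. -/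
lemma split_raw (k m : ℕ) :
    ∑ n ∈ cell k (m + 1), ∑ x ∈ n.divisorsAntidiagonal, wt k x.1 * wt k x.2
    = conv (fun i => ∑ n ∈ cell k i, wt k n) (m + 1) - thraw k (m + 1) + thraw k m := by
  rw [beta_raw, conv_raw, thraw_ext k m]
  unfold thraw
  rw [sum_filter, sum_filter, sum_filter, sum_filter, ← sum_sub_distrib, ← sum_add_distrib]
  refine sum_congr rfl fun p hp => ?_
  rw [mem_QQ] at hp
  have := idx_mul k p.1 p.2 hp.1.1 hp.2.1
  by_cases h1 : idx k p.1 + idx k p.2 = m + 1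
  · rw [if_pos h1, if_neg (c := _ ∧ idx k (p.1 * p.2) = m + 1) (by omega)]
    by_cases h2 : idx k (p.1 * p.2) = m + 1
    · rw [if_pos h2, if_neg (by omega)]; ring
    · rw [if_neg h2, if_pos ⟨h1, by omega⟩]; ring
  · rw [if_neg h1, if_neg (c := idx k p.1 + idx k p.2 = m + 1 ∧ _) (by omega)]
    by_cases h2 : idx k (p.1 * p.2) = m + 1
    · rw [if_pos h2, if_pos ⟨by omega, h2⟩]; ring
    · rw [if_neg h2, if_neg (by omega)]; ring

lemma log_cell (k i n : ℕ) (hn : n ∈ cell k i) :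
    i * log (lam k) ≤ log n ∧ log (n:ℝ) ≤ (i + 1) * log (lam k) := by
  rw [mem_cell] at hn
  obtain ⟨h1, rfl⟩ := hn
  have hn0 : (0:ℝ) < n := by exact_mod_cast (by omega : 0 < n)
  constructor
  · rw [← log_pow]; exact log_le_log (lam_pow_pos k _) (idx_lt k n h1).le
  · have := log_le_log hn0 (idx_spec k n)
    rwa [log_pow, Nat.cast_add, Nat.cast_one] at this

lemma wt_mul (k n : ℕ) (x : ℕ × ℕ) (hx : x ∈ n.divisorsAntidiagonal) :
    rgh k n * (Λ x.1 * Λ x.2) / n = wt k x.1 * wt k x.2 := by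
  rw [Nat.mem_divisorsAntidiagonal] at hx
  have z : x.1 * x.2 ≠ 0 := by rw [hx.1]; exact hx.2
  have z1 : x.1 ≠ 0 := left_ne_zero_of_mul z
  have z2 : x.2 ≠ 0 := right_ne_zero_of_mul z
  rw [← hx.1]
  unfold wt
  rw [rgh_mul, Nat.cast_mul]
  rw [div_mul_div_comm]
  ring

lemma Lam2_cell (k m : ℕ) : ∑ n ∈ cell k m, rgh k n * Lam2 n / n
    = ∑ n ∈ cell k m, wt k n * log n
      + ∑ n ∈ cell k m, ∑ x ∈ n.divisorsAntidiagonal, wt k x.1 * wt k x.2 := by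
  rw [← sum_add_distrib]
  refine sum_congr rfl fun n _ => ?_
  rw [sum_congr rfl fun x hx => (wt_mul k n x hx).symm]
  rw [← sum_div, ← mul_sum]
  unfold Lam2 wt
  ring

/-- The logarithmic length `log λ` of a grid cell. -/
noncomputable def ell (k : ℕ) : ℝ := log (lam k)

/-- Normalised mass of the rough prime powers in the cell. -/
noncomputable def alp (k i : ℕ) : ℝ := (∑ n ∈ cell k i, wt k n) / ell k

/-- Normalised mass of the rough part of `Λ₂` in the cell. -/
noncomputable def bet (k i : ℕ) : ℝ := (∑ n ∈ cell k i, rgh k n * Lam2 n / n) / ell k ^ 2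

/-- The normalisation of `thraw`. -/
noncomputable def tht (k i : ℕ) : ℝ := thraw k i / ell k ^ 2

lemma ell_pos (k : ℕ) : 0 < ell k := log_pos (one_lt_lam k)

lemma conv_alp (k m : ℕ) : conv (alp k) m = conv (fun i => ∑ n ∈ cell k i, wt k n) m / ell k ^ 2 := by
  unfold conv alp
  rw [sum_div]
  refine sum_congr rfl fun i _ => ?_
  rw [div_mul_div_comm, sq]

lemma grid_mid (k m : ℕ) : bet k (m + 1) - conv (alp k) (m + 1) + tht k (m + 1) - tht k m
    = (∑ n ∈ cell k (m + 1), wt k n * log n) / ell k ^ 2 := by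
  unfold bet tht
  rw [conv_alp, Lam2_cell, split_raw]
  ring

lemma grid_lo (k m : ℕ) : (m + 1) * alp k (m + 1)
    ≤ bet k (m + 1) - conv (alp k) (m + 1) + tht k (m + 1) - tht k m := by
  have hl := ell_pos k
  rw [grid_mid]
  unfold alp
  rw [le_div_iff₀ (by positivity)]
  have e : (m + 1) * ((∑ n ∈ cell k (m + 1), wt k n) / ell k) * ell k ^ 2
      = ∑ n ∈ cell k (m + 1), wt k n * ((m + 1) * ell k) := by
    rw [← sum_mul]; field_simp
  rw [e]
  refine sum_le_sum fun n hn => mul_le_mul_of_nonneg_left ?_ (wt_nonneg k n)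
  have := (log_cell k _ n hn).1
  push_cast at this
  exact this

lemma grid_hi (k m : ℕ) : bet k (m + 1) - conv (alp k) (m + 1) + tht k (m + 1) - tht k m
    ≤ (m + 2) * alp k (m + 1) := by
  have hl := ell_pos k
  rw [grid_mid]
  unfold alp
  rw [div_le_iff₀ (by positivity)]
  have e : (m + 2) * ((∑ n ∈ cell k (m + 1), wt k n) / ell k) * ell k ^ 2
      = ∑ n ∈ cell k (m + 1), wt k n * ((m + 2) * ell k) := by
    rw [← sum_mul]; field_simp
  rw [e]
  refine sum_le_sum fun n hn => mul_le_mul_of_nonneg_left ?_ (wt_nonneg k n)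
  have := (log_cell k _ n hn).2
  push_cast at this
  unfold ell
  linarith

end SepPow

/-! ### Mertens and Selberg estimates on the grid -/

namespace SepPow
open Finset Real
open scoped ArithmeticFunction.vonMangoldt

lemma sum_cells (k j : ℕ) : ∑ i ∈ range j, ∑ n ∈ cell k i, wt k n = ∑ n ∈ Ioc 1 (fl k j), wt k n := by
  induction j with
  | zero => simp [fl_zero]
  | succ j ih =>
    rw [sum_range_succ, ih]
    exact sum_Ioc_consecutive _ (one_le_fl k j) (fl_mono k (Nat.le_succ j))

lemma log_fl (k j : ℕ) : j * ell k - 1 ≤ log (fl k j) ∧ log (fl k j : ℝ) ≤ j * ell k := by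
  have hL := one_le_lam_pow k j
  have h1 : (1:ℝ) ≤ fl k j := by exact_mod_cast one_le_fl k j
  have h2 : (fl k j : ℝ) ≤ lam k ^ j := Nat.floor_le (lam_pow_pos k j).le
  have h3 : lam k ^ j < fl k j + 1 := Nat.lt_floor_add_one _
  have e : j * ell k = log (lam k ^ j) := by rw [log_pow]; rfl
  rw [e]
  constructor
  · have : log (lam k ^ j) ≤ log (2 * fl k j) := log_le_log (lam_pow_pos k j) (by linarith)
    rw [log_mul (by norm_num) (by linarith)] at this
    linarith [log_two_lt_d9]
  · exact log_le_log (by linarith) h2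

/-- Mertens' estimate on the grid; the prime factors `≤ z` removed by the sieve account for the error
`3 log z`. -/
lemma grid_mert (k : ℕ) (hk : 20 ≤ k) (j : ℕ) :
    |∑ i ∈ range j, alp k i - j| ≤ 3 * log (zz k) / ell k := by
  have hl := ell_pos k
  have hq := log_zz_large k hk
  have e : ∑ i ∈ range j, alp k i - j = (∑ n ∈ Ioc 0 (fl k j), wt k n - j * ell k) / ell k := by
    unfold alp
    rw [← sum_div, sum_cells, ← sum_Ioc_consecutive _ zero_le_one (one_le_fl k j),
      show Ioc 0 1 = {1} from rfl, sum_singleton, wt_one, zero_add]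
    field_simp
  rw [e, abs_div, abs_of_pos hl]
  refine div_le_div_of_nonneg_right ?_ hl.le
  have hm := abs_le.1 (mertens (fl k j) (one_le_fl k j))
  have hn := nonrough_mertens k (fl k j)
  have hn0 : 0 ≤ ∑ n ∈ Ioc 0 (fl k j), (1 - rgh k n) * Λ n / n := sum_nonneg fun n _ =>
    div_nonneg (mul_nonneg (by linarith [rgh_le_one k n]) (vM_nonneg n)) (Nat.cast_nonneg _)
  have es : ∑ n ∈ Ioc 0 (fl k j), wt k n
      = ∑ n ∈ Ioc 0 (fl k j), Λ n / n - ∑ n ∈ Ioc 0 (fl k j), (1 - rgh k n) * Λ n / n := by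
    rw [← sum_sub_distrib]
    refine sum_congr rfl fun n _ => ?_
    unfold wt; ring
  have hf := log_fl k j
  rw [es, abs_le]
  constructor <;> linarith

lemma ell_bounds (k : ℕ) : (1 / (zz k : ℝ)) / (1 + 1 / (zz k : ℝ)) ≤ ell k ∧ ell k ≤ 1 / (zz k : ℝ) := by
  have hz := zz_pos' k
  have hl : 0 < lam k := by linarith [one_lt_lam k]
  constructor
  · have h := one_sub_inv_le_log_of_pos hl
    refine le_trans (le_of_eq ?_) h
    unfold lam
    field_simp
    ring
  · have h := log_le_sub_one_of_pos hl
    unfold ell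
    refine h.trans (le_of_eq ?_)
    unfold lam; ring

/-- Relation between the cell `(Y, Y+H]` with endpoints `⌊L⌋`, `⌊L (1+u)⌋` and its logarithmic length `l`. -/
lemma step_arith (u l L Y H : ℝ) (hu0 : 0 < u) (hu : u ≤ 1 / 16) (hl1 : u / (1 + u) ≤ l) (hl2 : l ≤ u)
    (hL : 1 ≤ L * u ^ 2) (hY1 : L - 1 ≤ Y) (hY2 : Y + H ≤ L * (1 + u)) (hH1 : L * u - 1 ≤ H) :
    H ≤ l * (1 + 8 * u) * Y ∧ l * (1 - 8 * u) * (Y + H) ≤ H := by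
  have hL0 : 0 < L := by
    by_contra h
    nlinarith [sq_nonneg u]
  rw [div_le_iff₀ (by linarith)] at hl1
  have hl0 : 0 < l := by nlinarith
  have hLu : L * u ^ 2 ≤ L * u := by
    have : u ^ 2 ≤ u := by nlinarith
    nlinarith
  constructor
  · have a : H ≤ L * u * (1 + u) := by nlinarith
    have b : L * (1 - u) ≤ Y := by linarith
    have c : u * (1 + u) ≤ l * (1 + 8 * u) * (1 - u) := by
      have c1 : u * (1 + u) ≤ l * (1 + u) * (1 + u) := by nlinarith
      have c2 : (1 + u) * (1 + u) ≤ (1 + 8 * u) * (1 - u) := by nlinarith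
      nlinarith
    calc H ≤ L * (u * (1 + u)) := by linarith
      _ ≤ L * (l * (1 + 8 * u) * (1 - u)) := by gcongr
      _ = l * (1 + 8 * u) * (L * (1 - u)) := by ring
      _ ≤ _ := by gcongr
  · have a : L * u * (1 - u) ≤ H := by nlinarith
    have e : (1 - 8 * u) * (1 + u) ≤ 1 - u := by nlinarith
    have h8 : 0 ≤ 1 - 8 * u := by linarith
    calc l * (1 - 8 * u) * (Y + H) ≤ u * (1 - 8 * u) * (L * (1 + u)) := by
          have : 0 ≤ L * (1 + u) := by positivity
          by_cases hs : 0 ≤ Y + H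
          · gcongr
          · refine le_trans (mul_nonpos_of_nonneg_of_nonpos (by positivity) (by linarith)) (by positivity)
      _ = L * u * ((1 - 8 * u) * (1 + u)) := by ring
      _ ≤ L * u * (1 - u) := by gcongr
      _ ≤ H := a

/-- The passage from the sum `T` of `Λ₂` over a cell, given by Selberg's formula, to the sum `B` of `Λ₂(n)/n`. -/
lemma breg_arith (u l x q s T Y H B A : ℝ) (hu0 : 0 < u) (hu : u ≤ 1 / 16) (hl0 : 0 < l)
    (hq1 : 1 ≤ q) (hA1 : 1 ≤ A) (hux : u * x ≤ q / 16) (hx : 2 ^ 35 * (A * q) ≤ x) (hs1 : x - 1 ≤ s) (hs2 : s ≤ x)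
    (hY : 0 < Y) (hH : 0 < H)
    (hT : |T - 2 * H * s| ≤ A * q * H)
    (h1 : H ≤ l * (1 + 8 * u) * Y) (h2 : l * (1 - 8 * u) * (Y + H) ≤ H)
    (hB1 : B * Y ≤ T) (hB2 : T ≤ B * (Y + H)) :
    |B - 2 * x * l| ≤ x * l / 2 ^ 32 := by
  have hAq : q ≤ A * q := by nlinarith
  have hx0 : 0 < x := by nlinarith
  obtain ⟨t1, t2⟩ := abs_le.1 hT
  have hAu : A * q * u ≤ A * q * (1 / 16) := by gcongr
  have hm : 2 * x * (8 * u) + A * q * (1 + 8 * u) ≤ x / 2 ^ 32 := by linarith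
  have u1 : T ≤ H * (2 * x + A * q) := by nlinarith
  have u2 : H * (2 * x - 2 - A * q) ≤ T := by nlinarith
  have e1 : B * Y ≤ (l * (1 + 8 * u) * (2 * x + A * q)) * Y := by
    have : H * (2 * x + A * q) ≤ (l * (1 + 8 * u) * Y) * (2 * x + A * q) := by
      have : 0 ≤ 2 * x + A * q := by linarith
      gcongr
    linarith
  have e1' := le_of_mul_le_mul_right e1 hY
  have e2 : (l * (1 - 8 * u) * (2 * x - 2 - A * q)) * (Y + H) ≤ B * (Y + H) := by
    have : (l * (1 - 8 * u) * (Y + H)) * (2 * x - 2 - A * q) ≤ H * (2 * x - 2 - A * q) := by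
      have : 0 ≤ 2 * x - 2 - A * q := by linarith
      gcongr
    linarith
  have e2' := le_of_mul_le_mul_right e2 (by linarith)
  have hm2 : 2 * x * (8 * u) + A * q + 2 ≤ x / 2 ^ 32 := by linarith
  have p1 : l * (2 * x * (8 * u) + A * q * (1 + 8 * u)) ≤ l * (x / 2 ^ 32) := by gcongr
  have p2 : l * (2 * x * (8 * u) + A * q + 2) ≤ l * (x / 2 ^ 32) := by gcongr
  have p3 : 0 ≤ l * (8 * u) * (2 + A * q) := by
    have : 0 ≤ 2 + A * q := by linarith
    positivity
  rw [abs_le]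
  constructor
  · nlinarith
  · nlinarith

lemma grid_range (k : ℕ) (hk : 20 ≤ k) (m : ℕ) (h1 : 2 ^ 160 * log (zz k) ≤ m * ell k)
    (h2 : m * ell k ≤ 2 ^ 202 * log (zz k)) :
    zz k ^ 8192 ≤ fl k m ∧ fl k m ≤ 2 ^ 2 ^ (k + 202) ∧ (zz k : ℝ) ^ 3 ≤ lam k ^ m := by
  have hz := zz_pos' k
  have hq := log_zz_large k hk
  have hlog := log_fl k m
  have hzN : ((zz k : ℕ) : ℝ) ^ 8192 ≤ lam k ^ m := by
    rw [← log_le_log_iff (by positivity) (lam_pow_pos k m), log_pow, log_pow]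
    push_cast
    unfold ell at h1
    have : (8192:ℝ) ≤ 2 ^ 160 := by norm_num
    nlinarith
  have hY1 : zz k ^ 8192 ≤ fl k m := by
    unfold fl
    rw [Nat.le_floor_iff (lam_pow_pos k m).le]
    push_cast
    exact hzN
  have hY2 : fl k m ≤ 2 ^ 2 ^ (k + 202) := by
    have : (fl k m : ℝ) ≤ ((2 ^ 2 ^ (k + 202) : ℕ) : ℝ) := by
      rw [← log_le_log_iff (by exact_mod_cast one_le_fl k m) (by positivity)]
      refine (hlog.2.trans h2).trans (le_of_eq ?_)
      rw [Nat.cast_pow, log_pow, log_zz, Nat.cast_pow, pow_add]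
      push_cast
      ring
    exact_mod_cast this
  have hz1 : (1:ℝ) ≤ zz k := by exact_mod_cast one_le_two.trans (zz_two_le k)
  exact ⟨hY1, hY2, le_trans (pow_le_pow_right₀ hz1 (by norm_num)) hzN⟩

lemma Tsum_sandwich (k Y H : ℕ) (hY : 1 ≤ Y) :
    (∑ n ∈ Ioc Y (Y + H), rgh k n * Lam2 n / n) * Y ≤ Tsum k Y H ∧
      Tsum k Y H ≤ (∑ n ∈ Ioc Y (Y + H), rgh k n * Lam2 n / n) * (Y + H) := by
  unfold Tsum
  rw [sum_mul, sum_mul]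
  constructor
  all_goals
    refine sum_le_sum fun n hn => ?_
    rw [mem_Ioc] at hn
    have hn1 : (Y : ℝ) ≤ n := by exact_mod_cast hn.1.le
    have hn2 : (n : ℝ) ≤ Y + H := by exact_mod_cast hn.2
    have hn0 : (0:ℝ) < n := by exact_mod_cast (by omega : 0 < n)
    have := mul_nonneg (rgh_nonneg k n) (Lam2_nonneg n)
    rw [div_mul_eq_mul_div]
  · rw [div_le_iff₀ hn0]
    exact mul_le_mul_of_nonneg_left hn1 this
  · rw [le_div_iff₀ hn0]
    exact mul_le_mul_of_nonneg_left hn2 this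

/-- Selberg's formula in short intervals, read on a single grid cell. -/
lemma grid_breg (k : ℕ) (hk : 20 ≤ k) (m : ℕ) (h1 : 2 ^ 160 * log (zz k) ≤ m * ell k)
    (h2 : m * ell k ≤ 2 ^ 202 * log (zz k)) : |bet k m - 2 * m| ≤ m / 2 ^ 32 := by
  have hz := zz_pos' k
  have hz206 : (2:ℝ) ^ 206 ≤ zz k :=
    (pow_le_pow_right₀ one_le_two (by norm_num)).trans (zz_large k hk)
  have hz3 := (grid_range k hk m h1 h2).2.2
  have hq := log_zz_large k hk
  have hqz := log_zz_le k
  have hlb := ell_bounds k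
  have hl := ell_pos k
  have hlog := log_fl k m
  set L := lam k ^ m with hL
  have hL0 : 0 < L := lam_pow_pos k m
  set u := 1 / (zz k : ℝ) with hu
  have hu0 : 0 < u := by positivity
  have hL' : lam k ^ (m + 1) = L * (1 + u) := by rw [pow_succ]; rfl
  have a1 : (fl k m : ℝ) ≤ L := Nat.floor_le hL0.le
  have a2 : L - 1 ≤ fl k m := (Nat.sub_one_lt_floor L).le
  have a3 : (fl k (m + 1) : ℝ) ≤ L * (1 + u) := by
    rw [← hL']; exact Nat.floor_le (lam_pow_pos k _).le
  have a4 : L * (1 + u) - 1 ≤ fl k (m + 1) := by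
    rw [← hL']; exact (Nat.sub_one_lt_floor _).le
  obtain ⟨H, hH⟩ := Nat.exists_eq_add_of_le (fl_mono k (Nat.le_succ m))
  rw [Nat.succ_eq_add_one] at hH
  have hHr : (fl k (m + 1) : ℝ) = fl k m + H := by rw [hH]; push_cast; rfl
  have hz16 : (16:ℝ) ≤ zz k := le_trans (by norm_num) hz206
  have hu16 : u ≤ 1 / 16 := one_div_le_one_div_of_le (by norm_num) hz16
  have huz : (zz k : ℝ) * u = 1 := by rw [hu]; field_simp
  have hLu : (zz k : ℝ) ≤ L * u ^ 2 := by
    have : (zz k : ℝ) ^ 3 * u ^ 2 ≤ L * u ^ 2 := by gcongr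
    have e : (zz k : ℝ) ^ 3 * u ^ 2 = zz k * (zz k * u) ^ 2 := by ring
    rw [e, huz] at this
    linarith
  have hux : u * (m * ell k) ≤ log (zz k) / 16 := by
    have h3 : u * (m * ell k) ≤ u * (zz k * log (zz k) / 16) := by
      have : 2 ^ 206 * log (zz k : ℝ) ≤ zz k * log (zz k) := by gcongr
      have : m * ell k ≤ zz k * log (zz k) / 16 := by linarith
      gcongr
    have e : u * (zz k * log (zz k) / 16) = (zz k * u) * log (zz k) / 16 := by ring
    rw [e, huz] at h3
    linarith
  have hst := step_arith u (ell k) L (fl k m) H hu0 hu16 hlb.1 hlb.2 (by linarith) a2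
    (by linarith) (by linarith)
  have hY0 : (0:ℝ) < fl k m := by exact_mod_cast one_le_fl k m
  have hLu1 : L * u ^ 2 ≤ L * u := by
    have : u ^ 2 ≤ u := by nlinarith
    gcongr
  have hH0 : (0:ℝ) < H := by linarith
  have hHY : H ≤ fl k m := by
    have : (H:ℝ) ≤ fl k m := by nlinarith
    exact_mod_cast this
  have hYH : fl k m ≤ H * zz k ^ 2 := by
    have : (fl k m : ℝ) ≤ H * (zz k : ℝ) ^ 2 := by
      have b1 : L * u / 2 ≤ H := by linarith
      have b2 : L * u / 2 * (zz k : ℝ) ^ 2 ≤ H * (zz k : ℝ) ^ 2 := by gcongr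
      have e : L * u / 2 * (zz k : ℝ) ^ 2 = L * ((zz k * u) * zz k / 2) := by ring
      rw [e, huz] at b2
      nlinarith
    exact_mod_cast this
  have hT := short_selberg k hk (fl k m) H (grid_range k hk m h1 h2).1
    (grid_range k hk m h1 h2).2.1 hHY hYH
  have hcell : cell k m = Ioc (fl k m) (fl k m + H) := by unfold cell; rw [hH]
  set B := ∑ n ∈ cell k m, rgh k n * Lam2 n / n with hB
  have hBB := Tsum_sandwich k (fl k m) H (one_le_fl k m)
  rw [← hcell, ← hB] at hBB
  have key := breg_arith u (ell k) (m * ell k) (log (zz k)) (log (fl k m)) (Tsum k (fl k m) H) (fl k m)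
    H B (2 ^ 125) hu0 hu16 hl (by linarith) (by norm_num) hux (by linarith) hlog.1 hlog.2 hY0 hH0 hT
    hst.1 hst.2 hBB.1 hBB.2
  have e : bet k m - 2 * m = (B - 2 * (m * ell k) * ell k) / ell k ^ 2 := by
    unfold bet; rw [← hB]; field_simp
  rw [e, abs_div, abs_of_pos (by positivity : 0 < ell k ^ 2), div_le_iff₀ (by positivity)]
  refine key.trans (le_of_eq ?_)
  ring

/-- The average of the normalised prime mass over short windows is bounded below. -/
theorem fav_alp_gt (k : ℕ) (hk : 20 ≤ k) (r : ℕ) (h1 : 2 ^ 200 * log (zz k) ≤ (8 * r : ℕ) * ell k)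
    (h2 : (8 * r : ℕ) * ell k ≤ 2 ^ 201 * log (zz k)) :
    1 / 67108864 < fav (alp k) (2 ^ 32) (8 * r) := by
  have hl := ell_pos k
  have hq := log_zz_large k hk
  have hlz : ell k ≤ 1 / 2 ^ 32 := (ell_bounds k).2.trans
    (one_div_le_one_div_of_le (by positivity)
      ((pow_le_pow_right₀ (by norm_num) (by norm_num)).trans (zz_large k hk)))
  set q := log (zz k : ℝ) with hqd
  have hq0 : 0 < q := lt_of_lt_of_le (by positivity) hq
  set h := ⌈2 ^ 160 * q / ell k⌉₊ with hh
  have b1 : 2 ^ 160 * q / ell k ≤ h := Nat.le_ceil _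
  have b2 : (h:ℝ) < 2 ^ 160 * q / ell k + 1 := Nat.ceil_lt_add_one (by positivity)
  have b1' : 2 ^ 160 * q ≤ h * ell k := by rwa [div_le_iff₀ hl] at b1
  have b2' : (h:ℝ) * ell k ≤ 2 ^ 160 * q + 1 := by
    have : (h:ℝ) * ell k ≤ (2 ^ 160 * q / ell k + 1) * ell k := by gcongr
    have e : (2 ^ 160 * q / ell k + 1) * ell k = 2 ^ 160 * q + ell k := by field_simp
    linarith
  have g : Grid (alp k) (bet k) (tht k) h (8 * r + 2 ^ 32) := by
    refine ⟨fun i => div_nonneg (sum_nonneg fun _ _ => wt_nonneg _ _) hl.le, ?_, ?_, ?_, grid_lo k, grid_hi k, ?_⟩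
    · intro j
      refine (grid_mert k hk j).trans (le_trans ?_ b1)
      gcongr
      norm_num
    · intro m; exact div_nonneg (thraw_nonneg _ _) (by positivity)
    · intro m
      rw [conv_alp]
      unfold tht
      gcongr
      exact thraw_le k m
    · intro m m1 m2
      have m1' : (h:ℝ) ≤ m := by exact_mod_cast m1
      have m2' : (m:ℝ) ≤ (8 * r : ℕ) + 2 ^ 32 := by exact_mod_cast m2
      refine grid_breg k hk m (b1'.trans (by gcongr)) ?_
      have : (m:ℝ) * ell k ≤ ((8 * r : ℕ) + 2 ^ 32) * ell k := by gcongr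
      rw [add_mul] at this
      rw [← hqd]
      linarith
  refine g.fav_gt (2 ^ 32) r le_rfl ?_ ?_ le_rfl
  · have : ((2 ^ 32 : ℕ) : ℝ) ≤ h := by
      refine le_trans ?_ b1
      rw [le_div_iff₀ hl]
      push_cast
      linarith
    exact_mod_cast this
  · have : ((h * 2 ^ 36 : ℕ) : ℝ) ≤ (8 * r : ℕ) := by
      refine le_of_mul_le_mul_right ?_ hl
      push_cast at *
      linarith
    exact_mod_cast this

end SepPow

/-! ### Primes just above powers of two -/

namespace SepPow
open Finset Real
open scoped ArithmeticFunction.vonMangoldt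

/-- Without primes in `(a, b]` only proper prime powers contribute to `∑ Λ`. -/
lemma no_prime_sum (a b : ℕ) (ha : 1 ≤ a) (hab : a ≤ b) (hnp : ∀ p ∈ Ioc a b, ¬ p.Prime) :
    ∑ n ∈ Ioc a b, Λ n ≤ 2 * √b * log b := by
  have h := Chebyshev.psi_sub_theta_le (x := b) (by exact_mod_cast ha.trans hab)
  rw [Chebyshev.psi_sub_theta_eq_sum_not_prime, Nat.floor_natCast] at h
  refine le_trans (sum_le_sum_of_subset_of_nonneg ?_ fun n _ _ => vM_nonneg n) h
  intro n hn
  rw [mem_filter]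
  refine ⟨?_, hnp n hn⟩
  rw [mem_Ioc] at *
  omega

lemma sum_alp (k J N : ℕ) :
    ∑ t ∈ range N, alp k (J + t) = (∑ n ∈ Ioc (fl k J) (fl k (J + N)), wt k n) / ell k := by
  unfold alp
  rw [← sum_div]
  congr 1
  induction N with
  | zero => simp
  | succ N ih =>
    rw [sum_range_succ, ih]
    exact sum_Ioc_consecutive _ (fl_mono k (by omega)) (fl_mono k (by omega))

/-- The proper prime powers in the window contribute a bounded amount to the normalised mass. -/
lemma pp_arith (z A a b l S lb : ℝ) (hz : 2 ^ 206 ≤ z) (hA : z ^ 8 ≤ A) (ha : A / 2 ≤ a)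
    (hb : b ≤ 2 * A) (hl : 1 / (2 * z) ≤ l) (hlb0 : 0 ≤ lb) (hlb : lb ≤ z ^ 2)
    (hS : S * a ≤ 2 * √b * lb) : S / l ≤ 64 := by
  have hz0 : 0 < z := lt_of_lt_of_le (by positivity) hz
  have hA0 : 0 < A := lt_of_lt_of_le (by positivity) hA
  have hl0 : 0 < l := lt_of_lt_of_le (by positivity) hl
  have hsb : √b ≤ 2 * √A := by
    rw [show 2 * √A = √(4 * A) by
      rw [sqrt_mul (by norm_num), show (4:ℝ) = 2 ^ 2 by norm_num, sqrt_sq (by norm_num)]]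
    exact sqrt_le_sqrt (by linarith)
  have hsA : z ^ 4 ≤ √A := by
    apply le_sqrt_of_sq_le
    refine le_trans (le_of_eq ?_) hA
    ring
  have hsA2 : √A * √A = A := mul_self_sqrt hA0.le
  have hsA0 : 0 < √A := sqrt_pos.2 hA0
  rw [div_le_iff₀ hl0]
  by_cases hS0 : S ≤ 0
  · exact hS0.trans (by positivity)
  push Not at hS0
  have c1 : S * (A / 2) ≤ 2 * (2 * √A) * z ^ 2 := by
    calc S * (A / 2) ≤ S * a := by gcongr
      _ ≤ 2 * √b * lb := hS
      _ ≤ _ := by gcongr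
  have c2 : S * √A ≤ 8 * z ^ 2 := by
    have : (S * √A) * √A ≤ (8 * z ^ 2) * √A := by
      calc (S * √A) * √A = S * (√A * √A) := by ring
        _ = S * A := by rw [hsA2]
        _ ≤ _ := by linarith
    exact le_of_mul_le_mul_right this hsA0
  have c3 : S * z ^ 4 ≤ 8 * z ^ 2 := le_trans (by gcongr) c2
  have c4 : S * z ^ 2 ≤ 8 := by
    have : (S * z ^ 2) * z ^ 2 ≤ 8 * z ^ 2 := by linarith [show (S * z ^ 2) * z ^ 2 = S * z ^ 4 by ring]
    exact le_of_mul_le_mul_right this (by positivity)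
  have c5 : 64 * (1 / (2 * z)) ≤ 64 * l := by linarith
  refine le_trans ?_ c5
  rw [mul_one_div, le_div_iff₀ (by positivity)]
  have : (1:ℝ) ≤ z := le_trans (by norm_num) hz
  have : S * z ≤ S * z ^ 2 := by
    have : z ≤ z ^ 2 := by nlinarith
    gcongr
  linarith

/-- A prime in the short interval `(λ^(8r), λ^(8r + 2^32)]`. -/
lemma exists_prime_grid (k : ℕ) (hk : 20 ≤ k) (r : ℕ) (h1 : 2 ^ 200 * log (zz k) ≤ (8 * r : ℕ) * ell k)
    (h2 : (8 * r : ℕ) * ell k ≤ 2 ^ 201 * log (zz k)) :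
    ∃ p : ℕ, p.Prime ∧ fl k (8 * r) < p ∧ p ≤ fl k (8 * r + 2 ^ 32) := by
  have hfav := fav_alp_gt k hk r h1 h2
  by_contra hno
  push Not at hno
  set J := 8 * r
  have hq := log_zz_large k hk
  have hqz := log_zz_le k
  have hz := zz_pos' k
  have hz206 : (2:ℝ) ^ 206 ≤ zz k :=
    (pow_le_pow_right₀ one_le_two (by norm_num)).trans (zz_large k hk)
  have hl := ell_bounds k
  have hlam := lam_pow_pos k J
  have hA : (zz k : ℝ) ^ 8 ≤ lam k ^ J := by
    rw [← log_le_log_iff (by positivity) hlam, log_pow, log_pow]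
    push_cast
    unfold ell at h1
    linarith
  have hA1 := one_le_lam_pow k J
  have hN : (2:ℝ) ^ 32 * ell k ≤ 1 / 2 := by
    have : (2:ℝ) ^ 32 * ell k ≤ 2 ^ 32 * (1 / (zz k : ℝ)) := by linarith
    refine this.trans ?_
    rw [mul_one_div, div_le_iff₀ hz]
    linarith
  have hb : (fl k (J + 2 ^ 32) : ℝ) ≤ 2 * lam k ^ J := by
    refine (Nat.floor_le (lam_pow_pos k _).le).trans ?_
    rw [pow_add, mul_comm]
    refine mul_le_mul_of_nonneg_right ?_ hlam.le
    rw [← log_le_log_iff (lam_pow_pos k _) (by norm_num), log_pow, Nat.cast_pow, Nat.cast_ofNat]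
    unfold ell at hN
    linarith [log_two_gt_d9]
  have ha : lam k ^ J / 2 ≤ fl k J := by
    have h3 : lam k ^ J < fl k J + 1 := Nat.lt_floor_add_one _
    have h4 : (1:ℝ) ≤ fl k J := by exact_mod_cast one_le_fl k J
    linarith
  have hab := fl_mono k (Nat.le_add_right J (2 ^ 32))
  have hsum := no_prime_sum _ _ (one_le_fl k J) hab (fun p hp hpp => by
    rw [mem_Ioc] at hp
    exact absurd hp.2 (not_le.2 (hno p hpp hp.1)))
  have hlb := (log_fl k (J + 2 ^ 32)).2
  rw [Nat.cast_add, add_mul, Nat.cast_pow, Nat.cast_ofNat] at hlb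
  have hS : (∑ n ∈ Ioc (fl k J) (fl k (J + 2 ^ 32)), wt k n) * fl k J
      ≤ 2 * √(fl k (J + 2 ^ 32)) * log (fl k (J + 2 ^ 32)) := by
    refine le_trans ?_ hsum
    rw [sum_mul]
    refine sum_le_sum fun n hn => ?_
    rw [mem_Ioc] at hn
    have hn1 : (fl k J : ℝ) ≤ n := by exact_mod_cast hn.1.le
    have hn0 : (0:ℝ) < n := by exact_mod_cast (by omega : 0 < n)
    have hv := vM_nonneg n
    have : wt k n * fl k J ≤ wt k n * n := mul_le_mul_of_nonneg_left hn1 (wt_nonneg k n)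
    refine this.trans ?_
    unfold wt
    rw [div_mul_cancel₀ _ hn0.ne']
    have := mul_le_mul_of_nonneg_right (rgh_le_one k n) hv
    linarith
  have hfin := pp_arith (zz k) (lam k ^ J) (fl k J) (fl k (J + 2 ^ 32)) (ell k) _ _ hz206 hA ha
    hb (by
      refine le_trans ?_ hl.1
      have : (1:ℝ) ≤ zz k := le_trans (by norm_num) hz206
      have e : 1 / (zz k : ℝ) / (1 + 1 / (zz k : ℝ)) = 1 / (zz k + 1) := by field_simp
      rw [e]
      exact one_div_le_one_div_of_le (by linarith) (by linarith))
    (log_nonneg (by exact_mod_cast one_le_fl k _))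
    (by
      refine hlb.trans ?_
      have : (zz k : ℝ) ^ 2 ≥ 2 ^ 206 * log (zz k) := by
        rw [sq]
        exact mul_le_mul hz206 hqz (by linarith) (by linarith)
      linarith) hS
  rw [← sum_alp] at hfin
  unfold fav at hfav
  rw [Nat.cast_pow, Nat.cast_ofNat, lt_div_iff₀ (by positivity)] at hfav
  exact absurd hfin (not_le.2 (lt_of_le_of_lt (by norm_num) hfav))

/-- Primes very slightly larger than powers of two. -/
theorem exists_prime_near (k K : ℕ) (hk : 20 ≤ k) (h1 : 2 ^ (200 + k) ≤ K) (h2 : K < 2 ^ (201 + k)) :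
    ∃ p : ℕ, p.Prime ∧ 2 ^ K < p ∧ (p : ℝ) ≤ 2 ^ K * (1 + 2 ^ 36 / zz k) := by
  have hz := zz_pos' k
  have hz206 : (2:ℝ) ^ 206 ≤ zz k :=
    (pow_le_pow_right₀ one_le_two (by norm_num)).trans (zz_large k hk)
  have hl := ell_bounds k
  have hl0 := ell_pos k
  have hlt := log_two_gt_d9
  -- `8r` is the first multiple of `8` with `λ^(8r) ≥ 2^K`
  set x := K * log 2 / (8 * ell k) with hx
  set r := ⌈x⌉₊ with hr
  have hx0 : 0 ≤ x := by positivity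
  have r1 : x ≤ r := Nat.le_ceil _
  have r2 : (r:ℝ) < x + 1 := Nat.ceil_lt_add_one hx0
  have ex : 8 * x * ell k = K * log 2 := by rw [hx]; field_simp
  have s1 : K * log 2 ≤ (8 * r : ℕ) * ell k := by
    rw [← ex]; push_cast; gcongr
  have s2 : (8 * r : ℕ) * ell k ≤ K * log 2 + 8 * ell k := by
    rw [← ex]; push_cast
    have := mul_le_mul_of_nonneg_right r2.le hl0.le
    linarith
  have hl1 : ell k ≤ 1 / 2 ^ 206 := hl.2.trans (one_div_le_one_div_of_le (by positivity) hz206)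
  have h1' : (2:ℝ) ^ 200 * 2 ^ k ≤ K := by
    rw [← pow_add]; exact_mod_cast h1
  have h2' : (K:ℝ) + 1 ≤ 2 ^ 201 * 2 ^ k := by
    rw [← pow_add]; exact_mod_cast h2
  obtain ⟨p, hp, p1, p2⟩ := exists_prime_grid k hk r
    (by
      refine le_trans ?_ s1
      rw [log_zz]
      have := mul_le_mul_of_nonneg_right h1' (by linarith : 0 ≤ log 2)
      linarith)
    (by
      refine s2.trans ?_
      rw [log_zz]
      have := mul_le_mul_of_nonneg_right h2' (by linarith : 0 ≤ log 2)
      linarith)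
  have q1 : lam k ^ (8 * r) < p := (Nat.floor_lt (lam_pow_pos k _).le).1 p1
  have q2 : (p:ℝ) ≤ lam k ^ (8 * r + 2 ^ 32) := (Nat.le_floor_iff (lam_pow_pos k _).le).1 p2
  have ee : ∀ j : ℕ, lam k ^ j = exp (j * ell k) := fun j => by
    rw [mul_comm, exp_mul, ell, exp_log (by linarith [one_lt_lam k]), rpow_natCast]
  have eK : (2:ℝ) ^ K = exp (K * log 2) := by
    rw [mul_comm, exp_mul, exp_log (by norm_num), rpow_natCast]
  refine ⟨p, hp, ?_, ?_⟩
  · have : (2:ℝ) ^ K < p := by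
      refine lt_of_le_of_lt ?_ q1
      rw [eK, ee]
      exact exp_le_exp.2 s1
    exact_mod_cast this
  · refine q2.trans ?_
    rw [ee, eK]
    have u0 : 0 ≤ 2 ^ 35 / (zz k : ℝ) := by positivity
    have u1 : 2 ^ 35 / (zz k : ℝ) ≤ 1 := by
      rw [div_le_one hz]; linarith
    have st : ((8 * r + 2 ^ 32 : ℕ):ℝ) * ell k ≤ K * log 2 + 2 ^ 35 / zz k := by
      rw [Nat.cast_add, add_mul, Nat.cast_pow, Nat.cast_ofNat]
      have : 2 ^ 35 * ell k ≤ 2 ^ 35 / zz k := by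
        rw [div_eq_mul_one_div]; gcongr; exact hl.2
      linarith
    refine (exp_le_exp.2 st).trans ?_
    rw [exp_add]
    refine mul_le_mul_of_nonneg_left ?_ (exp_pos _).le
    have := abs_exp_sub_one_le (x := 2 ^ 35 / (zz k : ℝ)) (by rwa [abs_of_nonneg u0])
    rw [abs_of_nonneg u0] at this
    have t := (abs_le.1 this).2
    have e : (2:ℝ) ^ 36 / zz k = 2 * (2 ^ 35 / zz k) := by ring
    linarith

end SepPow

/-! ### Integers with one divisor in each dyadic interval -/

namespace SepPow
open Finset Real

/-- **Proth's theorem.** Modulo the least prime factor `q` of `N`, the element `b^h` has order `2^s`, so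
`q > 2^s`, which is too large for composite `N`. -/
lemma proth (h s b N : ℕ) (hN : N = h * 2 ^ s + 1) (hs : 1 ≤ s) (hh : h < 2 ^ s) (hh0 : 0 < h)
    (hb : (b : ZMod N) ^ ((N - 1) / 2) = -1) : N.Prime := by
  have hsplit : 2 ^ s = 2 * 2 ^ (s - 1) := by rw [← pow_succ', Nat.sub_add_cancel hs]
  have hN1 : (N - 1) / 2 = h * 2 ^ (s - 1) := by
    rw [hN, Nat.add_sub_cancel, hsplit, ← mul_assoc, mul_comm h 2, mul_assoc,
      Nat.mul_div_cancel_left _ two_pos]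
  have hpos : 0 < h * 2 ^ s := by positivity
  by_contra hnp
  have hN2 : 2 ≤ N := by omega
  set q := N.minFac with hq
  have hqp : q.Prime := Nat.minFac_prime (by omega)
  have hqN : q ∣ N := Nat.minFac_dvd N
  have hsq : q ^ 2 ≤ N := Nat.minFac_sq_le_self (by omega) hnp
  have := Fact.mk hqp
  have hq2 : q ≠ 2 := by
    intro h2
    rw [h2, hN, hsplit] at hqN
    have : 2 ∣ h * (2 * 2 ^ (s - 1)) := ⟨h * 2 ^ (s - 1), by ring⟩
    have := (Nat.dvd_add_right this).1 hqN
    omega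
  have : Fact (2 < q) := ⟨lt_of_le_of_ne hqp.two_le (Ne.symm hq2)⟩
  have e1 : (b : ZMod q) ^ ((N - 1) / 2) = -1 := by
    have h1 := congrArg (ZMod.castHom hqN (ZMod q)) hb
    rwa [map_pow, map_neg, map_one, map_natCast] at h1
  rw [hN1, pow_mul] at e1
  have hord : orderOf ((b : ZMod q) ^ h) = 2 ^ (s - 1 + 1) := by
    refine orderOf_eq_prime_pow ?_ ?_
    · rw [e1]; exact ZMod.neg_one_ne_one
    · rw [pow_succ, pow_mul, e1]; norm_num
  rw [Nat.sub_add_cancel hs] at hord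
  have hne : (b : ZMod q) ^ h ≠ 0 := by
    intro h0
    rw [h0, zero_pow (by positivity)] at e1
    exact neg_ne_zero.2 one_ne_zero e1.symm
  have hdvd := ZMod.orderOf_dvd_card_sub_one hne
  rw [hord] at hdvd
  have hle := Nat.le_of_dvd (by have := hqp.two_le; omega) hdvd
  have : 2 ^ s + 1 ≤ q := by have := hqp.two_le; omega
  nlinarith

lemma prime1 : Nat.Prime (2 ^ 128 + 75 * 2 ^ 65 + 1) := by
  have e : 2 ^ 128 + 75 * 2 ^ 65 + 1 = 340282366920938466230386218488200953857 := by norm_num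
  rw [e]
  refine proth (2 ^ 63 + 75) 65 3 _ (by norm_num) (by norm_num) (by norm_num) (by norm_num) ?_
  norm_num
  reduce_mod_char

set_option exponentiation.threshold 600 in
lemma prime2_eq : 2 ^ 512 + 138 * 2 ^ 257 + 1 =
    13407807929942597099574024998205846127479365820592393377723561443721764030105505593431373568103809019552429720753988566621470678486836863132617672786706433 := by
  norm_num

set_option exponentiation.threshold 600 in
lemma prime2 : Nat.Prime (2 ^ 512 + 138 * 2 ^ 257 + 1) := by
  rw [prime2_eq]
  refine proth (2 ^ 255 + 138) 257 3 _ (by norm_num) (by norm_num) (by norm_num) (by norm_num) ?_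
  norm_num
  reduce_mod_char

/-- `m` has exactly one divisor in each interval `[2^i, 2^(i+1))` with `i < K`, and no others; the
divisor lies below `2^(i+1) / ρ`, and strictly above `2^i` unless it is `1`. -/
structure Sep (m K : ℕ) (ρ : ℝ) : Prop where
  pos : 0 < m
  lt : ∀ d, d ∣ m → Nat.log 2 d < K
  slack : ∀ d, d ∣ m → (d:ℝ) * ρ < 2 ^ (Nat.log 2 d + 1)
  strict : ∀ d, d ∣ m → d ≠ 1 → 2 ^ Nat.log 2 d < d
  inj : ∀ d d', d ∣ m → d' ∣ m → Nat.log 2 d = Nat.log 2 d' → d = d'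
  surj : ∀ i, i < K → ∃ d, d ∣ m ∧ Nat.log 2 d = i

/-- The divisors of `2^K` are the endpoints of the dyadic intervals, so one divisor of `m` strictly inside each
interval `(2^i, 2^(i+1))`, `1 ≤ i < K`, gives an interlocking pair. -/
lemma Sep.interlocking {m K : ℕ} {ρ : ℝ} (S : Sep m K ρ) : Interlocking m (2 ^ K) := by
  refine ⟨S.pos, by positivity, ?_, ?_⟩
  · intro d d' hd hd' h1 hlt _
    obtain ⟨i, hi, rfl⟩ := (Nat.dvd_prime_pow Nat.prime_two).1 hd
    obtain ⟨j, hj, rfl⟩ := (Nat.dvd_prime_pow Nat.prime_two).1 hd'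
    have hij : i < j := (Nat.pow_lt_pow_iff_right (by norm_num)).1 hlt
    have hi0 : i ≠ 0 := by rintro rfl; simp at h1
    obtain ⟨e, he, hl⟩ := S.surj i (by omega)
    have hne : e ≠ 1 := by rintro rfl; simp at hl; omega
    refine ⟨e, he, ?_, ?_⟩
    · have := S.strict e he hne
      rwa [hl] at this
    · have := Nat.lt_pow_succ_log_self (b := 2) (by norm_num) e
      rw [hl] at this
      exact this.trans_le (Nat.pow_le_pow_right (by norm_num) hij)
  · intro d d' hd hd' h1 hlt _
    have hl : Nat.log 2 d < Nat.log 2 d' :=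
      lt_of_le_of_ne (Nat.log_mono_right hlt.le) fun h => hlt.ne (S.inj d d' hd hd' h)
    refine ⟨2 ^ Nat.log 2 d', pow_dvd_pow 2 (S.lt d' hd').le, ?_, S.strict d' hd' (by omega)⟩
    exact (Nat.lt_pow_succ_log_self (b := 2) (by norm_num) d).trans_le
      (Nat.pow_le_pow_right (by norm_num) hl)

/-- Multiplication by `p^e`, for a prime `p` slightly above `2^K`, shifts the pattern of the divisors of `m` by
`0, K, …, eK`, provided the accumulated factor `(p / 2^K)^e ≤ σ` fits into the slack `ρ`. -/
lemma Sep.extend {m K : ℕ} {ρ : ℝ} (S : Sep m K ρ) (p e : ℕ) (σ ρ' : ℝ) (hp : p.Prime)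
    (hpK : 2 ^ K < p) (hσ : (p:ℝ) ^ e ≤ 2 ^ (K * e) * σ) (h1 : 1 ≤ ρ') (h2 : ρ' * σ ≤ ρ) :
    Sep (m * p ^ e) (K * (e + 1)) ρ' := by
  have hpK' : (2:ℝ) ^ K < p := by exact_mod_cast hpK
  have hdiv : ∀ x, x ∣ m * p ^ e → ∃ d j, d ∣ m ∧ j ≤ e ∧ x = d * p ^ j := by
    intro x hx
    obtain ⟨d, y, hd, hy, rfl⟩ := (Nat.dvd_mul).1 hx
    obtain ⟨j, hj, rfl⟩ := (Nat.dvd_prime_pow hp).1 hy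
    exact ⟨d, j, hd, hj, rfl⟩
  have hpj : ∀ j, j ≤ e → (p:ℝ) ^ j ≤ 2 ^ (K * j) * σ := by
    intro j hj
    obtain ⟨i, rfl⟩ := Nat.exists_eq_add_of_le hj
    have hi : (0:ℝ) < 2 ^ (K * i) := by positivity
    refine le_of_mul_le_mul_right ?_ hi
    calc (p:ℝ) ^ j * 2 ^ (K * i) ≤ (p:ℝ) ^ j * (p:ℝ) ^ i := by
          rw [pow_mul]; gcongr
      _ = (p:ℝ) ^ (j + i) := by rw [pow_add]
      _ ≤ 2 ^ (K * (j + i)) * σ := hσ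
      _ = 2 ^ (K * j) * σ * 2 ^ (K * i) := by rw [mul_add, pow_add]; ring
  have hsl : ∀ d j, d ∣ m → j ≤ e → ((d * p ^ j : ℕ):ℝ) * ρ' < 2 ^ (Nat.log 2 d + K * j + 1) := by
    intro d j hd hj
    have a := S.slack d hd
    calc ((d * p ^ j : ℕ):ℝ) * ρ' = d * ((p:ℝ) ^ j * ρ') := by push_cast; ring
      _ ≤ d * (2 ^ (K * j) * σ * ρ') := by
          have := hpj j hj
          gcongr
      _ = 2 ^ (K * j) * (d * (ρ' * σ)) := by ring
      _ ≤ 2 ^ (K * j) * (d * ρ) := by gcongr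
      _ < 2 ^ (K * j) * 2 ^ (Nat.log 2 d + 1) := by gcongr
      _ = _ := by rw [← pow_add]; ring_nf
  have hdpos : ∀ d, d ∣ m → d ≠ 0 := fun d hd => (Nat.pos_of_dvd_of_pos hd S.pos).ne'
  have hlow : ∀ d j, d ∣ m → 2 ^ (Nat.log 2 d + K * j) ≤ d * p ^ j := by
    intro d j hd
    rw [pow_add, pow_mul]
    exact Nat.mul_le_mul (Nat.pow_log_le_self 2 (hdpos d hd)) (Nat.pow_le_pow_left hpK.le j)
  have hlog : ∀ d j, d ∣ m → j ≤ e → Nat.log 2 (d * p ^ j) = Nat.log 2 d + K * j := by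
    intro d j hd hj
    refine Nat.log_eq_of_pow_le_of_lt_pow (hlow d j hd) ?_
    have : ((d * p ^ j : ℕ):ℝ) < ((2 ^ (Nat.log 2 d + K * j + 1) : ℕ):ℝ) := by
      refine lt_of_le_of_lt ?_ ((hsl d j hd hj).trans_eq (by push_cast; rfl))
      exact le_mul_of_one_le_right (Nat.cast_nonneg _) h1
    exact_mod_cast this
  refine ⟨Nat.mul_pos S.pos (pow_pos hp.pos _), ?_, ?_, ?_, ?_, ?_⟩
  · intro x hx
    obtain ⟨d, j, hd, hj, rfl⟩ := hdiv x hx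
    rw [hlog d j hd hj]
    have := S.lt d hd
    nlinarith
  · intro x hx
    obtain ⟨d, j, hd, hj, rfl⟩ := hdiv x hx
    rw [hlog d j hd hj]
    exact hsl d j hd hj
  · intro x hx hne
    obtain ⟨d, j, hd, hj, rfl⟩ := hdiv x hx
    rw [hlog d j hd hj, pow_add, pow_mul]
    rcases Nat.eq_zero_or_pos j with rfl | hj0
    · have := S.strict d hd (by rintro rfl; simp at hne)
      simpa using this
    · exact Nat.mul_lt_mul_of_le_of_lt (Nat.pow_log_le_self 2 (hdpos d hd))
        (Nat.pow_lt_pow_left hpK hj0.ne') (Nat.pos_of_ne_zero (hdpos d hd))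
  · intro x y hx hy hxy
    obtain ⟨d, j, hd, hj, rfl⟩ := hdiv x hx
    obtain ⟨d', j', hd', hj', rfl⟩ := hdiv y hy
    rw [hlog d j hd hj, hlog d' j' hd' hj'] at hxy
    have b1 := S.lt d hd
    have b2 := S.lt d' hd'
    have ej : j = j' := by
      have c1 : (Nat.log 2 d + K * j) / K = j := by
        rw [Nat.add_mul_div_left _ _ (by omega), Nat.div_eq_of_lt b1, zero_add]
      have c2 : (Nat.log 2 d' + K * j') / K = j' := by
        rw [Nat.add_mul_div_left _ _ (by omega), Nat.div_eq_of_lt b2, zero_add]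
      rw [← c1, hxy, c2]
    subst ej
    rw [S.inj d d' hd hd' (by omega)]
  · intro i hi
    have hK : 0 < K := Nat.pos_of_ne_zero (by rintro rfl; simp at hi)
    obtain ⟨d, hd, hl⟩ := S.surj (i % K) (Nat.mod_lt _ hK)
    have hj : i / K ≤ e := Nat.lt_succ_iff.1 (Nat.div_lt_of_lt_mul hi)
    refine ⟨d * p ^ (i / K), Nat.mul_dvd_mul hd (pow_dvd_pow p hj), ?_⟩
    rw [hlog d _ hd hj, hl]
    exact Nat.mod_add_div i K

/-- The divisors `1, 3, 7, 11, 21, 33, 77, 231` lie in consecutive dyadic intervals. -/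
lemma sep231 : Sep 231 8 (1108 / 1000) := by
  have hd : ∀ d, d ∣ 231 → d = 1 ∨ d = 3 ∨ d = 7 ∨ d = 11 ∨ d = 21 ∨ d = 33 ∨ d = 77 ∨ d = 231 := by
    intro d h
    have : d ∈ Nat.divisors 231 := by rw [Nat.mem_divisors]; exact ⟨h, by norm_num⟩
    rw [show Nat.divisors 231 = {1, 3, 7, 11, 21, 33, 77, 231} by decide +kernel] at this
    simpa using this
  have l1 : Nat.log 2 1 = 0 := by norm_num
  have l3 : Nat.log 2 3 = 1 := by norm_num
  have l7 : Nat.log 2 7 = 2 := by norm_num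
  have l11 : Nat.log 2 11 = 3 := by norm_num
  have l21 : Nat.log 2 21 = 4 := by norm_num
  have l33 : Nat.log 2 33 = 5 := by norm_num
  have l77 : Nat.log 2 77 = 6 := by norm_num
  have l231 : Nat.log 2 231 = 7 := by norm_num
  refine ⟨by norm_num, ?_, ?_, ?_, ?_, ?_⟩
  · intro d h
    rcases hd d h with rfl | rfl | rfl | rfl | rfl | rfl | rfl | rfl <;> norm_num
  · intro d h
    rcases hd d h with rfl | rfl | rfl | rfl | rfl | rfl | rfl | rfl <;>
      simp only [l1, l3, l7, l11, l21, l33, l77, l231] <;> norm_num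
  · intro d h hne
    rcases hd d h with rfl | rfl | rfl | rfl | rfl | rfl | rfl | rfl <;>
      simp only [l1, l3, l7, l11, l21, l33, l77, l231] <;> omega
  · intro d d' h h' hl
    rcases hd d h with rfl | rfl | rfl | rfl | rfl | rfl | rfl | rfl <;>
    rcases hd d' h' with rfl | rfl | rfl | rfl | rfl | rfl | rfl | rfl <;>
      simp only [l1, l3, l7, l11, l21, l33, l77, l231] at hl <;> omega
  · intro i hi
    interval_cases i
    · exact ⟨1, by norm_num, l1⟩
    · exact ⟨3, by norm_num, l3⟩
    · exact ⟨7, by norm_num, l7⟩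
    · exact ⟨11, by norm_num, l11⟩
    · exact ⟨21, by norm_num, l21⟩
    · exact ⟨33, by norm_num, l33⟩
    · exact ⟨77, by norm_num, l77⟩
    · exact ⟨231, by norm_num, l231⟩

lemma pow_le_slack (K e p : ℕ) (δ : ℝ) (hδ : 0 ≤ δ) (hp : (p:ℝ) ≤ 2 ^ K * (1 + δ)) (h1 : δ * e ≤ 1) :
    (p:ℝ) ^ e ≤ 2 ^ (K * e) * (1 + 2 * (δ * e)) := by
  have a : (1 + δ) ^ e ≤ exp (δ * e) := by
    rw [mul_comm, exp_nat_mul]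
    have := add_one_le_exp δ
    gcongr
    linarith
  have hn : 0 ≤ δ * e := by positivity
  have b := (abs_le.1 (abs_exp_sub_one_le (x := δ * e) (by rwa [abs_of_nonneg hn]))).2
  rw [abs_of_nonneg hn] at b
  calc (p:ℝ) ^ e ≤ (2 ^ K * (1 + δ)) ^ e := by gcongr
    _ = 2 ^ (K * e) * (1 + δ) ^ e := by rw [mul_pow, pow_mul]
    _ ≤ _ := by gcongr; linarith

/-- The witness is `231 · 257^15 · p^3`, where `p` is the prime of `prime1`. -/
lemma sep512 : ∃ m, Sep m 512 (103 / 100) := by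
  have s1 := sep231.extend 257 15 (10604 / 10000) (104 / 100) (by norm_num) (by norm_num)
    (by norm_num) (by norm_num) (by norm_num)
  have s2 := s1.extend (2 ^ 128 + 75 * 2 ^ 65 + 1) 3 (1 + 2 * (1 / 2 ^ 50 * (3:ℕ))) (103 / 100) prime1
    (by norm_num) (pow_le_slack _ _ _ _ (by positivity) (by norm_num) (by norm_num))
    (by norm_num) (by norm_num)
  exact ⟨_, s2⟩

set_option exponentiation.threshold 600 in
lemma prime2_le : ((2 ^ 512 + 138 * 2 ^ 257 + 1 : ℕ) : ℝ) ≤ 2 ^ 512 * (1 + 1 / 2 ^ 240) := by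
  norm_num

set_option exponentiation.threshold 600 in
/-- The integer of `sep512` is multiplied by `p^(2^221 - 1)`, where `p` is the prime of `prime2`; note
`512 · 2^221 = 2^230`. -/
lemma sep_base : ∃ m, Sep m (2 ^ 230) (1 + 1 / 100) := by
  obtain ⟨m, s2⟩ := sep512
  obtain ⟨e, he⟩ : ∃ e, e + 1 = 2 ^ 221 := ⟨2 ^ 221 - 1, by norm_num⟩
  have he' : (e:ℝ) + 1 = 2 ^ 221 := by exact_mod_cast he
  have hp := prime2_le
  have hlt : 2 ^ 512 < 2 ^ 512 + 138 * 2 ^ 257 + 1 := by norm_num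
  have hpp := prime2
  generalize 2 ^ 512 + 138 * 2 ^ 257 + 1 = p at *
  have h1 := pow_le_slack 512 e p (1 / 2 ^ 240) (by positivity) hp (by linarith)
  have s3 := s2.extend p e (1 + 2 * (1 / 2 ^ 240 * e)) (1 + 1 / 100) hpp hlt h1
    (by norm_num) (by linarith)
  rw [he] at s3
  exact ⟨_, s3⟩

end SepPow

/-! ### The induction over the prime factors of `k'` -/

namespace SepPow
open Finset Real

/-- Every prime factor of `n` is at most the exponential of a smaller divisor. -/
def Cond (n : ℕ) : Prop :=
  0 < n ∧ ∀ q, q.Prime → q ∣ n → ∃ d, d ∣ n ∧ d < q ∧ (q:ℝ) ≤ exp d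

/-- For a prime factor `q`, the largest divisor below `q` is the required one. -/
lemma cond_of_SC (n : ℕ) (h : n ∈ SC 1) : Cond n := by
  obtain ⟨h0, h⟩ := h
  refine ⟨h0, fun q hq hqn => ?_⟩
  have hne : (n.divisors.filter (· < q)).Nonempty :=
    ⟨1, by rw [mem_filter, Nat.mem_divisors]; exact ⟨⟨one_dvd n, h0.ne'⟩, hq.one_lt⟩⟩
  set d := (n.divisors.filter (· < q)).max' hne with hd
  have hdm := max'_mem _ hne
  rw [← hd, mem_filter, Nat.mem_divisors] at hdm
  have hd1 : 1 ≤ d := Nat.pos_of_dvd_of_pos hdm.1.1 h0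
  refine ⟨d, hdm.1.1, hdm.2, ?_⟩
  have := h d q hdm.1.1 hqn hdm.2 (by
    rintro e he ⟨h1, h2⟩
    have := le_max' (n.divisors.filter (· < q)) e (by
      rw [mem_filter, Nat.mem_divisors]; exact ⟨⟨he, h0.ne'⟩, h2⟩)
    omega)
  rwa [max_eq_right (by exact_mod_cast hd1)] at this

/-- Removing the largest prime factor of `n` preserves `Cond`. -/
lemma cond_step (n : ℕ) (h : Cond n) (hn : 1 < n) :
    ∃ q n', q.Prime ∧ n = q * n' ∧ Cond n' ∧ (q:ℝ) ≤ exp n' := by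
  obtain ⟨h0, h⟩ := h
  have hne : n.primeFactors.Nonempty := Nat.nonempty_primeFactors.2 hn
  set q := n.primeFactors.max' hne with hq
  have hqm := max'_mem _ hne
  rw [← hq, Nat.mem_primeFactors] at hqm
  obtain ⟨hqp, ⟨n', hn'⟩, -⟩ := hqm
  have hn0 : 0 < n' := Nat.pos_of_ne_zero (by rintro rfl; simp at hn'; omega)
  have key : ∀ d, d ∣ n → d < q → d ∣ n' := by
    intro d hd hlt
    rw [hn'] at hd
    refine (Nat.Coprime.symm ?_).dvd_of_dvd_mul_left hd
    rw [Nat.Prime.coprime_iff_not_dvd hqp]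
    intro hqd
    have hd0 : 0 < d := Nat.pos_of_dvd_of_pos hd (by rw [← hn']; exact h0)
    exact absurd (Nat.le_of_dvd hd0 hqd) (not_le.2 hlt)
  refine ⟨q, n', hqp, hn', ⟨hn0, ?_⟩, ?_⟩
  · intro r hr hrn
    have hrn' : r ∣ n := hrn.trans ⟨q, by rw [hn', mul_comm]⟩
    obtain ⟨d, hd, hlt, he⟩ := h r hr hrn'
    have hrq : r ≤ q := le_max' _ _ (by rw [Nat.mem_primeFactors]; exact ⟨hr, hrn', h0.ne'⟩)
    exact ⟨d, key d hd (by omega), hlt, he⟩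
  · obtain ⟨d, hd, hlt, he⟩ := h q hqp ⟨n', hn'⟩
    refine he.trans (exp_le_exp.2 ?_)
    exact_mod_cast Nat.le_of_dvd hn0 (key d hd hlt)

/-- The prime near `2^K`, for `K = 2^230 n'`, is so close to `2^K` that its `q`-th power, `q ≤ e^n'`,
costs little. -/
lemma delta_bound (n' k q : ℕ) (hn : 0 < n') (hk : 2 ^ 29 * n' ≤ 2 ^ k) (hq : (q:ℝ) ≤ exp n') :
    2 ^ 36 / (zz k : ℝ) * q ≤ 1 / (2000 * n') := by
  have hz : (2:ℝ) ^ (50 * n') ≤ zz k := by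
    have : 2 ^ (50 * n') ≤ zz k := Nat.pow_le_pow_right (by norm_num) (by omega)
    exact_mod_cast this
  have hq4 : (q:ℝ) ≤ 2 ^ (2 * n') := by
    refine hq.trans ?_
    have e : exp (n':ℝ) = exp 1 ^ n' := by rw [← exp_nat_mul, mul_one]
    rw [e, pow_mul]
    have := exp_one_lt_d9
    gcongr
    linarith
  have hn2 : (n':ℝ) ≤ 2 ^ n' := by exact_mod_cast Nat.lt_two_pow_self.le
  have hn1 : (0:ℝ) < n' := by exact_mod_cast hn
  have hz0 : (0:ℝ) < zz k := zz_pos' k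
  rw [div_mul_eq_mul_div, div_le_div_iff₀ hz0 (by positivity), one_mul]
  refine le_trans ?_ hz
  calc (2:ℝ) ^ 36 * q * (2000 * n') ≤ 2 ^ 36 * 2 ^ (2 * n') * (2 ^ 11 * 2 ^ n') := by
        gcongr; norm_num
    _ = 2 ^ (36 + 2 * n' + (11 + n')) := by rw [pow_add, pow_add, pow_add]
    _ ≤ 2 ^ (50 * n') := pow_le_pow_right₀ one_le_two (by omega)

lemma slack_arith (n q : ℝ) (hn : 1 ≤ n) (hq : 2 ≤ q) :
    (1 + 1 / (100 * (q * n))) * (1 + 1 / (1000 * n)) ≤ 1 + 1 / (100 * n) := by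
  have h1 : 1 / (100 * (q * n)) ≤ 1 / (200 * n) := one_div_le_one_div_of_le (by positivity) (by nlinarith)
  have e1 : 1 / (200 * n) = (1 / n) / 200 := by field_simp
  have e2 : 1 / (1000 * n) = (1 / n) / 1000 := by field_simp
  have e3 : 1 / (100 * n) = (1 / n) / 100 := by field_simp
  have hx0 : 0 < 1 / n := by positivity
  have hx1 : 1 / n ≤ 1 := by rw [div_le_one (by linarith)]; exact hn
  rw [e1] at h1
  rw [e2, e3]
  generalize 1 / n = x at *
  have : (1 + 1 / (100 * (q * n))) * (1 + x / 1000) ≤ (1 + x / 200) * (1 + x / 1000) := by gcongr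
  nlinarith

/-- Induction on `n`, removing the largest prime factor `q`: the integer for `n / q` is multiplied by `p^(q-1)`,
where `p` is a prime just above `2^(2^230 n/q)`. -/
lemma sep_exists (n : ℕ) : Cond n → ∃ m, Sep m (2 ^ 230 * n) (1 + 1 / (100 * n)) := by
  induction n using Nat.strong_induction_on with
  | _ n ih =>
    intro hc
    rcases Nat.lt_or_ge 1 n with hn | hn
    · obtain ⟨q, n', hq, hnq, hc', hqe⟩ := cond_step n hc hn
      have hn0 := hc'.1
      have hq2 := hq.two_le
      obtain ⟨m, S⟩ := ih n' (by rw [hnq]; nlinarith) hc'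
      have hK0 : 2 ^ 230 * n' ≠ 0 := by positivity
      have hlog : 230 ≤ Nat.log 2 (2 ^ 230 * n') :=
        Nat.le_log_of_pow_le (by norm_num) (Nat.le_mul_of_pos_right _ hn0)
      -- `k` is the scale at which `exists_prime_near` applies to `K = 2^230 n'`
      obtain ⟨k, hk⟩ := Nat.exists_eq_add_of_le (show 200 ≤ Nat.log 2 (2 ^ 230 * n') by omega)
      have k1 : 2 ^ (200 + k) ≤ 2 ^ 230 * n' := by rw [← hk]; exact Nat.pow_log_le_self 2 hK0
      have k2 : 2 ^ 230 * n' < 2 ^ (201 + k) := by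
        rw [show 201 + k = Nat.log 2 (2 ^ 230 * n') + 1 by omega]
        exact Nat.lt_pow_succ_log_self (by norm_num) _
      obtain ⟨p, hp, p1, p2⟩ := exists_prime_near k _ (by omega) k1 k2
      have hkn : 2 ^ 29 * n' ≤ 2 ^ k := by
        have : 2 ^ 201 * (2 ^ 29 * n') < 2 ^ 201 * 2 ^ k := by
          rw [← pow_add, ← mul_assoc, ← pow_add]; exact k2
        exact (Nat.lt_of_mul_lt_mul_left this).le
      have hn1 : (1:ℝ) ≤ n' := by exact_mod_cast hn0
      have hz := zz_pos' k
      have hdb := delta_bound n' k q hn0 hkn hqe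
      obtain ⟨e, rfl⟩ : ∃ e, q = e + 1 := ⟨q - 1, by omega⟩
      have hde : 2 ^ 36 / (zz k : ℝ) * e ≤ 1 / (2000 * n') := by
        refine le_trans ?_ hdb
        push_cast
        gcongr
        linarith
      have h2000 : 1 / (2000 * (n':ℝ)) ≤ 1 := by
        rw [div_le_one (by positivity)]; linarith
      have hs := pow_le_slack _ e p _ (by positivity) p2 (hde.trans h2000)
      have S' := S.extend p e (1 + 1 / (1000 * n')) (1 + 1 / (100 * ((e + 1 : ℕ) * n'))) hp p1
        (by
          refine hs.trans ?_
          have : 1 / (1000 * (n':ℝ)) = 2 * (1 / (2000 * n')) := by field_simp; norm_num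
          rw [this]
          gcongr)
        (by
          have : (0:ℝ) ≤ 1 / (100 * ((e + 1 : ℕ) * n')) := by positivity
          linarith)
        (slack_arith n' _ hn1 (by exact_mod_cast hq2))
      refine ⟨m * p ^ e, ?_⟩
      rw [hnq, Nat.cast_mul, show 2 ^ 230 * ((e + 1) * n') = 2 ^ 230 * n' * (e + 1) by ring]
      exact S'
    · have : n = 1 := by have := hc.1; omega
      subst this
      simpa using sep_base

end SepPow

/-- There exist `C > 0` and a positive integer `t` such that `2^k` is separable
for every `k = 2^t · k'` with `k' ∈ S_C`. -/
theorem two_pow_separable_of_mem_SC :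
    ∃ C : ℝ, 0 < C ∧ ∃ t : ℕ, 0 < t ∧
      ∀ k k' : ℕ, k' ∈ SC C → k = 2 ^ t * k' → Separable (2 ^ k) := by
  refine ⟨1, one_pos, 230, by norm_num, ?_⟩
  rintro k k' hk' rfl
  obtain ⟨m, S⟩ := SepPow.sep_exists k' (SepPow.cond_of_SC k' hk')
  exact ⟨m, S.interlocking⟩
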